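/- Let (V, 𝒮) be a simplicial fan supported on ℝⁿ_{≥0} (encoding a geometric triangulation of the (n−1)-dimensional simplex). Let E ∈ 𝒮 and let F ∈ lk(E) be a face that admits a full partition F = F₁ ⊔ F₂ ⊔ 𝒜_F. If the coefficient of t^{|F₁| + |𝒜_F|} in the local h-polynomial ℓ(𝒮, E; t) is zero, then F is a U-pyramid. (Theorem 4.1 of the paper.) -/

import Mathlib

open scoped Classical

noncomputable section

/-- The conical hull (set of nonnegative linear combinations) of a finite set of
vectors in `ℝⁿ`. -/
def coneOf {n : ℕ} (F : Finset (Fin n → ℝ)) : Set (Fin n → ℝ) :=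
  {x | ∃ lam : (Fin n → ℝ) → ℝ, (∀ v ∈ F, 0 ≤ lam v) ∧ x = ∑ v ∈ F, lam v • v}

/-- A simplicial fan supported on `ℝⁿ_{≥0}`, encoding a geometric triangulation of
the `(n-1)`-dimensional simplex: a finite vertex set `V ⊆ ℝⁿ_{≥0} ∖ {0}` together
with a downward-closed collection of linearly independent finite subsets of `V`
(the faces, including `∅`) whose cones cover the nonnegative orthant and intersect
along common faces. -/
structure SimplicialFan (n : ℕ) where
  verts : Finset (Fin n → ℝ)
  faces : Finset (Finset (Fin n → ℝ))
  verts_nonneg : ∀ v ∈ verts, ∀ i, 0 ≤ v i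
  verts_ne_zero : ∀ v ∈ verts, v ≠ 0
  faces_subset_verts : ∀ F ∈ faces, F ⊆ verts
  empty_mem : ∅ ∈ faces
  indep : ∀ F ∈ faces, LinearIndependent ℝ (fun v : {x // x ∈ F} => (v : Fin n → ℝ))
  down_closed : ∀ F ∈ faces, ∀ F' ⊆ F, F' ∈ faces
  covers : (⋃ F ∈ faces, coneOf F) = {x : Fin n → ℝ | ∀ i, 0 ≤ x i}
  inter_cone : ∀ F ∈ faces, ∀ F' ∈ faces, coneOf F ∩ coneOf F' = coneOf (F ∩ F')

/-- `σ(F)`: the set of coordinates `ℓ` such that some `v ∈ F` has `v_ℓ ≠ 0`. -/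
def suppSet {n : ℕ} (F : Finset (Fin n → ℝ)) : Finset (Fin n) :=
  Finset.univ.filter fun ℓ => ∃ v ∈ F, v ℓ ≠ 0

/-- A face is interior if its support is all of `{1,…,n}`. -/
def IsInteriorFace {n : ℕ} (F : Finset (Fin n → ℝ)) : Prop :=
  suppSet F = Finset.univ

/-- The excess `e(F) = |σ(F)| − |F|`. -/
def excess {n : ℕ} (F : Finset (Fin n → ℝ)) : ℕ :=
  (suppSet F).card - F.card

/-- The link of a face `E`: faces `F` with `F ∩ E = ∅` and `F ∪ E ∈ 𝒮`. -/
def link {n : ℕ} (S : SimplicialFan n) (E : Finset (Fin n → ℝ)) :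
    Finset (Finset (Fin n → ℝ)) :=
  S.faces.filter fun F => F ∩ E = ∅ ∧ F ∪ E ∈ S.faces

/-- `F ∈ lk(E)` is a pyramid with apex `A ∈ F` if `F ∪ E` is interior but
`(F ∪ E) ∖ {A}` is not. -/
def IsPyramidApex {n : ℕ} (E F : Finset (Fin n → ℝ)) (A : Fin n → ℝ) : Prop :=
  A ∈ F ∧ IsInteriorFace (F ∪ E) ∧ ¬ IsInteriorFace ((F ∪ E).erase A)

/-- `𝒜_F`: the set of apices of `F` (relative to `E`). -/
def apices {n : ℕ} (E F : Finset (Fin n → ℝ)) : Finset (Fin n → ℝ) :=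
  F.filter fun A => IsPyramidApex E F A

/-- `V_A = {1,…,n} ∖ σ((F ∪ E) ∖ {A})`. -/
def baseDirs {n : ℕ} (E F : Finset (Fin n → ℝ)) (A : Fin n → ℝ) : Finset (Fin n) :=
  Finset.univ \ suppSet ((F ∪ E).erase A)

/-- `F` is a U-pyramid if `|V_A| = 1` for some apex `A` of `F`. -/
def IsUPyramid {n : ℕ} (E F : Finset (Fin n → ℝ)) : Prop :=
  ∃ A ∈ apices E F, (baseDirs E F A).card = 1

/-- A full partition of `F ∈ lk(E)`: a decomposition `F = F₁ ⊔ F₂ ⊔ 𝒜_F` with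
`F₁ ∪ 𝒜_F ∪ E` interior and `σ(F₂ ∪ E) = {1,…,n} ∖ ⋃_{A ∈ 𝒜_F} V_A`. -/
def IsFullPartition {n : ℕ} (E F F₁ F₂ : Finset (Fin n → ℝ)) : Prop :=
  F = F₁ ∪ F₂ ∪ apices E F ∧
  Disjoint F₁ F₂ ∧ Disjoint F₁ (apices E F) ∧ Disjoint F₂ (apices E F) ∧
  IsInteriorFace (F₁ ∪ apices E F ∪ E) ∧
  suppSet (F₂ ∪ E) = Finset.univ \ (apices E F).biUnion (baseDirs E F)

/-- The local `h`-polynomial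
`ℓ(𝒮, E; t) = Σ_{F ∈ 𝒮, E ⊆ F} (−1)^{n−|F|} t^{(n−|E|)−e(F)} (t−1)^{e(F)}`. -/
def localH {n : ℕ} (S : SimplicialFan n) (E : Finset (Fin n → ℝ)) : Polynomial ℤ :=
  ∑ F ∈ S.faces.filter (fun F => E ⊆ F),
    Polynomial.C ((-1 : ℤ) ^ (n - F.card)) *
      Polynomial.X ^ ((n - E.card) - excess F) * (Polynomial.X - 1) ^ (excess F)

/-!
Let `K` be the field of rational functions over `𝔽₂` in variables `x_{v,i}`, one for each vertex
`v` and each `i ∈ σ(v)`, and let `θ_i = ∑_v x_{v,i} X_v`. In the face ring of the star of `E`,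
consider the ideal spanned by the monomials whose support has an interior union with `E`, modulo
the products of `θ_i` with the monomials whose union with `E` has support containing all directions
except possibly `i`. This quotient, the local face module, is graded.

* For a compact convex set, the complex of the cells that it hits is acyclic if this holds at each
  of its points, by bisection and Mayer–Vietoris. A generic hyperplane cuts a sphere into two convex
  pieces and a smaller sphere, so by descending induction on faces the links are homology spheres,
  and the stars are acyclic relative to each face of the orthant.
* By this acyclicity, the face rings in question are resolved by coordinate rings of their cells.
  This bounds their projective dimension over `K[θ_i : i ∈ W]` and makes them projective, so that
  the `θ_i`, `i ∈ W`, form a regular sequence in any order.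
* By regularity, inclusion–exclusion computes the Hilbert series of the local face module, and it is
  the local `h`-polynomial. So it suffices to show that the monomial of `F₁ ∪ 𝒜_F` is not a
  relation.
* If it were, then it would also be a relation for the star of `F₂ ∪ E`, and, by regularity of the
  deletions of the vertices of `F₁`, the monomial of `𝒜_F` would be one for the star of
  `F₁ ∪ F₂ ∪ E`. If `F` is not a U-pyramid, removing one apex frees two directions, so no relation
  of this star involves the monomial of `𝒜_F`.
-/

universe u

/-! ### Projective dimension of modules -/

open CategoryTheory in
/-- The `R`-module `M` has projective dimension less than `n`: Mathlib's notion for objects of an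
abelian category, applied to the module category. -/
def ProjDimLT (R M : Type u) [CommRing R] [AddCommGroup M] [Module R M] (n : ℕ) : Prop :=
  HasProjectiveDimensionLT (ModuleCat.of R M) n

namespace ProjDimLT

open CategoryTheory

variable {R M N L : Type u} [CommRing R] [AddCommGroup M] [AddCommGroup N] [AddCommGroup L]
  [Module R M] [Module R N] [Module R L] {n : ℕ}

theorem shortExact_of_exact {f : M →ₗ[R] N} {g : N →ₗ[R] L} (hf : Function.Injective f)
    (hg : Function.Surjective g) (hfg : Function.Exact f g) :
    (ShortComplex.mk (ModuleCat.ofHom f) (ModuleCat.ofHom g)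
      (by rw [← ModuleCat.ofHom_comp, hfg.linearMap_comp_eq_zero]; rfl)).ShortExact where
  exact := (ShortComplex.ShortExact.moduleCat_exact_iff_function_exact _).2 hfg
  mono_f := (ModuleCat.mono_iff_injective _).2 hf
  epi_g := (ModuleCat.epi_iff_surjective _).2 hg

theorem of_exact_left {f : M →ₗ[R] N} {g : N →ₗ[R] L} (hf : Function.Injective f)
    (hg : Function.Surjective g) (hfg : Function.Exact f g)
    (hN : ProjDimLT R N n) (hL : ProjDimLT R L (n + 1)) : ProjDimLT R M n :=
  (shortExact_of_exact hf hg hfg).hasProjectiveDimensionLT_X₁ n hN hL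

theorem of_exact_middle {f : M →ₗ[R] N} {g : N →ₗ[R] L} (hf : Function.Injective f)
    (hg : Function.Surjective g) (hfg : Function.Exact f g)
    (hM : ProjDimLT R M n) (hL : ProjDimLT R L n) : ProjDimLT R N n :=
  (shortExact_of_exact hf hg hfg).hasProjectiveDimensionLT_X₂ n hM hL

theorem of_exact_right {f : M →ₗ[R] N} {g : N →ₗ[R] L} (hf : Function.Injective f)
    (hg : Function.Surjective g) (hfg : Function.Exact f g)
    (hM : ProjDimLT R M n) (hN : ProjDimLT R N (n + 1)) : ProjDimLT R L (n + 1) :=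
  (shortExact_of_exact hf hg hfg).hasProjectiveDimensionLT_X₃ n hM hN

theorem mono {m : ℕ} (h : ProjDimLT R M n) (hnm : n ≤ m) : ProjDimLT R M m :=
  have : HasProjectiveDimensionLT (ModuleCat.of R M) n := h
  hasProjectiveDimensionLT_of_ge _ n m hnm

theorem of_equiv (e : M ≃ₗ[R] N) (h : ProjDimLT R M n) : ProjDimLT R N n :=
  have : HasProjectiveDimensionLT (ModuleCat.of R M) n := h
  hasProjectiveDimensionLT_of_iso e.toModuleIso n

theorem one_iff : ProjDimLT R M 1 ↔ Module.Projective R M := by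
  unfold ProjDimLT
  rw [← projective_iff_hasProjectiveDimensionLT_one, ← IsProjective.iff_projective]

theorem of_subsingleton [Subsingleton M] : ProjDimLT R M n :=
  mono (n := 0) (ModuleCat.isZero_of_subsingleton (ModuleCat.of R M)).hasProjectiveDimensionLT_zero
    n.zero_le

theorem pi {X : Type u} [Finite X] (M : X → Type u) [∀ x, AddCommGroup (M x)]
    [∀ x, Module R (M x)] (h : ∀ x, ProjDimLT R (M x) n) : ProjDimLT R (∀ x, M x) n := by
  induction X using Finite.induction_empty_option with
  | of_equiv e ih => exact of_equiv (LinearEquiv.piCongrLeft R M e) (ih _ fun x => h (e x))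
  | h_empty => exact of_subsingleton
  | h_option ih =>
    refine of_exact_middle (f := LinearMap.single R M none)
      (g := LinearMap.pi fun x => LinearMap.proj (some x)) (Pi.single_injective _)
      (fun y => ⟨fun o => o.rec 0 y, rfl⟩) (fun y => ⟨fun hy => ⟨y none, ?_⟩, ?_⟩) (h none)
      (ih _ fun x => h (some x))
    · funext x
      cases x with
      | none => simp
      | some x => simpa using (congrFun hy x).symm
    · rintro ⟨y, rfl⟩
      ext x
      simp

theorem quotient_pi {A X : Type u} [Finite X] [AddCommGroup A] [Module R A] (s : Set X)
    (I : X → Submodule R A) (h : ∀ x ∈ s, ProjDimLT R (A ⧸ I x) n) :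
    ProjDimLT R ((X → A) ⧸ Submodule.pi s I) n := by
  let f : (X → A) →ₗ[R] ∀ x : s, A ⧸ I x := LinearMap.pi fun x => (I x).mkQ ∘ₗ LinearMap.proj x.1
  have hker : LinearMap.ker f = Submodule.pi s I := by
    ext; simp [f, funext_iff]
  have hf : Function.Surjective f := fun y => by
    choose z hz using fun x => (I (x : s).1).mkQ_surjective (y x)
    refine ⟨fun x => if hx : x ∈ s then z ⟨x, hx⟩ else 0, ?_⟩
    ext x
    simp [f, ← hz]
  rw [← hker]
  exact of_equiv (f.quotKerEquivOfSurjective hf).symm (pi _ fun x => h x.1 x.2)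

/-- Dimension shifting along a resolution: the `j`-th kernel of an exact sequence
`⋯ → D 2 → D 1 → D 0 = 0`. -/
theorem ker_of_exact (D : ℕ → Type u) [∀ j, AddCommGroup (D j)] [∀ j, Module R (D j)]
    (d : ∀ j, D (j + 1) →ₗ[R] D j) [Subsingleton (D 0)] {c : ℕ}
    (hD : ∀ j ≤ c, ProjDimLT R (D (j + 1)) (c - j + 1))
    (hd : ∀ j < c, Function.Exact (d (j + 1)) (d j)) (j : ℕ) (hj : j ≤ c) :
    ProjDimLT R (LinearMap.ker (d j)) (c - j + 1) := by
  induction j with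
  | zero =>
    rw [Subsingleton.elim (d 0) 0, LinearMap.ker_zero]
    exact of_equiv Submodule.topEquiv.symm (hD 0 hj)
  | succ j ih =>
    refine of_exact_left (f := (LinearMap.ker (d (j + 1))).subtype)
      (g := (d (j + 1)).rangeRestrict) Subtype.val_injective (LinearMap.surjective_rangeRestrict _)
      (LinearMap.exact_iff.2 ?_) (hD _ hj) ?_
    · rw [LinearMap.ker_rangeRestrict, Submodule.range_subtype]
    · rw [← (hd j hj).linearMap_ker_eq]
      exact (ih (by omega)).mono (by omega)

end ProjDimLT

/-- A flat module preserves the regularity of `r` modulo an ideal `I`. -/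
theorem mem_smul_top_of_smul_mem {R M : Type*} [CommRing R] [AddCommGroup M] [Module R M]
    [Module.Flat R M] {I : Ideal R} {r : R} (hr : ∀ p, r * p ∈ I → p ∈ I) {m : M}
    (h : r • m ∈ I • (⊤ : Submodule R M)) : m ∈ I • (⊤ : Submodule R M) := by
  have hreg : IsSMulRegular (R ⧸ I) r :=
    (isSMulRegular_quotient_iff_mem_of_smul_mem I r).2 fun p hp => hr p hp
  have hM : IsSMulRegular (M ⧸ I • (⊤ : Submodule R M)) r :=
    ((TensorProduct.quotTensorEquivQuotSMul M I).isSMulRegular_congr r).1 (hreg.rTensor M)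
  exact mem_of_isSMulRegular_quotient_of_smul_mem hM h

theorem mem_span_X_image_of_X_mul_mem {ι k : Type*} [CommSemiring k] {B : Set ι} {i : ι}
    (hi : i ∉ B) {p : MvPolynomial ι k}
    (hp : MvPolynomial.X i * p ∈ Ideal.span (MvPolynomial.X '' B)) :
    p ∈ Ideal.span (MvPolynomial.X '' B) := by
  rw [MvPolynomial.mem_ideal_span_X_image] at hp ⊢
  intro m hm
  obtain ⟨j, hj, hmj⟩ := hp (Finsupp.single i 1 + m) (by
    rwa [MvPolynomial.mem_support_iff, MvPolynomial.coeff_X_mul, ← MvPolynomial.mem_support_iff])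
  have hij : i ≠ j := fun hij => hi (hij ▸ hj)
  exact ⟨j, hj, by simpa [Finsupp.single_apply, hij] using hmj⟩

/-! ### Complexes of Stanley–Reisner quotients -/

/-- The ideal of the polynomials all of whose monomials have their support in the up-closed
family `Q`. -/
def supportIdeal {V : Type*} (k : Type*) [CommSemiring k] (Q : Finset V → Prop) (hQ : Monotone Q) :
    Ideal (MvPolynomial V k) :=
  MvPolynomial.restrictSupportIdeal k {m | Q m.support} fun _ _ hmn =>
    hQ (Finsupp.support_mono hmn)

theorem mem_supportIdeal {V k : Type*} [CommSemiring k] {Q : Finset V → Prop} {hQ : Monotone Q}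
    {p : MvPolynomial V k} : p ∈ supportIdeal k Q hQ ↔ ∀ m, p.coeff m ≠ 0 → Q m.support := by
  simp only [← MvPolynomial.mem_support_iff]
  rfl

/-- Exactness, at the indices in `U`, of an endomorphism `d` of a space of functions. -/
def AcyclicOn {X k : Type*} [CommSemiring k] (d : (X → k) →ₗ[k] (X → k)) (U : Set X) : Prop :=
  ∀ c, (∀ x ∈ U, d c x = 0) → ∃ b, ∀ x ∈ U, c x = d b x

/-- A graded complex of free `k`-modules with basis `cells` and boundary matrix `bd`, together
with an up-closed family `vanish x` of supports for every cell `x`. It stands for the complex with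
terms `⨁ k[V] / supportIdeal (vanish x)`, the sum being over the cells of a given degree. -/
structure SupportedComplex (V X k : Type*) [Fintype X] [CommRing k] where
  cells : Set X
  deg : X → ℕ
  bd : Matrix X X k
  vanish : X → Finset V → Prop
  monotone_vanish : ∀ x, Monotone (vanish x)
  mem_cells_of_bd : ∀ {x y}, bd x y ≠ 0 → y ∈ cells
  deg_of_bd : ∀ {x y}, bd x y ≠ 0 → deg y = deg x + 1
  vanish_of_bd : ∀ {x y}, bd x y ≠ 0 → vanish y ≤ vanish x
  bd_mul_bd : bd * bd = 0

open scoped Matrix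

namespace SupportedComplex

section

variable {V X k : Type*} [Fintype X] [CommRing k] (K : SupportedComplex V X k)

/-- The ideal attached to a cell. -/
def ideal (x : X) : Ideal (MvPolynomial V k) :=
  supportIdeal k (K.vanish x) (K.monotone_vanish x)

/-- The cells on which a monomial with support `G` does not vanish. -/
def active (G : Finset V) : Set X := {x | x ∈ K.cells ∧ ¬ K.vanish x G}

variable (P : Type*) [CommRing P] [Algebra P (MvPolynomial V k)]

/-- The boundary map on families of polynomials. -/
def boundary : (X → MvPolynomial V k) →ₗ[P] (X → MvPolynomial V k) :=
  (K.bd.map MvPolynomial.C).mulVecLin.restrictScalars P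

/-- The families whose entries at the cells of degree `j - 1` vanish there. -/
def relations (j : ℕ) : Submodule P (X → MvPolynomial V k) :=
  Submodule.pi {x | x ∈ K.cells ∧ K.deg x + 1 = j} fun x => (K.ideal x).restrictScalars P

variable {P}

theorem coeff_boundary (f : X → MvPolynomial V k) (x : X) (m : V →₀ ℕ) :
    (K.boundary P f x).coeff m = (K.bd *ᵥ fun y => (f y).coeff m) x := by
  simp [boundary, Matrix.mulVec, dotProduct, MvPolynomial.coeff_sum]

theorem mem_relations {j : ℕ} {f : X → MvPolynomial V k} :
    f ∈ K.relations P j ↔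
      ∀ x m, x ∈ K.active m.support → K.deg x + 1 = j → (f x).coeff m = 0 := by
  simp only [relations, Submodule.mem_pi, Submodule.restrictScalars_mem, ideal, mem_supportIdeal,
    active]
  exact ⟨fun h x m hx hj => by_contra fun hm => hx.2 (h x ⟨hx.1, hj⟩ m hm),
    fun h x hx m hm => by_contra fun hv => hm (h x m ⟨hx.1, hv⟩ hx.2)⟩

theorem bd_mulVec_congr {c c' : X → k} {x : X} {m : Finset V} (hx : x ∈ K.active m)
    (h : ∀ y ∈ K.active m, K.deg y = K.deg x + 1 → c y = c' y) :
    (K.bd *ᵥ c) x = (K.bd *ᵥ c') x := by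
  refine Finset.sum_congr rfl fun y _ => ?_
  by_cases hxy : K.bd x y = 0
  · simp [hxy]
  · rw [h y ⟨K.mem_cells_of_bd hxy, fun hy => hx.2 (K.vanish_of_bd hxy _ hy)⟩ (K.deg_of_bd hxy)]

theorem relations_le_comap (j : ℕ) :
    K.relations P (j + 1) ≤ (K.relations P j).comap (K.boundary P) := by
  intro f hf
  rw [Submodule.mem_comap, mem_relations]
  rintro x m hx rfl
  rw [coeff_boundary, K.bd_mulVec_congr (c' := 0) hx, Matrix.mulVec_zero, Pi.zero_apply]
  exact fun y hy hyx => K.mem_relations.1 hf y m hy (by rw [hyx])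

theorem boundary_boundary (f : X → MvPolynomial V k) : K.boundary P (K.boundary P f) = 0 := by
  ext x m
  simp only [coeff_boundary]
  rw [Matrix.mulVec_mulVec, K.bd_mul_bd]
  simp

/-- The monomials of `f` are lifted one at a time. -/
theorem exists_sub_boundary_mem (hK : ∀ G, AcyclicOn K.bd.mulVecLin (K.active G)) {j : ℕ}
    {f : X → MvPolynomial V k} (hf : K.boundary P f ∈ K.relations P j) :
    ∃ h, f - K.boundary P h ∈ K.relations P (j + 1) := by
  let c (m : V →₀ ℕ) (x : X) : k := if K.deg x = j then (f x).coeff m else 0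
  have hc (m : V →₀ ℕ) : ∀ x ∈ K.active m.support, (K.bd *ᵥ c m) x = 0 := by
    intro x hx
    by_cases hj : K.deg x + 1 = j
    · rw [← K.mem_relations.1 hf x m hx hj, coeff_boundary]
      exact K.bd_mulVec_congr hx fun y _ hy => if_pos (hy.trans hj)
    · rw [K.bd_mulVec_congr (c := c m) (c' := 0) hx fun y _ hy => if_neg (hy ▸ hj),
        Matrix.mulVec_zero, Pi.zero_apply]
  choose b hb using fun m : V →₀ ℕ => hK m.support (c m) (hc m)
  let M : Finset (V →₀ ℕ) := Finset.univ.biUnion fun x => (f x).support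
  let h (x : X) : MvPolynomial V k := ∑ m ∈ M, MvPolynomial.monomial m (b m x)
  have hh (x : X) (m : V →₀ ℕ) : (h x).coeff m = if m ∈ M then b m x else 0 := by
    simp [h, MvPolynomial.coeff_sum, MvPolynomial.coeff_monomial]
  refine ⟨h, K.mem_relations.2 fun x m hx hj => ?_⟩
  rw [Pi.sub_apply, MvPolynomial.coeff_sub, coeff_boundary, sub_eq_zero]
  simp only [hh]
  by_cases hm : m ∈ M
  · simp only [hm, if_true]
    rw [← Matrix.mulVecLin_apply, ← hb m x hx]
    exact (if_pos (Nat.succ_injective hj)).symm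
  · have hfm : (f x).coeff m = 0 := by
      contrapose! hm
      exact Finset.mem_biUnion.2 ⟨x, Finset.mem_univ x, MvPolynomial.mem_support_iff.2 hm⟩
    simp only [hm, if_false, hfm]
    exact (congrFun (Matrix.mulVec_zero K.bd) x).symm

variable (P) in
/-- The differential of the complex of the quotients by `relations`. -/
def differential (j : ℕ) : ((X → MvPolynomial V k) ⧸ K.relations P (j + 1)) →ₗ[P]
    (X → MvPolynomial V k) ⧸ K.relations P j :=
  Submodule.mapQ _ _ (K.boundary P) (K.relations_le_comap j)

theorem exact_differential (hK : ∀ G, AcyclicOn K.bd.mulVecLin (K.active G)) (j : ℕ) :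
    Function.Exact (K.differential P (j + 1)) (K.differential P j) := by
  intro x
  obtain ⟨f, rfl⟩ := Submodule.Quotient.mk_surjective _ x
  rw [differential, Submodule.mapQ_apply, Submodule.Quotient.mk_eq_zero]
  constructor
  · intro hf
    obtain ⟨h, hh⟩ := K.exists_sub_boundary_mem hK hf
    exact ⟨Submodule.Quotient.mk h, ((Submodule.Quotient.eq _).2 hh).symm⟩
  · rintro ⟨y, hy⟩
    obtain ⟨h, rfl⟩ := Submodule.Quotient.mk_surjective _ y
    have := K.relations_le_comap j ((Submodule.Quotient.eq _).1 hy)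
    rwa [Submodule.mem_comap, map_sub, boundary_boundary, zero_sub, neg_mem_iff] at this

end

section

variable {V X k P : Type u} [Fintype X] [CommRing k] [CommRing P] [Algebra P (MvPolynomial V k)]
  (K : SupportedComplex V X k)

theorem relations_eq_ker {x₀ : X} {j : ℕ} (hx₀ : ∀ x, x ∈ K.cells ∧ K.deg x + 1 = j ↔ x = x₀) :
    K.relations P j =
      LinearMap.ker (((K.ideal x₀).restrictScalars P).mkQ ∘ₗ LinearMap.proj x₀) := by
  ext f
  simp [relations, hx₀]

/-- A cell `x₀` on top of an exact complex: its quotient is the last syzygy. -/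
theorem projective_quotient_of_acyclic (hK : ∀ G, AcyclicOn K.bd.mulVecLin (K.active G)) {N : ℕ}
    {x₀ : X} (hx₀ : x₀ ∈ K.cells) (hdeg₀ : K.deg x₀ = N + 1)
    (hdeg : ∀ x ∈ K.cells, x ≠ x₀ → K.deg x ≤ N)
    (hpd : ∀ x ∈ K.cells, x ≠ x₀ →
      ProjDimLT P (MvPolynomial V k ⧸ (K.ideal x).restrictScalars P) (N - K.deg x + 1)) :
    Module.Projective P (MvPolynomial V k ⧸ (K.ideal x₀).restrictScalars P) := by
  have htop : ∀ x, x ∈ K.cells ∧ K.deg x + 1 = N + 2 ↔ x = x₀ := by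
    refine fun x => ⟨fun ⟨hx, _⟩ => by_contra fun hne => ?_, fun hx => hx ▸ ⟨hx₀, by omega⟩⟩
    have := hdeg x hx hne
    omega
  have hzero (j : ℕ) (hj : ∀ x ∈ K.cells, K.deg x + 1 ≠ j) :
      Subsingleton ((X → MvPolynomial V k) ⧸ K.relations P j) :=
    Submodule.Quotient.subsingleton_iff.2 <|
      eq_top_iff.2 fun f _ => K.mem_relations.2 fun x m hx hxj => (hj x hx.1 hxj).elim
  have hsub₀ := hzero 0 fun x _ => Nat.succ_ne_zero _
  have hsub := hzero (N + 1 + 1 + 1) fun x hx hxN => by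
    rcases eq_or_ne x x₀ with rfl | hne
    · omega
    · have := hdeg x hx hne
      omega
  have hker : ProjDimLT P (LinearMap.ker (K.differential P N)) (N - N + 1) := by
    refine ProjDimLT.ker_of_exact (fun j => (X → MvPolynomial V k) ⧸ K.relations P j)
      (K.differential P) (fun j hj => ?_) (fun j _ => K.exact_differential hK j) N le_rfl
    refine ProjDimLT.quotient_pi _ _ fun x hx => ?_
    obtain rfl : K.deg x = j := Nat.succ_injective hx.2
    exact hpd x hx.1 (by rintro rfl; omega)
  have hinj : Function.Injective (K.differential P (N + 1)) :=
    (injective_iff_map_eq_zero _).2 fun x hx => by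
      obtain ⟨y, rfl⟩ := (K.exact_differential hK (N + 1) x).1 hx
      rw [Subsingleton.elim y 0, map_zero]
  rw [Nat.sub_self, zero_add, (K.exact_differential hK N).linearMap_ker_eq,
    ProjDimLT.one_iff] at hker
  have hD := Module.Projective.of_equiv (LinearEquiv.ofInjective _ hinj).symm
  rw [K.relations_eq_ker htop] at hD
  refine Module.Projective.of_equiv (LinearMap.quotKerEquivOfSurjective
    (((K.ideal x₀).restrictScalars P).mkQ ∘ₗ LinearMap.proj (φ := fun _ => MvPolynomial V k) x₀) ?_)
  exact (Submodule.mkQ_surjective _).comp (LinearMap.proj_surjective x₀)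

end

end SupportedComplex

/-! ### Linear substitutions -/

theorem killCompl_eq_zero_iff {σ τ k : Type*} [CommSemiring k] {f : σ → τ}
    (hf : Function.Injective f) {p : MvPolynomial τ k} :
    MvPolynomial.killCompl hf p = 0 ↔ ∀ m, p.coeff m ≠ 0 → ¬ ↑m.support ⊆ Set.range f := by
  rw [MvPolynomial.ext_iff]
  simp only [MvPolynomial.coeff_killCompl, MvPolynomial.coeff_zero]
  constructor
  · intro h m hm hmf
    exact hm (Finsupp.mapDomain_comapDomain f hf m hmf ▸ h _)
  · intro h s
    refine by_contra fun hs => h _ hs fun x hx => ?_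
    obtain ⟨y, -, rfl⟩ := Finset.mem_image.1 (Finsupp.mapDomain_support hx)
    exact ⟨y, rfl⟩

section LinForm

variable {V ι k : Type*} [Fintype V] [CommSemiring k]

/-- The linear forms in the variables `V` whose coefficients are the columns of the matrix `a`. -/
def linForm (a : Matrix V ι k) (i : ι) : MvPolynomial V k :=
  a.transpose.toMvPolynomial i

theorem linForm_eq_sum (a : Matrix V ι k) (i : ι) :
    linForm a i = ∑ v, MvPolynomial.C (a v i) * MvPolynomial.X v := by
  simp [linForm, Matrix.toMvPolynomial, MvPolynomial.C_mul_X_eq_monomial]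

theorem isHomogeneous_linForm (a : Matrix V ι k) (i : ι) : (linForm a i).IsHomogeneous 1 :=
  Matrix.toMvPolynomial_isHomogeneous _ _

theorem killCompl_linForm {σ : Type*} [Fintype σ] {f : σ → V} (hf : Function.Injective f)
    (a : Matrix V ι k) (i : ι) :
    MvPolynomial.killCompl hf (linForm a i) = linForm (a.submatrix f id) i := by
  have hX (v : V) (hv : v ∉ Set.range f) :
      MvPolynomial.killCompl hf (MvPolynomial.X v : MvPolynomial V k) = 0 := by
    simp only [MvPolynomial.killCompl, MvPolynomial.aeval_X, dif_neg hv]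
  simp only [linForm_eq_sum, map_sum, map_mul, MvPolynomial.killCompl_C]
  refine (Finset.sum_of_injOn f hf.injOn (by simp) (fun v _ hv => ?_) fun x _ => ?_).symm
  · rw [hX v (by simpa using hv), mul_zero]
  · rw [← MvPolynomial.rename_X f x, MvPolynomial.killCompl_rename_app]
    rfl

/-- The substitution of the linear forms with coefficient matrix `a` for the variables. -/
def linSubst (a : Matrix V ι k) : MvPolynomial ι k →ₐ[k] MvPolynomial V k :=
  MvPolynomial.bind₁ (linForm a)

@[simp]
theorem linSubst_X (a : Matrix V ι k) (i : ι) : linSubst a (MvPolynomial.X i) = linForm a i :=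
  MvPolynomial.bind₁_X_right _ _

theorem linSubst_linSubst {μ : Type*} [Fintype μ] (a : Matrix V ι k) (b : Matrix μ V k)
    (p : MvPolynomial ι k) : linSubst b (linSubst a p) = linSubst (b * a) p := by
  rw [linSubst, linSubst, MvPolynomial.bind₁_bind₁]
  congr 2
  funext i
  rw [linForm, linForm, Matrix.transpose_mul, Matrix.toMvPolynomial_mul]
  rfl

theorem linSubst_one (p : MvPolynomial V k) : linSubst (1 : Matrix V V k) p = p := by
  have : linForm (1 : Matrix V V k) = MvPolynomial.X := by
    funext i
    rw [linForm, Matrix.transpose_one, Matrix.toMvPolynomial_one]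
  rw [linSubst, this, MvPolynomial.bind₁_X_left, AlgHom.id_apply]

theorem killCompl_linSubst {σ : Type*} [Fintype σ] {f : σ → V} (hf : Function.Injective f)
    (a : Matrix V ι k) (p : MvPolynomial ι k) :
    MvPolynomial.killCompl hf (linSubst a p) = linSubst (a.submatrix f id) p := by
  rw [← AlgHom.comp_apply]
  congr 1
  refine MvPolynomial.algHom_ext fun i => ?_
  rw [AlgHom.comp_apply, linSubst_X, linSubst_X, killCompl_linForm]

end LinForm

namespace ProjDimLT

variable {ι κ k M : Type u} [Fintype κ] [CommRing k] [AddCommGroup M]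
  [Module (MvPolynomial ι k) M]

theorem of_linSubst_of_mul_eq_one [Fintype ι] {a : Matrix κ ι k} {b : Matrix ι κ k}
    (hab : a * b = 1) (hba : b * a = 1) (e : M ≃+ MvPolynomial κ k)
    (he : ∀ p m, e (p • m) = linSubst a p * e m) : ProjDimLT (MvPolynomial ι k) M 1 := by
  let e' : M ≃ₗ[MvPolynomial ι k] MvPolynomial ι k :=
    { toFun := fun m => linSubst b (e m)
      map_add' := fun m m' => by rw [map_add, map_add]
      map_smul' := fun p m => by
        rw [he, map_mul, linSubst_linSubst, hba, linSubst_one, smul_eq_mul, RingHom.id_apply]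
      invFun := fun p => e.symm (linSubst a p)
      left_inv := fun m => by
        beta_reduce
        rw [linSubst_linSubst, hab, linSubst_one, AddEquiv.symm_apply_apply]
      right_inv := fun p => by
        beta_reduce
        rw [AddEquiv.apply_symm_apply, linSubst_linSubst, hba, linSubst_one] }
  exact one_iff.2 (Module.Projective.of_equiv e'.symm)

/-- Multiplication by the variable `none` resolves the quotient that forgets it. -/
theorem of_linSubst_option {M' : Type u} [AddCommGroup M'] [Module (MvPolynomial ι k) M'] {n : ℕ}
    (a : Matrix (Option κ) ι k) (e' : M' ≃+ MvPolynomial (Option κ) k)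
    (he' : ∀ p m, e' (p • m) = linSubst a p * e' m) (e : M ≃+ MvPolynomial κ k)
    (he : ∀ p m, e (p • m) = linSubst (a.submatrix some id) p * e m)
    (h : ProjDimLT (MvPolynomial ι k) M' n) : ProjDimLT (MvPolynomial ι k) M (n + 1) := by
  let ε := MvPolynomial.killCompl (R := k) (Option.some_injective κ)
  let f : M' →ₗ[MvPolynomial ι k] M' :=
    { toFun := fun m => e'.symm (MvPolynomial.X none * e' m)
      map_add' := fun m m' => by rw [map_add, mul_add, map_add]
      map_smul' := fun p m => e'.injective <| by
        simp only [he', AddEquiv.apply_symm_apply, RingHom.id_apply, mul_left_comm] }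
  let g : M' →ₗ[MvPolynomial ι k] M :=
    { toFun := fun m => e.symm (ε (e' m))
      map_add' := fun m m' => by rw [map_add, map_add, map_add]
      map_smul' := fun p m => e.injective <| by
        simp only [he, he', AddEquiv.apply_symm_apply, RingHom.id_apply, map_mul, ε,
          killCompl_linSubst] }
  have hε (q : MvPolynomial (Option κ) k) : ε q = 0 ↔ MvPolynomial.X none ∣ q := by
    rw [← Ideal.mem_span_singleton, ← Set.image_singleton, MvPolynomial.mem_ideal_span_X_image,
      killCompl_eq_zero_iff]
    refine forall_congr' fun m => imp_congr MvPolynomial.mem_support_iff.symm ?_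
    simp [Set.subset_def, Option.forall]
  have hε_surj : Function.Surjective ε := fun q =>
    ⟨MvPolynomial.rename some q, MvPolynomial.killCompl_rename_app _ q⟩
  refine of_exact_right (f := f) (g := g) ?_ ?_ (fun m => ?_) h (h.mono n.le_succ)
  · exact e'.symm.injective.comp
      ((MvPolynomial.isRegular_X (R := k)).left.comp e'.injective)
  · exact e.symm.surjective.comp (hε_surj.comp e'.surjective)
  · change e.symm (ε (e' m)) = 0 ↔ _
    rw [map_eq_zero_iff _ e.symm.injective, hε]
    constructor
    · rintro ⟨q, hq⟩
      exact ⟨e'.symm q, e'.injective <| by simp [f, hq]⟩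
    · rintro ⟨m, rfl⟩
      exact ⟨e' m, by simp [f]⟩

end ProjDimLT

theorem exists_linearIndependent_option {κ ι k : Type*} [Field k] [Fintype κ] [Fintype ι]
    {a : Matrix κ ι k} (ha : LinearIndependent k a.row) (h : Fintype.card κ < Fintype.card ι) :
    ∃ a' : Matrix (Option κ) ι k, LinearIndependent k a'.row ∧ a'.submatrix some id = a := by
  obtain ⟨r, hr⟩ : ∃ r : ι → k, r ∉ Submodule.span k (Set.range a.row) := by
    by_contra! hspan
    have htop : Submodule.span k (Set.range a.row) = ⊤ := eq_top_iff.2 fun x _ => hspan x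
    have := finrank_span_eq_card ha
    rw [htop, finrank_top, Module.finrank_fintype_fun_eq_card] at this
    omega
  exact ⟨Matrix.of fun o => o.elim r a, linearIndependent_option.2 ⟨ha, hr⟩, rfl⟩

theorem exists_mul_eq_one_of_linearIndependent {κ ι k : Type*} [Field k] [Fintype κ] [Fintype ι]
    {a : Matrix κ ι k} (ha : LinearIndependent k a.row) (h : Fintype.card κ = Fintype.card ι) :
    ∃ b : Matrix ι κ k, a * b = 1 ∧ b * a = 1 := by
  have hsurj : Function.Surjective a.vecMul :=
    (LinearMap.injective_iff_surjective_of_finrank_eq_finrank (f := a.vecMulLinear)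
      (by simpa using h)).1 (Matrix.vecMul_injective_iff.2 ha)
  obtain ⟨b, hb⟩ := Matrix.vecMul_surjective_iff_exists_left_inverse.1 hsurj
  exact ⟨b, (Matrix.mul_eq_one_comm_of_card_eq _ _ _ h.symm).1 hb, hb⟩

/-- A polynomial ring in `κ` variables, on which a polynomial ring in `ι` variables acts through
linear forms with coefficient matrix of full rank. -/
theorem ProjDimLT.of_linSubst {ι κ k M : Type u} [Field k] [Fintype ι] [Fintype κ] (d : ℕ)
    {a : Matrix κ ι k} (ha : LinearIndependent k a.row)
    (hd : Fintype.card κ + d = Fintype.card ι) [AddCommGroup M] [Module (MvPolynomial ι k) M]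
    (e : M ≃+ MvPolynomial κ k) (he : ∀ p m, e (p • m) = linSubst a p * e m) :
    ProjDimLT (MvPolynomial ι k) M (d + 1) := by
  induction d generalizing κ M with
  | zero =>
    obtain ⟨b, hab, hba⟩ := exists_mul_eq_one_of_linearIndependent ha (by omega)
    exact of_linSubst_of_mul_eq_one hab hba e he
  | succ d ih =>
    obtain ⟨a', ha', rfl⟩ := exists_linearIndependent_option ha (by omega)
    let _ : Module (MvPolynomial ι k) (MvPolynomial (Option κ) k) :=
      Module.compHom _ (linSubst a').toRingHom
    exact of_linSubst_option a' (AddEquiv.refl _) (fun _ _ => rfl) e he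
      (ih ha' (by simp only [Fintype.card_option]; omega) (AddEquiv.refl _) fun _ _ => rfl)

/-! ### Cohen–Macaulayness from acyclic stars -/

/-- The boundary matrix, over a ring of characteristic two, of the complex with a basis element
`some τ` in degree `#τ` for every `τ ∈ T`, and one further basis element `none` in degree `N + 1`
whose boundary is the sum of all `τ ∈ T` with `#τ = N`. The boundary of `some τ` is the sum of the
facets of `τ` in `T`. -/
def cellBd {V k : Type*} [CommRing k] (T : Finset (Finset V)) (N : ℕ) :
    Matrix (Option (Finset V)) (Option (Finset V)) k
  | some ρ, some τ => if (ρ ∈ T ∧ τ ∈ T) ∧ ρ ⋖ τ then 1 else 0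
  | some ρ, none => if ρ ∈ T ∧ ρ.card = N then 1 else 0
  | none, _ => 0

/-- The index `none` together with the cells of `T` that contain `G`. -/
def starCells {V : Type*} (T : Finset (Finset V)) (G : Finset V) : Set (Option (Finset V)) :=
  {x | ∀ τ, x = some τ → τ ∈ T ∧ G ⊆ τ}

section CellBd

variable {V k : Type*} [CommRing k] {T : Finset (Finset V)} {N : ℕ}

theorem some_mem_starCells {G τ : Finset V} : some τ ∈ starCells T G ↔ τ ∈ T ∧ G ⊆ τ := by
  simp [starCells]

theorem none_mem_starCells {G : Finset V} : none ∈ starCells T G :=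
  fun _ h => by simp at h

variable [Fintype V]

theorem cellBd_mulVec_none (c : Option (Finset V) → k) : (cellBd T N *ᵥ c) none = 0 :=
  zero_dotProduct c

theorem cellBd_mulVec_some (c : Option (Finset V) → k) {ρ : Finset V} (hρ : ρ ∈ T) :
    (cellBd T N *ᵥ c) (some ρ) =
      ∑ τ ∈ T with ρ ⋖ τ, c (some τ) + if ρ.card = N then c none else 0 := by
  rw [Matrix.mulVec, dotProduct, Fintype.sum_option, add_comm]
  simp [cellBd, hρ, ite_and, ← Finset.sum_filter]

theorem sum_one_between_eq_zero [CharP k 2] (r u : Finset V) :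
    ∑ τ with r ⋖ τ ∧ τ ⋖ u, (1 : k) = 0 := by
  refine Finset.sum_involution (fun τ _ => r ∪ (u \ τ)) (fun _ _ => CharTwo.add_self_eq_zero _)
    (fun τ hτ _ => ?_) (fun τ hτ => ?_) (fun τ hτ => ?_)
  all_goals
    obtain ⟨h₁, h₂⟩ := (Finset.mem_filter.1 hτ).2
    obtain ⟨a, ha, rfl⟩ := Finset.covBy_iff_exists_insert.1 h₁
    obtain ⟨b, hb, rfl⟩ := Finset.covBy_iff_exists_insert.1 h₂
    rw [Finset.insert_sdiff_of_notMem _ hb, sdiff_self, Finset.bot_eq_empty, insert_empty_eq,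
      Finset.union_singleton]
    have hab : a ∉ insert b r := fun h =>
      (Finset.mem_insert.1 h).elim (fun h => hb (by simp [h])) ha
  · exact fun h => hab (h ▸ Finset.mem_insert_self a r)
  · rw [Finset.mem_filter, Finset.insert_comm]
    exact ⟨Finset.mem_univ _, Finset.covBy_insert (fun h => hb (Finset.mem_insert_of_mem h)),
      Finset.covBy_insert hab⟩
  · rw [Finset.insert_comm, Finset.insert_sdiff_of_notMem _ hab, sdiff_self, Finset.bot_eq_empty,
      insert_empty_eq, Finset.union_singleton]

theorem cellBd_mul_self [CharP k 2] (hT : (T : Set (Finset V)).OrdConnected)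
    (hN : ∀ r ∈ T, r.card + 1 = N → Even (Finset.card {τ ∈ T | r ⋖ τ})) :
    cellBd T N * cellBd T N = (0 : Matrix _ _ k) := by
  ext (_ | r) x
  · exact zero_dotProduct _
  rw [Matrix.mul_apply, Fintype.sum_option, Matrix.zero_apply]
  by_cases hr : r ∈ T
  swap
  · simp [cellBd, hr]
  have hnone : (cellBd T N (some r) none * cellBd T N none x : k) = 0 := mul_zero _
  rw [hnone, zero_add]
  rcases x with _ | u
  · have hterm (τ : Finset V) : (cellBd T N (some r) (some τ) * cellBd T N (some τ) none : k) =
        if τ ∈ T ∧ r ⋖ τ then if r.card + 1 = N then 1 else 0 else 0 := by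
      by_cases h : r ⋖ τ
      · have hcard := Nat.covBy_iff_add_one_eq.1 h.card_finset
        by_cases hτ : τ ∈ T <;> simp [cellBd, hr, hτ, h, hcard]
      · simp [cellBd, h]
    rw [Finset.sum_congr rfl fun τ _ => hterm τ, ← Finset.sum_filter, Finset.sum_const,
      ← Finset.filter_filter, Finset.filter_univ_mem]
    split_ifs with hrN
    · rw [nsmul_one, CharTwo.natCast_eq_ite, if_pos (hN r hr hrN)]
    · exact smul_zero _
  · have hterm (τ : Finset V) : (cellBd T N (some r) (some τ) * cellBd T N (some τ) (some u) : k) =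
        if r ⋖ τ ∧ τ ⋖ u then if u ∈ T then 1 else 0 else 0 := by
      by_cases h : r ⋖ τ ∧ τ ⋖ u
      · by_cases hu : u ∈ T
        · have hτ : τ ∈ T := hT.out hr hu ⟨h.1.le, h.2.le⟩
          simp [cellBd, hr, hu, h, hτ]
        · simp [cellBd, hu]
      · rw [if_neg h]
        rw [not_and_or] at h
        rcases h with h | h <;> simp [cellBd, h]
    rw [Finset.sum_congr rfl fun τ _ => hterm τ, ← Finset.sum_filter]
    split_ifs
    · exact sum_one_between_eq_zero r u
    · exact Finset.sum_const_zero

end CellBd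

section

variable {V k : Type*} [Fintype V] [CommRing k] {T : Finset (Finset V)} {N : ℕ}
  {Γ : Finset V → Prop}

theorem monotone_not_subset {V : Type*} (τ : Finset V) : Monotone fun s => ¬ s ⊆ τ :=
  fun _ _ hst hs ht => hs (hst.trans ht)

/-- The polynomials vanishing on the coordinate subspace spanned by `τ`. -/
abbrev coordIdeal {V : Type*} (k : Type*) [CommSemiring k] (τ : Finset V) :
    Ideal (MvPolynomial V k) :=
  supportIdeal k _ (monotone_not_subset τ)

/-- The resolution of the Stanley–Reisner ring of the complex `Γ`, placed at `none`, by the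
coordinate rings of the cells in `T`. -/
def cellResolution (hT : cellBd T N * cellBd T N = (0 : Matrix _ _ k))
    (hΓ : Monotone fun G => ¬ Γ G) (hΓT : ∀ τ ∈ T, ∀ G ⊆ τ, Γ G) :
    SupportedComplex V (Option (Finset V)) k where
  cells := {x | ∀ τ, x = some τ → τ ∈ T}
  deg x := x.elim (N + 1) Finset.card
  bd := cellBd T N
  vanish x G := x.elim (¬ Γ G) fun τ => ¬ G ⊆ τ
  monotone_vanish
    | none => hΓ
    | some τ => monotone_not_subset τ
  mem_cells_of_bd {x y} hxy := by
    rintro τ rfl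
    rcases x with _ | ρ
    · exact (hxy rfl).elim
    · exact (ite_ne_right_iff.1 hxy).1.1.2
  deg_of_bd {x y} hxy := by
    rcases x with _ | ρ
    · exact (hxy rfl).elim
    rcases y with _ | τ
    · exact congrArg (· + 1) (ite_ne_right_iff.1 hxy).1.2.symm
    · exact (Nat.covBy_iff_add_one_eq.1 (ite_ne_right_iff.1 hxy).1.2.card_finset).symm
  vanish_of_bd {x y} hxy := by
    rcases x with _ | ρ
    · exact (hxy rfl).elim
    rcases y with _ | τ
    · exact fun G hG hGρ => hG (hΓT ρ (ite_ne_right_iff.1 hxy).1.1 G hGρ)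
    · exact fun G hG hGρ => hG (hGρ.trans (ite_ne_right_iff.1 hxy).1.2.le)
  bd_mul_bd := hT

theorem acyclicOn_active_cellResolution (hT : cellBd T N * cellBd T N = (0 : Matrix _ _ k))
    (hΓ : Monotone fun G => ¬ Γ G) (hΓT : ∀ τ ∈ T, ∀ G ⊆ τ, Γ G)
    (hac : ∀ G, Γ G → AcyclicOn (cellBd (k := k) T N).mulVecLin (starCells T G)) (G : Finset V) :
    AcyclicOn (cellBd (k := k) T N).mulVecLin ((cellResolution hT hΓ hΓT).active G) := by
  by_cases hG : Γ G
  · convert hac G hG using 1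
    ext (_ | τ) <;> simp [SupportedComplex.active, cellResolution, starCells, hG]
  · refine fun c _ => ⟨0, ?_⟩
    rintro (_ | τ) ⟨hτ, hv⟩
    · exact (hv hG).elim
    · exact (hG (hΓT τ (hτ τ rfl) G (not_not.1 hv))).elim

end

section

variable {V κ k : Type u} [Fintype V] [Fintype κ] [Field k]
  [Algebra (MvPolynomial κ k) (MvPolynomial V k)] {b : Matrix V κ k}

theorem projDimLT_quotient_coordIdeal
    (hb : ∀ p, algebraMap (MvPolynomial κ k) (MvPolynomial V k) p = linSubst b p) {τ : Finset V}
    (hτ : LinearIndependent k (b.submatrix ((↑) : τ → V) id).row) :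
    ProjDimLT (MvPolynomial κ k)
      (MvPolynomial V k ⧸ (coordIdeal k τ).restrictScalars (MvPolynomial κ k))
      (Fintype.card κ - τ.card + 1) := by
  let _ : Module (MvPolynomial κ k) (MvPolynomial τ k) :=
    Module.compHom _ (linSubst (b.submatrix ((↑) : τ → V) id)).toRingHom
  let ε : MvPolynomial V k →ₗ[MvPolynomial κ k] MvPolynomial τ k :=
    { toFun := MvPolynomial.killCompl Subtype.val_injective
      map_add' := map_add _
      map_smul' := fun p q => by
        rw [Algebra.smul_def, hb, map_mul, killCompl_linSubst]
        rfl }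
  have hε : LinearMap.ker ε = (coordIdeal k τ).restrictScalars (MvPolynomial κ k) := by
    ext p
    rw [LinearMap.mem_ker, Submodule.restrictScalars_mem, mem_supportIdeal]
    exact (killCompl_eq_zero_iff Subtype.val_injective).trans (by simp)
  have hε_surj : Function.Surjective ε := fun q =>
    ⟨MvPolynomial.rename Subtype.val q, MvPolynomial.killCompl_rename_app _ q⟩
  have hcard : τ.card + (Fintype.card κ - τ.card) = Fintype.card κ :=
    Nat.add_sub_cancel' (by simpa using hτ.fintype_card_le_finrank)
  rw [← hε]
  exact (ProjDimLT.of_linSubst _ hτ (by rwa [Fintype.card_coe]) (AddEquiv.refl _)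
    fun _ _ => rfl).of_equiv (ε.quotKerEquivOfSurjective hε_surj).symm

theorem projective_quotient_of_acyclicOn_starCells
    (hb : ∀ p, algebraMap (MvPolynomial κ k) (MvPolynomial V k) p = linSubst b p)
    {T : Finset (Finset V)} {Γ : Finset V → Prop} (hΓ : Monotone fun G => ¬ Γ G)
    (hΓT : ∀ τ ∈ T, ∀ G ⊆ τ, Γ G)
    (hT : cellBd T (Fintype.card κ) * cellBd T (Fintype.card κ) = (0 : Matrix _ _ k))
    (hac : ∀ G, Γ G → AcyclicOn (cellBd (k := k) T (Fintype.card κ)).mulVecLin (starCells T G))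
    (hind : ∀ τ ∈ T, LinearIndependent k (b.submatrix ((↑) : τ → V) id).row) :
    Module.Projective (MvPolynomial κ k)
      (MvPolynomial V k ⧸ (supportIdeal k _ hΓ).restrictScalars (MvPolynomial κ k)) := by
  refine (cellResolution hT hΓ hΓT).projective_quotient_of_acyclic (x₀ := none)
    (acyclicOn_active_cellResolution hT hΓ hΓT hac) (fun _ h => by simp at h) rfl ?_ ?_
  · rintro (_ | τ) hτ hne
    · exact (hne rfl).elim
    · have : τ.card ≤ Fintype.card κ := by
        simpa using (hind τ (hτ τ rfl)).fintype_card_le_finrank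
      exact this
  · rintro (_ | τ) hτ hne
    · exact (hne rfl).elim
    · exact projDimLT_quotient_coordIdeal hb (hind τ (hτ τ rfl))

end

theorem mk_mem_smul_top_iff {P A : Type*} [CommRing P] [CommRing A] [Algebra P A]
    (J : Ideal P) (D : Ideal A) (f : A) :
    (Submodule.Quotient.mk f : A ⧸ D.restrictScalars P) ∈
      J • (⊤ : Submodule P (A ⧸ D.restrictScalars P)) ↔ f ∈ J.map (algebraMap P A) ⊔ D := by
  have htop : (⊤ : Submodule P (A ⧸ D.restrictScalars P)) =
      (⊤ : Submodule P A).map (D.restrictScalars P).mkQ := by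
    rw [Submodule.map_top, Submodule.range_mkQ]
  rw [htop, ← Submodule.map_smul'', ← Submodule.mkQ_apply, ← Submodule.mem_comap,
    Submodule.comap_map_eq, Submodule.ker_mkQ, Ideal.smul_top_eq_map, Submodule.mem_sup,
    Submodule.mem_sup]
  rfl

/-- The ideal `∑ j ∈ B, θ j • N`. -/
def thetaMul {ι A : Type*} [CommRing A] (θ : ι → A) (B : Finset ι) (N : Ideal A) : Ideal A :=
  Ideal.span (θ '' B) * N

/-- The elements `θ j` with `j ∈ B` form, in any order, a weakly regular sequence on
`(N + D) / D`. -/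
def RegOn {ι A : Type*} [CommRing A] (θ : ι → A) (N D : Ideal A) (B : Finset ι) : Prop :=
  ∀ B' ⊆ B, ∀ i ∈ B, i ∉ B' → ∀ f ∈ N, θ i * f ∈ thetaMul θ B' N ⊔ D → f ∈ thetaMul θ B' N ⊔ D

theorem linearIndependent_submatrix {V ι k : Type*} [Field k] {a : Matrix V ι k} {W : Finset ι}
    {τ : Finset V} (hτ : LinearIndependent k fun v : τ => a v)
    (hW : ∀ v ∈ τ, ∀ i ∉ W, a v i = 0) :
    LinearIndependent k (a.submatrix ((↑) : τ → V) ((↑) : W → ι)).row := by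
  rw [Fintype.linearIndependent_iff] at hτ ⊢
  intro g hg
  refine hτ g (funext fun i => ?_)
  by_cases hi : i ∈ W
  · simpa using congrFun hg ⟨i, hi⟩
  · simp only [Finset.sum_apply, Pi.smul_apply, Pi.zero_apply]
    exact Finset.sum_eq_zero fun v _ => by rw [hW v v.2 i hi, smul_zero]

section

variable {V ι k : Type u} [Fintype V] [Field k] {a : Matrix V ι k} {W : Finset ι}

theorem regOn_top_of_projective [Algebra (MvPolynomial W k) (MvPolynomial V k)]
    (halg : ∀ p, algebraMap (MvPolynomial W k) (MvPolynomial V k) p =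
      linSubst (a.submatrix id ((↑) : W → ι)) p) {D : Ideal (MvPolynomial V k)}
    [Module.Projective (MvPolynomial W k)
      (MvPolynomial V k ⧸ D.restrictScalars (MvPolynomial W k))] :
    RegOn (linForm a) ⊤ D W := by
  intro B hB i hi hiB f _ hf
  have hX (j : W) : algebraMap (MvPolynomial W k) (MvPolynomial V k) (MvPolynomial.X j) =
      linForm a j := by
    rw [halg, linSubst_X]
    rfl
  let C : Set W := {j | (j : ι) ∈ B}
  have hmap : (Ideal.span (MvPolynomial.X '' C)).map
      (algebraMap (MvPolynomial W k) (MvPolynomial V k)) = thetaMul (linForm a) B ⊤ := by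
    have hC : ((↑) : W → ι) '' C = B :=
      Set.image_preimage_eq_of_subset fun j hj => ⟨⟨j, hB hj⟩, rfl⟩
    rw [Ideal.map_span, thetaMul, Ideal.mul_top, ← hC, Set.image_image, Set.image_image]
    exact congrArg _ (Set.image_congr fun j _ => hX j)
  rw [← hmap, ← mk_mem_smul_top_iff] at hf ⊢
  rw [← hX ⟨i, hi⟩, ← Algebra.smul_def, Submodule.Quotient.mk_smul] at hf
  refine mem_smul_top_of_smul_mem (fun p hp => ?_) hf
  exact mem_span_X_image_of_X_mul_mem (B := C) hiB hp

theorem regOn_top_of_acyclicOn_starCells {T : Finset (Finset V)} {Γ : Finset V → Prop}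
    (hΓ : Monotone fun G => ¬ Γ G) (hΓT : ∀ τ ∈ T, ∀ G ⊆ τ, Γ G)
    (hT : cellBd T W.card * cellBd T W.card = (0 : Matrix _ _ k))
    (hac : ∀ G, Γ G → AcyclicOn (cellBd (k := k) T W.card).mulVecLin (starCells T G))
    (hind : ∀ τ ∈ T, LinearIndependent k fun v : τ => a v)
    (hW : ∀ τ ∈ T, ∀ v ∈ τ, ∀ i ∉ W, a v i = 0) :
    RegOn (linForm a) ⊤ (supportIdeal k _ hΓ) W := by
  let _ : Algebra (MvPolynomial W k) (MvPolynomial V k) :=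
    (linSubst (a.submatrix id ((↑) : W → ι))).toRingHom.toAlgebra
  rw [← Fintype.card_coe W] at hT hac
  have := projective_quotient_of_acyclicOn_starCells
    (b := a.submatrix id ((↑) : W → ι)) (fun _ => rfl) hΓ hΓT hT hac fun τ hτ =>
      linearIndependent_submatrix (hind τ hτ) (hW τ hτ)
  exact regOn_top_of_projective fun _ => rfl

end

/-! ### Regularity along a family of ideals -/

section RegOn

variable {ι A : Type*} [CommRing A] {θ : ι → A}

theorem thetaMul_empty (N : Ideal A) : thetaMul θ ∅ N = ⊥ := by
  simp [thetaMul]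

theorem thetaMul_insert (p : ι) (B : Finset ι) (N : Ideal A) :
    thetaMul θ (insert p B) N = Ideal.span {θ p} * N ⊔ thetaMul θ B N := by
  rw [thetaMul, Finset.coe_insert, Set.image_insert_eq, Ideal.span_insert, Ideal.sup_mul, thetaMul]

theorem thetaMul_mono (B : Finset ι) {N N' : Ideal A} (h : N ≤ N') :
    thetaMul θ B N ≤ thetaMul θ B N' :=
  Ideal.mul_mono_right h

theorem thetaMul_le (B : Finset ι) (N : Ideal A) : thetaMul θ B N ≤ N := Ideal.mul_le_right

theorem thetaMul_sup (B : Finset ι) (N N' : Ideal A) :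
    thetaMul θ B (N ⊔ N') = thetaMul θ B N ⊔ thetaMul θ B N' := Ideal.mul_sup _ _ _

theorem mul_mem_span_singleton_mul (t : A) {N : Ideal A} {f : A} (hf : f ∈ N) :
    t * f ∈ Ideal.span {t} * N :=
  Ideal.mem_span_singleton_mul.2 ⟨f, hf, rfl⟩

theorem span_singleton_mul_mul_le (t : A) (I : Ideal A) {N N' : Ideal A}
    (h : Ideal.span {t} * N ≤ N') : Ideal.span {t} * (I * N) ≤ I * N' := by
  rw [mul_left_comm]
  exact Ideal.mul_mono_right h

namespace RegOn

variable {B C D J N : Ideal A} {X Y : Finset ι}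

theorem subset (h : RegOn θ N D X) (hY : Y ⊆ X) : RegOn θ N D Y :=
  fun B hB i hi => h B (hB.trans hY) i (hY hi)

theorem inf_thetaMul_sup_le (h : RegOn θ B C X) (hJ : J ≤ C) (hY : Y ⊆ X) :
    C ⊓ (thetaMul θ Y B ⊔ J) ≤ thetaMul θ Y C ⊔ J := by
  induction Y using Finset.induction_on with
  | empty => rw [thetaMul_empty, thetaMul_empty]; exact inf_le_right
  | insert p Y hp ih =>
    obtain ⟨hpX, hYX⟩ := Finset.insert_subset_iff.1 hY
    rintro f ⟨hfC, hf⟩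
    rw [thetaMul_insert, sup_assoc] at hf ⊢
    obtain ⟨g, hg, u, hu, rfl⟩ := Submodule.mem_sup.1 hf
    obtain ⟨b, hb, rfl⟩ := Ideal.mem_span_singleton_mul.1 hg
    have hpb : θ p * b ∈ thetaMul θ Y B ⊔ C := by
      rw [← add_sub_cancel_right (θ p * b) u]
      exact Ideal.sub_mem _ (Ideal.mem_sup_right hfC) (sup_le_sup_left hJ _ hu)
    obtain ⟨c, hc, e, he, rfl⟩ := Submodule.mem_sup.1 (h Y hYX p hpX hp b hb hpb)
    have hsplit : θ p * (c + e) + u = θ p * e + (θ p * c + u) := by ring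
    have hrest : θ p * c + u ∈ thetaMul θ Y C ⊔ J := by
      refine ih hYX ⟨?_, Ideal.add_mem _ (Ideal.mem_sup_left (Ideal.mul_mem_left _ _ hc)) hu⟩
      exact (Submodule.add_mem_iff_right _ (Ideal.mul_mem_left _ _ he)).1 (hsplit ▸ hfC)
    rw [hsplit]
    exact Ideal.add_mem _ (Ideal.mem_sup_left (mul_mem_span_singleton_mul _ he))
      (Ideal.mem_sup_right hrest)

theorem of_le (hBJ : RegOn θ B J X) (hBC : RegOn θ B C X) (hJC : J ≤ C) (hCB : C ≤ B) :
    RegOn θ C J X :=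
  fun Y hY i hi hiY f hf hif => hBC.inf_thetaMul_sup_le hJC hY
    ⟨hf, hBJ Y hY i hi hiY f (hCB hf) (sup_le_sup_right (thetaMul_mono Y hCB) _ hif)⟩

theorem of_sup (h : RegOn θ (N ⊔ D) D X) : RegOn θ N (N ⊓ D) X := by
  intro Y hY i hi hiY f hf hif
  have hle : thetaMul θ Y N ⊔ N ⊓ D ≤ thetaMul θ Y (N ⊔ D) ⊔ D :=
    sup_le_sup (thetaMul_mono Y le_sup_left) inf_le_right
  have hsup := h Y hY i hi hiY f (Ideal.mem_sup_left hf) (hle hif)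
  rw [thetaMul_sup, sup_assoc, sup_eq_right.2 (thetaMul_le Y D)] at hsup
  obtain ⟨u, hu, d, hd, rfl⟩ := Submodule.mem_sup.1 hsup
  refine Ideal.add_mem _ (Ideal.mem_sup_left hu) (Ideal.mem_sup_right ⟨?_, hd⟩)
  exact (Submodule.add_mem_iff_right _ (thetaMul_le _ _ hu)).1 hf

/-- If `θ p` is regular on `N' / D'` together with the `θ i`, `i ∈ X`, and multiplication by
`θ p` maps `N' / D'` into `N'' / D''`, then regularity on `X` descends to the cokernel. -/
theorem cokernel {N' N'' D' D'' : Ideal A} {p : ι} (hp : p ∉ X)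
    (hN : Ideal.span {θ p} * N' ≤ N'') (hN' : N'' ≤ N')
    (hD : Ideal.span {θ p} * D' ≤ D'') (hD' : D'' ≤ D')
    (h' : RegOn θ N' D' (insert p X)) (h'' : RegOn θ N'' D'' X) :
    RegOn θ N'' (D'' ⊔ Ideal.span {θ p} * N') X := by
  intro Y hY i hi hiY f hf hif
  rw [← sup_assoc] at hif ⊢
  obtain ⟨u, hu, v, hv, huv⟩ := Submodule.mem_sup.1 hif
  obtain ⟨n, hn, rfl⟩ := Ideal.mem_span_singleton_mul.1 hv
  have hpn : θ p * n ∈ thetaMul θ (insert i Y) N' ⊔ D' := by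
    rw [← add_sub_cancel_left u (θ p * n), huv, thetaMul_insert, sup_assoc]
    exact Ideal.sub_mem _ (Ideal.mem_sup_left (mul_mem_span_singleton_mul _ (hN' hf)))
      (Ideal.mem_sup_right (sup_le_sup (thetaMul_mono Y hN') hD' hu))
  have hiYX : insert i Y ⊆ X := Finset.insert_subset hi hY
  have hn' := h' _ (hiYX.trans (Finset.subset_insert _ _)) p (Finset.mem_insert_self _ _)
    (fun h => hp (hiYX h)) n hn hpn
  rw [thetaMul_insert, sup_assoc] at hn'
  obtain ⟨x, hx, y, hy, rfl⟩ := Submodule.mem_sup.1 hn'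
  obtain ⟨m, hm, rfl⟩ := Ideal.mem_span_singleton_mul.1 hx
  have hpm := mul_mem_span_singleton_mul (θ p) hm
  have hpy : θ p * y ∈ thetaMul θ Y N'' ⊔ D'' := by
    refine (?_ : Ideal.span {θ p} * (thetaMul θ Y N' ⊔ D') ≤ _)
      (mul_mem_span_singleton_mul _ hy)
    rw [Ideal.mul_sup]
    exact sup_le_sup (span_singleton_mul_mul_le _ _ hN) hD
  have hfm : f - θ p * m ∈ thetaMul θ Y N'' ⊔ D'' := by
    refine h'' Y hY i hi hiY _ (Ideal.sub_mem _ hf (hN hpm)) ?_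
    have : θ i * (f - θ p * m) = u + θ p * y := by linear_combination -huv
    exact this ▸ Ideal.add_mem _ hu hpy
  rw [← sub_add_cancel f (θ p * m)]
  exact Ideal.add_mem _ (Ideal.mem_sup_left hfm) (Ideal.mem_sup_right hpm)

end RegOn

/-- The ideal `D + ∑ p ∈ P, θ p • J (Q ∖ {p})`. For a family `J` of ideals between `D` and the
unit ideal, `J Q` modulo this ideal is the iterated cokernel of the multiplications by the `θ p`,
`p ∈ P`. -/
def relIdeal (θ : ι → A) (J : Finset ι → Ideal A) (D : Ideal A) (Q P : Finset ι) : Ideal A :=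
  D ⊔ P.sup fun p => Ideal.span {θ p} * J (Q.erase p)

variable {J : Finset ι → Ideal A} {D : Ideal A} {P Q : Finset ι} {p : ι}

theorem relIdeal_empty (Q : Finset ι) : relIdeal θ J D Q ∅ = D := by simp [relIdeal]

theorem relIdeal_insert (Q P : Finset ι) (p : ι) : relIdeal θ J D Q (insert p P) =
    relIdeal θ J D Q P ⊔ Ideal.span {θ p} * J (Q.erase p) := by
  rw [relIdeal, Finset.sup_insert, relIdeal, sup_assoc, sup_comm (Ideal.span {θ p} * _)]

theorem relIdeal_mono {J' : Finset ι → Ideal A} {D' : Ideal A} (hJ : ∀ Q, J Q ≤ J' Q)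
    (hD : D ≤ D') (Q P : Finset ι) : relIdeal θ J D Q P ≤ relIdeal θ J' D' Q P :=
  sup_le_sup hD (Finset.sup_mono_fun fun _ _ => Ideal.mul_mono_right (hJ _))

theorem relIdeal_le_relIdeal_erase (hJ : Antitone J) (Q P : Finset ι) (p : ι) :
    relIdeal θ J D Q P ≤ relIdeal θ J D (Q.erase p) P :=
  sup_le_sup_left (Finset.sup_mono_fun fun _ _ => Ideal.mul_mono_right
    (hJ (Finset.erase_subset_erase _ (Finset.erase_subset _ _)))) _

theorem relIdeal_le (hDJ : ∀ Q, D ≤ J Q)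
    (hθ : ∀ Q, ∀ p ∈ Q, Ideal.span {θ p} * J (Q.erase p) ≤ J Q) (hPQ : P ⊆ Q) :
    relIdeal θ J D Q P ≤ J Q :=
  sup_le (hDJ Q) (Finset.sup_le fun p hp => hθ Q p (hPQ hp))

theorem span_mul_relIdeal_erase_le
    (hθ : ∀ Q, ∀ p ∈ Q, Ideal.span {θ p} * J (Q.erase p) ≤ J Q) (hpQ : p ∈ Q) (hpP : p ∉ P) :
    Ideal.span {θ p} * relIdeal θ J D (Q.erase p) P ≤ relIdeal θ J D Q P := by
  simp only [relIdeal, Ideal.mul_sup, Finset.sup_eq_iSup, Ideal.mul_iSup]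
  refine sup_le_sup Ideal.mul_le_right (iSup₂_mono fun q hq => ?_)
  rw [Finset.erase_right_comm]
  exact span_singleton_mul_mul_le _ _
    (hθ _ p (Finset.mem_erase.2 ⟨(ne_of_mem_of_not_mem hq hpP).symm, hpQ⟩))

section Fintype

variable [Fintype ι]

theorem regOn_relIdeal (hJ : Antitone J)
    (hθ : ∀ Q, ∀ p ∈ Q, Ideal.span {θ p} * J (Q.erase p) ≤ J Q)
    (hreg : ∀ Q, RegOn θ (J Q) D Qᶜ) (hPQ : P ⊆ Q) :
    RegOn θ (J Q) (relIdeal θ J D Q P) Qᶜ := by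
  induction P using Finset.induction_on generalizing Q with
  | empty => rw [relIdeal_empty]; exact hreg Q
  | insert p P hp ih =>
    obtain ⟨hpQ, hPQ⟩ := Finset.insert_subset_iff.1 hPQ
    rw [relIdeal_insert]
    refine RegOn.cokernel (by simpa using hpQ) (hθ Q p hpQ) (hJ (Finset.erase_subset _ _))
      (span_mul_relIdeal_erase_le hθ hpQ hp) (relIdeal_le_relIdeal_erase hJ _ _ _) ?_ (ih hPQ)
    rw [← Finset.compl_erase]
    exact ih (Finset.subset_erase.2 ⟨hPQ, hp⟩)

theorem mem_relIdeal_erase_of_mul_mem (hJ : Antitone J)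
    (hθ : ∀ Q, ∀ p ∈ Q, Ideal.span {θ p} * J (Q.erase p) ≤ J Q)
    (hreg : ∀ Q, RegOn θ (J Q) D Qᶜ) (hPQ : P ⊆ Q) (hpP : p ∉ P) {f : A}
    (hf : f ∈ J (Q.erase p)) (h : θ p * f ∈ relIdeal θ J D Q P) :
    f ∈ relIdeal θ J D (Q.erase p) P := by
  have hinj := regOn_relIdeal hJ hθ hreg (Finset.subset_erase.2 ⟨hPQ, hpP⟩) ∅
    (Finset.empty_subset _) p (by simp) (Finset.notMem_empty p) f hf
  rw [thetaMul_empty, bot_sup_eq] at hinj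
  exact hinj (relIdeal_le_relIdeal_erase hJ _ _ _ h)

end Fintype

end RegOn

/-! ### Complexes with a carrier map -/

section SupportIdeal

variable {V k : Type*} [CommSemiring k] {Q R T : Finset V → Prop} {hQ : Monotone Q}
  {hR : Monotone R} {hT : Monotone T} {v : V} {p : MvPolynomial V k}

theorem supportIdeal_mono (h : ∀ s, Q s → R s) : supportIdeal k Q hQ ≤ supportIdeal k R hR :=
  fun _ hp _ hm => h _ (hp hm)

theorem monomial_mem_supportIdeal {m : V →₀ ℕ} (c : k) (h : Q m.support) :
    MvPolynomial.monomial m c ∈ supportIdeal k Q hQ := by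
  intro m' hm'
  obtain rfl := Finset.mem_singleton.1 (MvPolynomial.support_monomial_subset hm')
  exact h

theorem supportIdeal_le_sup (h : ∀ s, T s → Q s ∨ R s) :
    supportIdeal k T hT ≤ supportIdeal k Q hQ ⊔ supportIdeal k R hR := by
  intro p hp
  rw [p.as_sum]
  refine Ideal.sum_mem _ fun m hm => ?_
  rcases h _ (hp hm) with hm | hm
  · exact Ideal.mem_sup_left (monomial_mem_supportIdeal _ hm)
  · exact Ideal.mem_sup_right (monomial_mem_supportIdeal _ hm)

theorem supportIdeal_le_sup_span_X (h : ∀ s, v ∉ s → R s → Q s) :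
    supportIdeal k R hR ≤ supportIdeal k Q hQ ⊔ Ideal.span {MvPolynomial.X v} := by
  intro p hp
  rw [p.as_sum]
  refine Ideal.sum_mem _ fun m hm => ?_
  by_cases hv : v ∈ m.support
  · refine Ideal.mem_sup_right (Ideal.mem_span_singleton.2 (MvPolynomial.X_dvd_monomial.2 ?_))
    exact Or.inr (Finsupp.mem_support_iff.1 hv)
  · exact Ideal.mem_sup_left (monomial_mem_supportIdeal _ (h _ hv (hp hm)))

theorem support_single_add (m : V →₀ ℕ) (v : V) :
    (Finsupp.single v 1 + m).support = insert v m.support := by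
  ext w
  by_cases hw : w = v <;> simp [hw]

theorem X_mul_mem_supportIdeal (h : ∀ s, Q s → R (insert v s)) (hp : p ∈ supportIdeal k Q hQ) :
    MvPolynomial.X v * p ∈ supportIdeal k R hR := by
  rw [p.as_sum, Finset.mul_sum]
  refine Ideal.sum_mem _ fun m hm => ?_
  rw [MvPolynomial.X, MvPolynomial.monomial_mul]
  exact monomial_mem_supportIdeal _ (support_single_add m v ▸ h _ (hp hm))

theorem mem_supportIdeal_of_X_mul_mem (h : ∀ s, Q (insert v s) → R s)
    (hp : MvPolynomial.X v * p ∈ supportIdeal k Q hQ) : p ∈ supportIdeal k R hR := by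
  rw [mem_supportIdeal] at hp ⊢
  intro m hm
  refine h _ ?_
  rw [← support_single_add]
  exact hp _ (by rwa [MvPolynomial.coeff_X_mul])

end SupportIdeal

theorem span_linForm_mul_supportIdeal_le {V ι k : Type*} [Fintype V] [CommRing k]
    {a : Matrix V ι k} {i : ι} {Q R : Finset V → Prop} {hQ : Monotone Q} {hR : Monotone R}
    (h : ∀ v s, a v i ≠ 0 → Q s → R (insert v s)) :
    Ideal.span {linForm a i} * supportIdeal k Q hQ ≤ supportIdeal k R hR := by
  rw [Ideal.span_singleton_mul_le_iff]
  intro p hp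
  rw [linForm_eq_sum, Finset.sum_mul]
  refine Ideal.sum_mem _ fun v _ => ?_
  by_cases hv : a v i = 0
  · rw [hv, map_zero, zero_mul, zero_mul]
    exact zero_mem _
  · rw [mul_assoc]
    exact Ideal.mul_mem_left _ _ (X_mul_mem_supportIdeal (fun s => h v s hv) hp)

/-- A simplicial complex on `V` with a monotone map assigning to every set of vertices its
carrier, a face of the simplex on `ι`. -/
structure CarrierComplex (V ι : Type*) where
  Face : Finset V → Prop
  carrier : Finset V → Finset ι
  face_of_subset : ∀ {s t}, s ⊆ t → Face t → Face s
  monotone_carrier : Monotone carrier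

namespace CarrierComplex

variable {V ι k : Type*} [CommRing k] {C : CarrierComplex V ι}

/-- The Stanley–Reisner ideal of the subcomplex of the faces carried by `W`. -/
def nonfaceIdeal (C : CarrierComplex V ι) (k : Type*) [CommRing k] (W : Finset ι) :
    Ideal (MvPolynomial V k) :=
  supportIdeal k (fun s => ¬(C.Face s ∧ C.carrier s ⊆ W)) fun _ _ h hs ht =>
    hs ⟨C.face_of_subset h ht.1, (C.monotone_carrier h).trans ht.2⟩

/-- The ideal whose quotient by `nonfaceIdeal k W` is the ideal of the face ring spanned by the
faces with carrier containing `Q`. -/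
def carrierIdeal (C : CarrierComplex V ι) (k : Type*) [CommRing k] (W Q : Finset ι) :
    Ideal (MvPolynomial V k) :=
  supportIdeal k (fun s => C.Face s → C.carrier s ⊆ W → Q ⊆ C.carrier s) fun _ _ h hs ht htW =>
    (hs (C.face_of_subset h ht) ((C.monotone_carrier h).trans htW)).trans (C.monotone_carrier h)

theorem nonfaceIdeal_le_carrierIdeal (W Q : Finset ι) :
    C.nonfaceIdeal k W ≤ C.carrierIdeal k W Q :=
  supportIdeal_mono fun _ h hs hW => absurd ⟨hs, hW⟩ h

theorem antitone_carrierIdeal (W : Finset ι) : Antitone (C.carrierIdeal k W) :=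
  fun _ _ h => supportIdeal_mono fun _ h' hs hW => h.trans (h' hs hW)

theorem carrierIdeal_sup_nonfaceIdeal (W Q : Finset ι) (i : ι) :
    C.carrierIdeal k W Q ⊔ C.nonfaceIdeal k (W.erase i) = C.carrierIdeal k (W.erase i) Q := by
  refine le_antisymm (sup_le ?_ (nonfaceIdeal_le_carrierIdeal _ _)) ?_
  · exact supportIdeal_mono fun _ h hs hW => h hs (hW.trans (Finset.erase_subset _ _))
  · refine supportIdeal_le_sup fun s h => ?_
    by_cases h' : C.Face s ∧ C.carrier s ⊆ W.erase i
    · exact Or.inl fun _ _ => h h'.1 h'.2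
    · exact Or.inr h'

theorem carrierIdeal_inf_nonfaceIdeal (W Q : Finset ι) (i : ι) :
    C.carrierIdeal k W Q ⊓ C.nonfaceIdeal k (W.erase i) = C.carrierIdeal k W (insert i Q) := by
  refine le_antisymm ?_ (le_inf (antitone_carrierIdeal _ (Finset.subset_insert _ _)) ?_)
  · rintro p ⟨hQ, hi⟩ m hm hface hW
    refine Finset.insert_subset ?_ (hQ hm hface hW)
    by_contra him
    exact hi hm ⟨hface, Finset.subset_erase.2 ⟨hW, him⟩⟩
  · refine supportIdeal_mono fun s h ⟨hs, hW⟩ => ?_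
    have hi := h hs (hW.trans (Finset.erase_subset _ _)) (Finset.mem_insert_self _ _)
    exact Finset.notMem_erase _ _ (hW hi)

theorem carrierIdeal_empty (W : Finset ι) : C.carrierIdeal k W ∅ = ⊤ :=
  eq_top_iff.2 fun _ _ _ _ _ _ => Finset.empty_subset _

theorem regOn_carrierIdeal {θ : ι → MvPolynomial V k}
    (hreg : ∀ W, RegOn θ ⊤ (C.nonfaceIdeal k W) W) (Q W : Finset ι) :
    RegOn θ (C.carrierIdeal k W Q) (C.nonfaceIdeal k W) (W \ Q) := by
  induction Q using Finset.induction_on generalizing W with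
  | empty => rw [carrierIdeal_empty, Finset.sdiff_empty]; exact hreg W
  | insert i Q _ ih =>
    have hsup := ih (W.erase i)
    rw [← carrierIdeal_sup_nonfaceIdeal] at hsup
    have hinf := hsup.of_sup
    rw [carrierIdeal_inf_nonfaceIdeal] at hinf
    refine RegOn.of_le ((ih W).subset ?_) (hinf.subset ?_) (nonfaceIdeal_le_carrierIdeal _ _)
      (antitone_carrierIdeal _ (Finset.subset_insert _ _))
    · exact Finset.sdiff_subset_sdiff le_rfl (Finset.subset_insert _ _)
    · rw [Finset.sdiff_insert, Finset.erase_sdiff_comm]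

/-- Multiplication by the linear form with coefficients `a v i` enlarges carriers by `i`. -/
def Compatible (C : CarrierComplex V ι) (a : Matrix V ι k) : Prop :=
  ∀ v i s, a v i ≠ 0 → i ∈ C.carrier (insert v s)

variable [Fintype V] [Fintype ι] {a : Matrix V ι k} {P Q : Finset ι} {p : ι}

theorem Compatible.span_linForm_mul_carrierIdeal_erase_le (ha : C.Compatible a) (Q : Finset ι)
    (p : ι) : Ideal.span {linForm a p} * C.carrierIdeal k Finset.univ (Q.erase p) ≤
      C.carrierIdeal k Finset.univ Q := by
  refine span_linForm_mul_supportIdeal_le fun v s hv h hface _ q hq => ?_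
  have hvs := Finset.subset_insert v s
  by_cases hqp : q = p
  · exact hqp ▸ ha v p s hv
  · exact C.monotone_carrier hvs (h (C.face_of_subset hvs hface) (Finset.subset_univ _)
      (Finset.mem_erase.2 ⟨hqp, hq⟩))

/-- The ideal of the relations of the local module with indices `Q` and `P`, which is the quotient
`carrierIdeal univ Q / relationIdeal a Q P`. For `Q = P = univ` this is the local face module:
its Hilbert series is the local `h`-polynomial. -/
def relationIdeal (C : CarrierComplex V ι) (a : Matrix V ι k) (Q P : Finset ι) :
    Ideal (MvPolynomial V k) :=
  relIdeal (linForm a) (C.carrierIdeal k Finset.univ) (C.nonfaceIdeal k Finset.univ) Q P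

theorem Compatible.relationIdeal_le (ha : C.Compatible a) (hPQ : P ⊆ Q) :
    C.relationIdeal a Q P ≤ C.carrierIdeal k Finset.univ Q :=
  relIdeal_le (nonfaceIdeal_le_carrierIdeal _)
    (fun Q p _ => ha.span_linForm_mul_carrierIdeal_erase_le Q p) hPQ

theorem Compatible.linForm_mul_mem_relationIdeal (ha : C.Compatible a) (hpQ : p ∈ Q) (hpP : p ∉ P)
    {f : MvPolynomial V k} (hf : f ∈ C.relationIdeal a (Q.erase p) P) :
    linForm a p * f ∈ C.relationIdeal a Q P :=
  span_mul_relIdeal_erase_le (fun Q p _ => ha.span_linForm_mul_carrierIdeal_erase_le Q p) hpQ hpP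
    (mul_mem_span_singleton_mul _ hf)

theorem Compatible.mem_relationIdeal_of_linForm_mul_mem (ha : C.Compatible a)
    (hreg : ∀ W, RegOn (linForm a) ⊤ (C.nonfaceIdeal k W) W) (hPQ : P ⊆ Q) (hpP : p ∉ P)
    {f : MvPolynomial V k} (hf : f ∈ C.carrierIdeal k Finset.univ (Q.erase p))
    (h : linForm a p * f ∈ C.relationIdeal a Q P) : f ∈ C.relationIdeal a (Q.erase p) P :=
  mem_relIdeal_erase_of_mul_mem (antitone_carrierIdeal _)
    (fun Q p _ => ha.span_linForm_mul_carrierIdeal_erase_le Q p)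
    (fun Q => by rw [Finset.compl_eq_univ_sdiff]; exact regOn_carrierIdeal hreg Q _) hPQ hpP hf h

theorem relationIdeal_empty (Q : Finset ι) :
    C.relationIdeal a Q ∅ = C.nonfaceIdeal k Finset.univ :=
  relIdeal_empty Q

theorem relationIdeal_insert (Q P : Finset ι) (p : ι) :
    C.relationIdeal a Q (insert p P) =
      C.relationIdeal a Q P ⊔
        Ideal.span {linForm a p} * C.carrierIdeal k Finset.univ (Q.erase p) :=
  relIdeal_insert Q P p

end CarrierComplex

/-! ### Hilbert series of local face modules -/

section HomogeneousIdeals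

attribute [local instance] MvPolynomial.gradedAlgebra

variable {V k : Type*} [Field k] {J M N : Ideal (MvPolynomial V k)} {θ : MvPolynomial V k} {d : ℕ}

theorem coe_decompose_homogeneousSubmodule (p : MvPolynomial V k) (d : ℕ) :
    (DirectSum.decompose (MvPolynomial.homogeneousSubmodule V k) p d : MvPolynomial V k) =
      MvPolynomial.homogeneousComponent d p :=
  MvPolynomial.decomposition.decompose'_apply p d

theorem homogeneousComponent_succ_mul (hθ : θ.IsHomogeneous 1) (p : MvPolynomial V k) (d : ℕ) :
    MvPolynomial.homogeneousComponent (d + 1) (θ * p) =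
      θ * MvPolynomial.homogeneousComponent d p := by
  rw [← coe_decompose_homogeneousSubmodule, ← coe_decompose_homogeneousSubmodule, add_comm]
  exact DirectSum.coe_decompose_mul_add_of_left_mem _ hθ

theorem homogeneousComponent_zero_mul (hθ : θ.IsHomogeneous 1) (p : MvPolynomial V k) :
    MvPolynomial.homogeneousComponent 0 (θ * p) = 0 := by
  rw [← coe_decompose_homogeneousSubmodule]
  exact DirectSum.coe_decompose_mul_of_left_mem_of_not_le _ hθ Nat.one_pos.not_ge

theorem isHomogeneous_supportIdeal {Q : Finset V → Prop} {hQ : Monotone Q} :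
    (supportIdeal k Q hQ).IsHomogeneous (MvPolynomial.homogeneousSubmodule V k) := by
  intro d p hp
  rw [coe_decompose_homogeneousSubmodule]
  intro m (hm : m ∈ (MvPolynomial.homogeneousComponent d p).support)
  rw [MvPolynomial.support_homogeneousComponent] at hm
  exact hp (Finset.mem_filter.1 hm).1

/-- The degree `d` part of an ideal. -/
def degreePart (I : Ideal (MvPolynomial V k)) (d : ℕ) : Submodule k (MvPolynomial V k) :=
  I.restrictScalars k ⊓ MvPolynomial.homogeneousSubmodule V k d

theorem degreePart_mono (h : M ≤ J) (d : ℕ) : degreePart M d ≤ degreePart J d :=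
  fun _ hp => ⟨h hp.1, hp.2⟩

instance [Finite V] (I : Ideal (MvPolynomial V k)) (d : ℕ) : Module.Finite k (degreePart I d) :=
  have : Module.Finite k (MvPolynomial.homogeneousSubmodule V k d) :=
    Module.Finite.iff_fg.2 (MvPolynomial.homogeneousSubmodule_fg V k d)
  Submodule.finiteDimensional_of_le inf_le_right

theorem degreePart_succ_sup_span_mul
    (hN : N.IsHomogeneous (MvPolynomial.homogeneousSubmodule V k))
    (hJ : J.IsHomogeneous (MvPolynomial.homogeneousSubmodule V k)) (hθ : θ.IsHomogeneous 1) :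
    degreePart (N ⊔ Ideal.span {θ} * J) (d + 1) =
      degreePart N (d + 1) ⊔ (degreePart J d).map (LinearMap.mulLeft k θ) := by
  apply le_antisymm
  · rintro p ⟨hp, hpd⟩
    obtain ⟨x, hx, z, hz, rfl⟩ := Submodule.mem_sup.1 hp
    obtain ⟨y, hy, rfl⟩ := Ideal.mem_span_singleton_mul.1 hz
    rw [← MvPolynomial.homogeneousComponent_eq_self hpd, map_add, homogeneousComponent_succ_mul hθ]
    exact Submodule.add_mem_sup
      ⟨MvPolynomial.homogeneousComponent_mem_of_mem hN hx _,
        MvPolynomial.homogeneousComponent_isHomogeneous _ _⟩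
      ⟨_, ⟨MvPolynomial.homogeneousComponent_mem_of_mem hJ hy _,
        MvPolynomial.homogeneousComponent_isHomogeneous _ _⟩, rfl⟩
  · refine sup_le (degreePart_mono le_sup_left _) ?_
    rintro _ ⟨y, hy, rfl⟩
    exact ⟨Ideal.mem_sup_right (mul_mem_span_singleton_mul θ hy.1), add_comm 1 d ▸ hθ.mul hy.2⟩

theorem degreePart_zero_sup_span_mul
    (hN : N.IsHomogeneous (MvPolynomial.homogeneousSubmodule V k)) (hθ : θ.IsHomogeneous 1) :
    degreePart (N ⊔ Ideal.span {θ} * J) 0 = degreePart N 0 := by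
  refine le_antisymm ?_ (degreePart_mono le_sup_left _)
  rintro p ⟨hp, hpd⟩
  obtain ⟨x, hx, z, hz, rfl⟩ := Submodule.mem_sup.1 hp
  obtain ⟨y, -, rfl⟩ := Ideal.mem_span_singleton_mul.1 hz
  refine ⟨?_, hpd⟩
  rw [← MvPolynomial.homogeneousComponent_eq_self hpd, map_add, homogeneousComponent_zero_mul hθ,
    add_zero]
  exact MvPolynomial.homogeneousComponent_mem_of_mem hN hx _

theorem finrank_degreePart_succ_sup_span_mul [Finite V]
    (hN : N.IsHomogeneous (MvPolynomial.homogeneousSubmodule V k))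
    (hJ : J.IsHomogeneous (MvPolynomial.homogeneousSubmodule V k)) (hMJ : M ≤ J)
    (hθ : θ.IsHomogeneous 1) (h : ∀ f ∈ J, θ * f ∈ N ↔ f ∈ M) :
    Module.finrank k (degreePart (N ⊔ Ideal.span {θ} * J) (d + 1)) +
        Module.finrank k (degreePart M d) =
      Module.finrank k (degreePart N (d + 1)) + Module.finrank k (degreePart J d) := by
  rcases eq_or_ne θ 0 with rfl | h0
  · obtain rfl : M = J := le_antisymm hMJ fun f hf => (h f hf).1 (by simp)
    rw [Ideal.span_singleton_zero, Ideal.bot_mul, sup_bot_eq]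
  have hmap (K : Submodule k (MvPolynomial V k)) :
      Module.finrank k (K.map (LinearMap.mulLeft k θ)) = Module.finrank k K :=
    (Submodule.equivMapOfInjective _ (mul_right_injective₀ h0) K).finrank_eq.symm
  have hinf : degreePart N (d + 1) ⊓ (degreePart J d).map (LinearMap.mulLeft k θ) =
      (degreePart M d).map (LinearMap.mulLeft k θ) := by
    apply le_antisymm
    · rintro _ ⟨hp, y, hy, rfl⟩
      exact ⟨y, ⟨(h y hy.1).1 hp.1, hy.2⟩, rfl⟩
    · rintro _ ⟨y, hy, rfl⟩
      exact ⟨⟨(h y (hMJ hy.1)).2 hy.1, add_comm 1 d ▸ hθ.mul hy.2⟩, y, ⟨hMJ hy.1, hy.2⟩, rfl⟩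
  have hdim := Submodule.finrank_sup_add_finrank_inf_eq (degreePart N (d + 1))
    ((degreePart J d).map (LinearMap.mulLeft k θ))
  rwa [← degreePart_succ_sup_span_mul hN hJ hθ, hinf, hmap, hmap] at hdim

/-- The Hilbert series of an ideal of a polynomial ring. -/
def idealSeries (I : Ideal (MvPolynomial V k)) : PowerSeries ℤ :=
  PowerSeries.mk fun d => (Module.finrank k (degreePart I d) : ℤ)

theorem idealSeries_sup_span_mul [Finite V]
    (hN : N.IsHomogeneous (MvPolynomial.homogeneousSubmodule V k))
    (hJ : J.IsHomogeneous (MvPolynomial.homogeneousSubmodule V k)) (hMJ : M ≤ J)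
    (hθ : θ.IsHomogeneous 1) (h : ∀ f ∈ J, θ * f ∈ N ↔ f ∈ M) :
    idealSeries (N ⊔ Ideal.span {θ} * J) + PowerSeries.X * idealSeries M =
      idealSeries N + PowerSeries.X * idealSeries J := by
  ext d
  rcases d with _ | d
  · simp only [idealSeries, map_add, PowerSeries.coeff_mk, PowerSeries.coeff_zero_X_mul]
    rw [degreePart_zero_sup_span_mul hN hθ]
  · simp only [idealSeries, map_add, PowerSeries.coeff_mk, PowerSeries.coeff_succ_X_mul]
    exact_mod_cast finrank_degreePart_succ_sup_span_mul hN hJ hMJ hθ h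

theorem degreePart_eq_of_coeff_idealSeries_eq [Finite V] (hMJ : M ≤ J)
    (h : PowerSeries.coeff d (idealSeries M) = PowerSeries.coeff d (idealSeries J)) :
    degreePart M d = degreePart J d := by
  simp only [idealSeries, PowerSeries.coeff_mk, Nat.cast_inj] at h
  exact Submodule.eq_of_le_of_finrank_eq (degreePart_mono hMJ d) h

variable [Fintype V]

theorem degreePart_supportIdeal {Q : Finset V → Prop} {hQ : Monotone Q} :
    degreePart (supportIdeal k Q hQ) d = MvPolynomial.restrictSupport k
      ({m ∈ Finset.finsuppAntidiag (Finset.univ : Finset V) d | Q m.support} :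
        Finset (V →₀ ℕ)) := by
  ext p
  simp only [MvPolynomial.mem_restrictSupport_iff, Finset.coe_filter, Finset.mem_finsuppAntidiag,
    ← Finsupp.degree_eq_sum, Finset.subset_univ, and_true]
  constructor
  · rintro ⟨hp, hpd⟩ m hm
    exact ⟨by_contra fun h => MvPolynomial.mem_support_iff.1 hm (hpd.coeff_eq_zero h), hp hm⟩
  · refine fun hp => ⟨fun m hm => (hp hm).2, fun m hm => ?_⟩
    have hmd := (hp (MvPolynomial.mem_support_iff.2 hm)).1
    rwa [Finsupp.degree_eq_weight_one] at hmd

theorem coeff_X_mul_mk_one_pow_card (s : Finset V) (d : ℕ) :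
    PowerSeries.coeff d (((PowerSeries.X : PowerSeries ℤ) * PowerSeries.mk 1) ^ s.card) =
      (Finset.card
        {m ∈ Finset.finsuppAntidiag (Finset.univ : Finset V) d | m.support = s} : ℤ) := by
  have hcoeff (j : ℕ) : PowerSeries.coeff j ((PowerSeries.X : PowerSeries ℤ) * PowerSeries.mk 1) =
      if j ≠ 0 then 1 else 0 := by
    rcases j with _ | j <;> simp [PowerSeries.coeff_succ_X_mul]
  have hprod (m : V →₀ ℕ) :
      ∏ i ∈ s, (if m i ≠ 0 then 1 else 0 : ℤ) = if s ⊆ m.support then 1 else 0 := by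
    rw [Finset.prod_boole]
    congr 1
    simp only [Finset.subset_iff, Finsupp.mem_support_iff]
  rw [← Finset.prod_const, PowerSeries.coeff_prod]
  simp only [hcoeff, hprod, Finset.sum_boole]
  congr 2
  ext m
  simp only [Finset.mem_filter, Finset.mem_finsuppAntidiag', Finset.subset_univ, and_true]
  exact ⟨fun h => ⟨h.1.1, h.1.2.antisymm h.2⟩, fun h => ⟨⟨h.1, h.2.le⟩, h.2.ge⟩⟩

theorem idealSeries_supportIdeal {Q : Finset V → Prop} {hQ : Monotone Q} :
    idealSeries (supportIdeal k Q hQ) =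
      ∑ s with Q s, ((PowerSeries.X : PowerSeries ℤ) * PowerSeries.mk 1) ^ s.card := by
  ext d
  simp only [idealSeries, PowerSeries.coeff_mk, map_sum, coeff_X_mul_mk_one_pow_card]
  rw [degreePart_supportIdeal,
    Module.finrank_eq_nat_card_basis (MvPolynomial.basisRestrictSupport k _),
    Nat.card_coe_set_eq, Set.ncard_coe_finset,
    Finset.card_eq_sum_card_fiberwise (f := Finsupp.support) (t := {s | Q s}), Nat.cast_sum]
  · refine Finset.sum_congr rfl fun s hs => ?_
    rw [Finset.filter_filter]
    congr 2
    ext m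
    simp only [Finset.mem_filter] at hs ⊢
    exact ⟨fun h => ⟨h.1, h.2.2⟩, fun h => ⟨h.1, h.2 ▸ hs.2, h.2⟩⟩
  · exact fun m hm => by simpa using (Finset.mem_filter.1 hm).2

end HomogeneousIdeals

theorem sum_neg_pow_card_compl_subset {ι R : Type*} [Fintype ι] [CommRing R] (x : R)
    (s : Finset ι) :
    ∑ T : Finset ι with Tᶜ ⊆ s, (-x) ^ T.card =
      (-x) ^ (Fintype.card ι - s.card) * (1 - x) ^ s.card := by
  have h := Fintype.prod_add (fun _ : ι => -x) fun i => if i ∈ s then 1 else 0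
  have hprod : ∏ i, (-x + if i ∈ s then 1 else 0) =
      (-x) ^ (Fintype.card ι - s.card) * (1 - x) ^ s.card := by
    rw [← Finset.prod_mul_prod_compl s, mul_comm, ← Finset.card_compl]
    congr 1
    · exact Finset.prod_eq_pow_card fun i hi => by simp [Finset.mem_compl.1 hi]
    · exact Finset.prod_eq_pow_card fun i hi => by simp [hi, sub_eq_neg_add]
  rw [← hprod, h, Finset.sum_filter]
  refine Finset.sum_congr rfl fun T _ => ?_
  rw [Finset.prod_const, Finset.prod_boole]
  simp [Finset.subset_iff]

namespace CarrierComplex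

attribute [local instance] MvPolynomial.gradedAlgebra

variable {V ι k : Type*} [Fintype V] [Fintype ι] [Field k] {C : CarrierComplex V ι}
  {a : Matrix V ι k} {P Q : Finset ι} {p : ι}

theorem isHomogeneous_relationIdeal (Q P : Finset ι) :
    (C.relationIdeal a Q P).IsHomogeneous (MvPolynomial.homogeneousSubmodule V k) := by
  induction P using Finset.induction_on with
  | empty =>
    rw [relationIdeal_empty]
    exact isHomogeneous_supportIdeal
  | insert p P _ ih =>
    have hθ : (Ideal.span {linForm a p}).IsHomogeneous (MvPolynomial.homogeneousSubmodule V k) :=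
      Ideal.homogeneous_span _ _ fun _ h => ⟨1, h ▸ isHomogeneous_linForm a p⟩
    rw [relationIdeal_insert]
    exact ih.sup (hθ.mul isHomogeneous_supportIdeal)

/-- The Hilbert series of the local module `carrierIdeal univ Q / relationIdeal a Q P`. -/
def localSeries (C : CarrierComplex V ι) (a : Matrix V ι k) (Q P : Finset ι) : PowerSeries ℤ :=
  idealSeries (C.carrierIdeal k Finset.univ Q) - idealSeries (C.relationIdeal a Q P)

theorem localSeries_insert (ha : C.Compatible a)
    (hreg : ∀ W, RegOn (linForm a) ⊤ (C.nonfaceIdeal k W) W) (hPQ : P ⊆ Q) (hpQ : p ∈ Q)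
    (hpP : p ∉ P) :
    C.localSeries a Q (insert p P) =
      C.localSeries a Q P - PowerSeries.X * C.localSeries a (Q.erase p) P := by
  have hJ : (C.carrierIdeal k Finset.univ (Q.erase p)).IsHomogeneous
      (MvPolynomial.homogeneousSubmodule V k) := isHomogeneous_supportIdeal
  have h := idealSeries_sup_span_mul (isHomogeneous_relationIdeal (C := C) (a := a) Q P) hJ
    (ha.relationIdeal_le (Finset.subset_erase.2 ⟨hPQ, hpP⟩)) (isHomogeneous_linForm a p)
    fun f hf => ⟨ha.mem_relationIdeal_of_linForm_mul_mem hreg hPQ hpP hf,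
      ha.linForm_mul_mem_relationIdeal hpQ hpP⟩
  simp only [localSeries, relationIdeal_insert]
  linear_combination -h

theorem localSeries_eq_sum (ha : C.Compatible a)
    (hreg : ∀ W, RegOn (linForm a) ⊤ (C.nonfaceIdeal k W) W) (hPQ : P ⊆ Q) :
    C.localSeries a Q P =
      ∑ T ∈ P.powerset, (-PowerSeries.X) ^ T.card * C.localSeries a (Q \ T) ∅ := by
  induction P using Finset.induction_on generalizing Q with
  | empty => simp
  | insert p P hp ih =>
    obtain ⟨hpQ, hPQ'⟩ := Finset.insert_subset_iff.1 hPQ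
    rw [localSeries_insert ha hreg hPQ' hpQ hp, ih hPQ', ih (Finset.subset_erase.2 ⟨hPQ', hp⟩),
      Finset.sum_powerset_insert hp, sub_eq_add_neg, Finset.mul_sum, ← Finset.sum_neg_distrib]
    congr 1
    refine Finset.sum_congr rfl fun T hT => ?_
    rw [Finset.card_insert_of_notMem fun h => hp (Finset.mem_powerset.1 hT h), pow_succ,
      Finset.sdiff_insert, Finset.erase_sdiff_comm]
    ring

theorem localSeries_empty (Q : Finset ι) :
    C.localSeries a Q ∅ = ∑ s with C.Face s ∧ Q ⊆ C.carrier s,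
      ((PowerSeries.X : PowerSeries ℤ) * PowerSeries.mk 1) ^ s.card := by
  have hcarrier : idealSeries (C.carrierIdeal k Finset.univ Q) =
      ∑ s with C.Face s → C.carrier s ⊆ Finset.univ → Q ⊆ C.carrier s,
        (PowerSeries.X * PowerSeries.mk 1) ^ s.card :=
    idealSeries_supportIdeal.trans (by congr)
  have hnonface : idealSeries (C.nonfaceIdeal k Finset.univ) =
      ∑ s with ¬(C.Face s ∧ C.carrier s ⊆ Finset.univ),
        (PowerSeries.X * PowerSeries.mk 1) ^ s.card :=
    idealSeries_supportIdeal.trans (by congr)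
  rw [localSeries, relationIdeal_empty, hcarrier, hnonface, sub_eq_iff_eq_add, ← Finset.sum_union]
  · refine Finset.sum_congr ?_ fun _ _ => rfl
    ext s
    simp only [Finset.mem_filter, Finset.mem_union, Finset.subset_univ, Finset.mem_univ]
    tauto
  · rw [Finset.disjoint_filter]
    exact fun s _ hs h => h ⟨hs.1, Finset.subset_univ _⟩

theorem localSeries_univ (ha : C.Compatible a)
    (hreg : ∀ W, RegOn (linForm a) ⊤ (C.nonfaceIdeal k W) W) :
    C.localSeries a Finset.univ Finset.univ = ∑ s with C.Face s,
      ((PowerSeries.X : PowerSeries ℤ) * PowerSeries.mk 1) ^ s.card *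
        ((-PowerSeries.X) ^ (Fintype.card ι - (C.carrier s).card) *
          (1 - PowerSeries.X) ^ (C.carrier s).card) := by
  rw [localSeries_eq_sum ha hreg subset_rfl, Finset.powerset_univ]
  simp only [localSeries_empty, Finset.mul_sum, ← sum_neg_pow_card_compl_subset,
    ← Finset.compl_eq_univ_sdiff]
  rw [Finset.sum_comm' (t' := {s | C.Face s}) (s' := fun s => {T | Tᶜ ⊆ C.carrier s})]
  · exact Finset.sum_congr rfl fun s _ => Finset.sum_congr rfl fun T _ => mul_comm _ _
  · simp [and_comm]

theorem mem_relationIdeal_of_coeff_localSeries_eq_zero (ha : C.Compatible a) {d : ℕ}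
    (h : PowerSeries.coeff d (C.localSeries a Finset.univ Finset.univ) = 0)
    {f : MvPolynomial V k} (hf : f ∈ C.carrierIdeal k Finset.univ Finset.univ)
    (hd : f.IsHomogeneous d) : f ∈ C.relationIdeal a Finset.univ Finset.univ := by
  rw [localSeries, map_sub, sub_eq_zero] at h
  have hdeg := degreePart_eq_of_coeff_idealSeries_eq (ha.relationIdeal_le subset_rfl) h.symm
  have hfd : f ∈ degreePart (C.carrierIdeal k Finset.univ Finset.univ) d := ⟨hf, hd⟩
  rw [← hdeg] at hfd
  exact hfd.1

end CarrierComplex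

/-! ### Stars in labelled complexes -/

/-- The exponent of the square-free monomial supported on `s`. -/
def squarefreeExponent {V : Type*} (s : Finset V) : V →₀ ℕ := ∑ v ∈ s, Finsupp.single v 1

section SquarefreeExponent

variable {V : Type*}

theorem squarefreeExponent_apply (s : Finset V) (v : V) :
    squarefreeExponent s v = if v ∈ s then 1 else 0 := by
  simp [squarefreeExponent, Finsupp.finsetSum_apply, Finsupp.single_apply]

theorem support_squarefreeExponent (s : Finset V) : (squarefreeExponent s).support = s := by
  ext v
  simp [squarefreeExponent_apply]

theorem support_squarefreeExponent_tsub (s : Finset V) (v : V) :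
    (squarefreeExponent s - Finsupp.single v 1).support = s.erase v := by
  ext w
  rcases eq_or_ne w v with rfl | hw
  · by_cases h : w ∈ s <;> simp [squarefreeExponent_apply, h]
  · simp [squarefreeExponent_apply, hw]

theorem prod_X_eq_monomial_squarefreeExponent {k : Type*} [CommSemiring k] (s : Finset V) :
    ∏ v ∈ s, MvPolynomial.X v =
      (MvPolynomial.monomial (squarefreeExponent s) 1 : MvPolynomial V k) := by
  rw [squarefreeExponent, MvPolynomial.monomial_sum_one]
  rfl

end SquarefreeExponent

/-- A simplicial complex on `V` whose vertices are labelled by faces of the simplex on `ι`. -/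
structure LabelledComplex (V ι : Type*) where
  Face : Finset V → Prop
  label : V → Finset ι
  face_of_subset : ∀ {s t}, s ⊆ t → Face t → Face s

namespace LabelledComplex

section Star

variable {V ι k : Type*} (K : LabelledComplex V ι)

/-- The union of the labels of a set of vertices. -/
def labels (s : Finset V) : Finset ι := s.biUnion K.label

theorem monotone_labels : Monotone K.labels :=
  fun _ _ h => Finset.biUnion_subset_biUnion_of_subset_left _ h

/-- The closed star of `E`, with the labels of `E` added to all carriers. -/
def star (E : Finset V) : CarrierComplex V ι where
  Face G := K.Face (G ∪ E)
  carrier G := K.labels (G ∪ E)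
  face_of_subset h := K.face_of_subset (Finset.union_subset_union_left h)
  monotone_carrier _ _ h := K.monotone_labels (Finset.union_subset_union_left h)

/-- The subcomplex of `K.star E` of the faces not containing `v`. -/
def starDeletion (E : Finset V) (v : V) : CarrierComplex V ι where
  Face G := K.Face (G ∪ E) ∧ v ∉ G
  carrier G := K.labels (G ∪ E)
  face_of_subset h h' :=
    ⟨K.face_of_subset (Finset.union_subset_union_left h) h'.1, fun hv => h'.2 (h hv)⟩
  monotone_carrier _ _ h := K.monotone_labels (Finset.union_subset_union_left h)

variable {K}

variable [CommRing k] {a : Matrix V ι k} {E : Finset V} {v : V} {f : MvPolynomial V k}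

theorem compatible_star (ha : ∀ v i, a v i ≠ 0 → i ∈ K.label v) (E : Finset V) :
    (K.star E).Compatible a :=
  fun v i _ h => Finset.mem_biUnion.2 ⟨v, by simp, ha v i h⟩

theorem compatible_starDeletion (ha : ∀ v i, a v i ≠ 0 → i ∈ K.label v) (E : Finset V) (w : V) :
    (K.starDeletion E w).Compatible a :=
  fun v i _ h => Finset.mem_biUnion.2 ⟨v, by simp, ha v i h⟩

theorem X_mem_nonfaceIdeal_starDeletion (E : Finset V) (v : V) (W : Finset ι) :
    MvPolynomial.X v ∈ (K.starDeletion E v).nonfaceIdeal k W :=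
  monomial_mem_supportIdeal _ fun h => h.1.2 (by simp)

theorem nonfaceIdeal_star_le_starDeletion (E : Finset V) (v : V) (W : Finset ι) :
    (K.star E).nonfaceIdeal k W ≤ (K.starDeletion E v).nonfaceIdeal k W :=
  supportIdeal_mono fun _ h h' => h ⟨h'.1.1, h'.2⟩

theorem nonfaceIdeal_starDeletion_le (E : Finset V) (v : V) (W : Finset ι) :
    (K.starDeletion E v).nonfaceIdeal k W ≤
      (K.star E).nonfaceIdeal k W ⊔ Ideal.span {MvPolynomial.X v} :=
  supportIdeal_le_sup_span_X fun _ hv h h' => h ⟨⟨h'.1, hv⟩, h'.2⟩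

theorem carrierIdeal_star_le_starDeletion (E : Finset V) (v : V) (W Q : Finset ι) :
    (K.star E).carrierIdeal k W Q ≤ (K.starDeletion E v).carrierIdeal k W Q :=
  supportIdeal_mono fun _ h hs => h hs.1

theorem carrierIdeal_starDeletion_le (E : Finset V) (v : V) (W Q : Finset ι) :
    (K.starDeletion E v).carrierIdeal k W Q ≤
      (K.star E).carrierIdeal k W Q ⊔ Ideal.span {MvPolynomial.X v} :=
  supportIdeal_le_sup_span_X fun _ hv h hs => h ⟨hs, hv⟩

theorem carrierIdeal_star_mono [Fintype ι] {E' : Finset V} (h : E ⊆ E') (Q : Finset ι) :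
    (K.star E).carrierIdeal k Finset.univ Q ≤ (K.star E').carrierIdeal k Finset.univ Q :=
  supportIdeal_mono fun _ hs hface _ =>
    have hu := Finset.union_subset_union_right h
    (hs (K.face_of_subset hu hface) (Finset.subset_univ _)).trans (K.monotone_labels hu)

theorem nonfaceIdeal_star_mono {E' : Finset V} (h : E ⊆ E') (W : Finset ι) :
    (K.star E).nonfaceIdeal k W ≤ (K.star E').nonfaceIdeal k W :=
  supportIdeal_mono fun _ hs hface =>
    have hu := Finset.union_subset_union_right h
    hs ⟨K.face_of_subset hu hface.1, (K.monotone_labels hu).trans hface.2⟩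

theorem mem_carrierIdeal_star_insert {W Q : Finset ι}
    (h : MvPolynomial.X v * f ∈ (K.star E).carrierIdeal k W Q) :
    f ∈ (K.star (insert v E)).carrierIdeal k W Q := by
  refine mem_supportIdeal_of_X_mul_mem (fun s hs => ?_) h
  simpa only [star, Finset.union_insert, Finset.insert_union] using hs

variable [Fintype V] [Fintype ι]

theorem X_mem_relationIdeal_starDeletion (E : Finset V) (v : V) (Q P : Finset ι) :
    MvPolynomial.X v ∈ (K.starDeletion E v).relationIdeal a Q P :=
  Ideal.mem_sup_left (X_mem_nonfaceIdeal_starDeletion E v _)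

theorem relationIdeal_star_le_starDeletion (E : Finset V) (v : V) (Q P : Finset ι) :
    (K.star E).relationIdeal a Q P ≤ (K.starDeletion E v).relationIdeal a Q P :=
  relIdeal_mono (carrierIdeal_star_le_starDeletion E v _)
    (nonfaceIdeal_star_le_starDeletion E v _) Q P

theorem relationIdeal_star_mono {E' : Finset V} (h : E ⊆ E') (Q P : Finset ι) :
    (K.star E).relationIdeal a Q P ≤ (K.star E').relationIdeal a Q P :=
  relIdeal_mono (carrierIdeal_star_mono h) (nonfaceIdeal_star_mono h _) Q P

theorem relationIdeal_starDeletion_le (E : Finset V) (v : V) (Q P : Finset ι) :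
    (K.starDeletion E v).relationIdeal a Q P ≤
      (K.star E).relationIdeal a Q P ⊔ Ideal.span {MvPolynomial.X v} := by
  induction P using Finset.induction_on with
  | empty =>
    rw [CarrierComplex.relationIdeal_empty, CarrierComplex.relationIdeal_empty]
    exact nonfaceIdeal_starDeletion_le E v _
  | insert p P _ ih =>
    rw [CarrierComplex.relationIdeal_insert, CarrierComplex.relationIdeal_insert]
    refine sup_le (ih.trans (sup_le_sup_right le_sup_left _)) ?_
    refine (Ideal.mul_mono_right (carrierIdeal_starDeletion_le E v _ _)).trans ?_
    rw [Ideal.mul_sup]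
    exact sup_le (le_sup_of_le_left le_sup_right) (le_sup_of_le_right Ideal.mul_le_right)

theorem exists_add_X_mul_eq_of_X_dvd (ha : ∀ v i, a v i ≠ 0 → i ∈ K.label v)
    (hreg : ∀ W, RegOn (linForm a) ⊤ ((K.starDeletion E v).nonfaceIdeal k W) W)
    {P Q : Finset ι} {p : ι} (hPQ : P ⊆ Q) (hpP : p ∉ P) {g m : MvPolynomial V k}
    (hg : g ∈ (K.star E).carrierIdeal k Finset.univ (Q.erase p))
    (hm : m ∈ (K.star E).relationIdeal a Q P)
    (hdvd : MvPolynomial.X v ∣ m + linForm a p * g) :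
    ∃ g' ∈ (K.star E).relationIdeal a (Q.erase p) P,
      ∃ u ∈ (K.star (insert v E)).carrierIdeal k Finset.univ (Q.erase p),
        g' + MvPolynomial.X v * u = g := by
  have hX : m + linForm a p * g ∈ (K.starDeletion E v).relationIdeal a Q P :=
    Ideal.mem_of_dvd _ hdvd (X_mem_relationIdeal_starDeletion E v Q P)
  have hθg := (Ideal.add_mem_iff_right _ (relationIdeal_star_le_starDeletion E v Q P hm)).1 hX
  have hg' := (compatible_starDeletion ha E v).mem_relationIdeal_of_linForm_mul_mem hreg hPQ hpP
    (carrierIdeal_star_le_starDeletion E v _ _ hg) hθg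
  obtain ⟨r, hr, z, hz, rfl⟩ :=
    Submodule.mem_sup.1 (relationIdeal_starDeletion_le E v _ _ hg')
  obtain ⟨u, rfl⟩ := Ideal.mem_span_singleton.1 hz
  have hrQ := (compatible_star ha E).relationIdeal_le (Finset.subset_erase.2 ⟨hPQ, hpP⟩) hr
  have hXu := (Ideal.add_mem_iff_right _ hrQ).1 hg
  exact ⟨r, hr, u, mem_carrierIdeal_star_insert hXu, rfl⟩

theorem mem_relationIdeal_star_insert (ha : ∀ v i, a v i ≠ 0 → i ∈ K.label v)
    (hreg : ∀ W, RegOn (linForm a) ⊤ ((K.starDeletion E v).nonfaceIdeal k W) W)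
    {P Q : Finset ι} (hPQ : P ⊆ Q)
    (hf : f ∈ (K.star (insert v E)).carrierIdeal k Finset.univ Q)
    (h : MvPolynomial.X v * f ∈ (K.star E).relationIdeal a Q P) :
    f ∈ (K.star (insert v E)).relationIdeal a Q P := by
  induction P using Finset.induction_on generalizing f with
  | empty =>
    rw [CarrierComplex.relationIdeal_empty] at h ⊢
    refine mem_supportIdeal_of_X_mul_mem (fun s hs hface => hs ?_) h
    simpa only [star, Finset.union_insert, Finset.insert_union] using hface
  | insert p P hp ih =>
    obtain ⟨hpQ, hPQ'⟩ := Finset.insert_subset_iff.1 hPQ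
    rw [CarrierComplex.relationIdeal_insert] at h ⊢
    obtain ⟨m, hm, y, hy, hmy⟩ := Submodule.mem_sup.1 h
    obtain ⟨g, hg, rfl⟩ := Ideal.mem_span_singleton_mul.1 hy
    obtain ⟨g', hg', u, hu, rfl⟩ := exists_add_X_mul_eq_of_X_dvd ha hreg hPQ' hp hg hm
      (hmy ▸ dvd_mul_right _ _)
    have hθu := mul_mem_span_singleton_mul (linForm a p) hu
    have hrest : f - linForm a p * u ∈ (K.star (insert v E)).relationIdeal a Q P := by
      refine ih hPQ' (Ideal.sub_mem _ hf
        ((compatible_star ha _).span_linForm_mul_carrierIdeal_erase_le Q p hθu)) ?_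
      have hsplit : MvPolynomial.X v * (f - linForm a p * u) = m + linForm a p * g' := by
        linear_combination -hmy
      rw [hsplit]
      exact Ideal.add_mem _ hm ((compatible_star ha E).linForm_mul_mem_relationIdeal hpQ hp hg')
    rw [← sub_add_cancel f (linForm a p * u)]
    exact Submodule.add_mem_sup hrest hθu

theorem mem_relationIdeal_star_union (ha : ∀ v i, a v i ≠ 0 → i ∈ K.label v)
    (hreg : ∀ E v, v ∉ E → K.label v ⊆ K.labels E →
      ∀ W, RegOn (linForm a) ⊤ ((K.starDeletion E v).nonfaceIdeal k W) W)
    {B : Finset V} (hd : Disjoint B E) (hl : ∀ v ∈ B, K.label v ⊆ K.labels E)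
    {P Q : Finset ι} (hPQ : P ⊆ Q)
    (hf : f ∈ (K.star (B ∪ E)).carrierIdeal k Finset.univ Q)
    (h : (∏ v ∈ B, MvPolynomial.X v) * f ∈ (K.star E).relationIdeal a Q P) :
    f ∈ (K.star (B ∪ E)).relationIdeal a Q P := by
  induction B using Finset.induction_on generalizing f with
  | empty => simpa using h
  | insert v B hv ih =>
    rw [Finset.disjoint_insert_left] at hd
    rw [Finset.prod_insert hv, mul_comm (MvPolynomial.X v), mul_assoc] at h
    rw [Finset.insert_union] at hf ⊢
    have hvE : v ∉ B ∪ E := by simp [hv, hd.1]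
    have hlv : K.label v ⊆ K.labels (B ∪ E) :=
      (hl v (Finset.mem_insert_self v B)).trans (K.monotone_labels Finset.subset_union_right)
    refine mem_relationIdeal_star_insert ha (hreg _ _ hvE hlv) hPQ hf
      (ih hd.2 (fun w hw => hl w (Finset.mem_insert_of_mem hw)) ?_ h)
    refine X_mul_mem_supportIdeal (fun s hs => ?_) hf
    simpa only [star, Finset.union_insert, Finset.insert_union] using hs

theorem coeff_squarefreeExponent_eq_zero {B : Finset V} (hB : K.Face (B ∪ E))
    (hapex : ∀ v ∈ B, ∀ p, ∃ q, q ≠ p ∧ q ∉ K.labels (B.erase v ∪ E)) {P : Finset ι}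
    (hf : f ∈ (K.star E).relationIdeal a Finset.univ P) :
    f.coeff (squarefreeExponent B) = 0 := by
  induction P using Finset.induction_on generalizing f with
  | empty =>
    rw [CarrierComplex.relationIdeal_empty] at hf
    by_contra hne
    refine hf (MvPolynomial.mem_support_iff.2 hne) ⟨?_, Finset.subset_univ _⟩
    rwa [support_squarefreeExponent]
  | insert p P _ ih =>
    rw [CarrierComplex.relationIdeal_insert] at hf
    obtain ⟨x, hx, y, hy, rfl⟩ := Submodule.mem_sup.1 hf
    obtain ⟨g, hg, rfl⟩ := Ideal.mem_span_singleton_mul.1 hy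
    rw [MvPolynomial.coeff_add, ih hx, zero_add, linForm_eq_sum, Finset.sum_mul,
      MvPolynomial.coeff_sum]
    refine Finset.sum_eq_zero fun v _ => ?_
    rw [mul_assoc, MvPolynomial.coeff_C_mul, MvPolynomial.coeff_X_mul', support_squarefreeExponent]
    split_ifs with hv
    · obtain ⟨q, hqp, hq⟩ := hapex v hv p
      refine mul_eq_zero_of_right _ (of_not_not fun hne => hq ?_)
      have hgB := mem_supportIdeal.1 hg _ hne
      rw [support_squarefreeExponent_tsub] at hgB
      exact hgB (K.face_of_subset (Finset.union_subset_union_left (Finset.erase_subset _ _)) hB)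
        (Finset.subset_univ _) (Finset.mem_erase.2 ⟨hqp, Finset.mem_univ _⟩)
    · exact mul_zero _

end Star

theorem coeff_localSeries_star_ne_zero {V ι k : Type*} [Fintype V] [Fintype ι] [Field k]
    {K : LabelledComplex V ι} {a : Matrix V ι k} (ha : ∀ v i, a v i ≠ 0 → i ∈ K.label v)
    (hreg : ∀ E v, v ∉ E → K.label v ⊆ K.labels E →
      ∀ W, RegOn (linForm a) ⊤ ((K.starDeletion E v).nonfaceIdeal k W) W)
    {E F₁ F₂ B : Finset V} (hface : K.Face (F₁ ∪ F₂ ∪ B ∪ E)) (hF₁ : Disjoint F₁ (F₂ ∪ E))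
    (hF₁B : Disjoint F₁ B) (hint : K.labels (F₁ ∪ B ∪ E) = Finset.univ)
    (hl : ∀ v ∈ F₁, K.label v ⊆ K.labels (F₂ ∪ E))
    (hapex : ∀ v ∈ B, ∀ p, ∃ q, q ≠ p ∧ q ∉ K.labels (B.erase v ∪ (F₁ ∪ (F₂ ∪ E)))) :
    PowerSeries.coeff (F₁.card + B.card)
      ((K.star E).localSeries a Finset.univ Finset.univ) ≠ 0 := by
  intro h0
  have hsupp {s E' : Finset V} (h : F₁ ∪ B ∪ E ⊆ s ∪ E') :
      (MvPolynomial.monomial (squarefreeExponent s) 1 : MvPolynomial V k) ∈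
        (K.star E').carrierIdeal k Finset.univ Finset.univ := by
    refine monomial_mem_supportIdeal _ fun _ _ => ?_
    rw [support_squarefreeExponent, ← hint]
    exact K.monotone_labels h
  have hE : ((∏ v ∈ F₁, MvPolynomial.X v) * MvPolynomial.monomial (squarefreeExponent B) 1 :
      MvPolynomial V k) ∈ (K.star E).relationIdeal a Finset.univ Finset.univ := by
    rw [← prod_X_eq_monomial_squarefreeExponent, ← Finset.prod_union hF₁B]
    refine CarrierComplex.mem_relationIdeal_of_coeff_localSeries_eq_zero (compatible_star ha E)
      h0 ?_ ?_
    · rw [prod_X_eq_monomial_squarefreeExponent]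
      exact hsupp le_rfl
    · rw [← Finset.card_union_of_disjoint hF₁B, Finset.card_eq_sum_ones]
      exact MvPolynomial.IsHomogeneous.prod _ _ _ fun v _ => MvPolynomial.isHomogeneous_X _ v
  have hB := mem_relationIdeal_star_union ha hreg hF₁ hl subset_rfl (hsupp (by grind))
    (relationIdeal_star_mono (Finset.subset_union_right : E ⊆ F₂ ∪ E) _ _ hE)
  have hcoeff := coeff_squarefreeExponent_eq_zero (K.face_of_subset (by grind) hface) hapex hB
  rw [MvPolynomial.coeff_monomial, if_pos rfl] at hcoeff
  exact one_ne_zero hcoeff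

end LabelledComplex

/-! ### Acyclicity of the cells hit by a convex set -/

section Homology

variable {X k : Type*}

/-- The values of `d c` on `U` depend only on the values of `c` on `U`. -/
def ClosedOn [CommSemiring k] (d : (X → k) →ₗ[k] (X → k)) (U : Set X) : Prop :=
  ∀ c, (∀ x ∈ U, c x = 0) → ∀ x ∈ U, d c x = 0

/-- The homology of the restriction of `d` to `U` is at most one-dimensional. -/
def HomologyLeOne [CommSemiring k] (d : (X → k) →ₗ[k] (X → k)) (U : Set X) : Prop :=
  ∃ z, (∀ x ∈ U, d z x = 0) ∧
    ∀ c, (∀ x ∈ U, d c x = 0) → ∃ (a : k) (b : X → k), ∀ x ∈ U, c x = a * z x + d b x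

section CommRing

variable [CommRing k] {d : (X → k) →ₗ[k] (X → k)} {U U₁ U₂ : Set X}

theorem ClosedOn.congr (hU : ClosedOn d U) {c c' : X → k} (h : Set.EqOn c c' U) :
    Set.EqOn (d c) (d c') U := fun x hx => by
  have hsub := hU (c - c') (fun y hy => sub_eq_zero.2 (h hy)) x hx
  rwa [map_sub, Pi.sub_apply, sub_eq_zero] at hsub

theorem ClosedOn.exists_glue (h₁ : ClosedOn d U₁) (h₂ : ClosedOn d U₂) {b₁ b₂ : X → k}
    (h : Set.EqOn b₁ b₂ (U₁ ∩ U₂)) :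
    ∃ b, Set.EqOn (d b) (d b₁) U₁ ∧ Set.EqOn (d b) (d b₂) U₂ := by
  refine ⟨U₁.piecewise b₁ b₂, h₁.congr (Set.piecewise_eqOn _ _ _), h₂.congr fun x hx => ?_⟩
  by_cases hx₁ : x ∈ U₁
  · rw [Set.piecewise_eq_of_mem _ _ _ hx₁, h ⟨hx₁, hx⟩]
  · rw [Set.piecewise_eq_of_notMem _ _ _ hx₁]

theorem AcyclicOn.union (hd : ∀ c, d (d c) = 0) (h₁ : ClosedOn d U₁) (h₂ : ClosedOn d U₂)
    (a₁ : AcyclicOn d U₁) (a₂ : AcyclicOn d U₂) (a₀ : AcyclicOn d (U₁ ∩ U₂)) :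
    AcyclicOn d (U₁ ∪ U₂) := by
  intro c hc
  obtain ⟨b₁, hb₁⟩ := a₁ c fun x hx => hc x (Or.inl hx)
  obtain ⟨b₂, hb₂⟩ := a₂ c fun x hx => hc x (Or.inr hx)
  obtain ⟨e, he⟩ := a₀ (b₁ - b₂) fun x hx => by
    rw [map_sub, Pi.sub_apply, ← hb₁ x hx.1, ← hb₂ x hx.2, sub_self]
  obtain ⟨b, hbU₁, hbU₂⟩ := h₁.exists_glue h₂ (b₁ := b₁) (b₂ := b₂ + d e) fun x hx =>
    sub_eq_iff_eq_add'.1 (he x hx)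
  refine ⟨b, ?_⟩
  rintro x (hx | hx)
  · rw [hbU₁ hx, hb₁ x hx]
  · rw [hbU₂ hx, map_add, hd, add_zero, hb₂ x hx]

/-- The connecting map of Mayer–Vietoris sends the class generating the homology over the
intersection to one generating the homology over the union. -/
theorem HomologyLeOne.union (hd : ∀ c, d (d c) = 0) (h₁ : ClosedOn d U₁) (h₂ : ClosedOn d U₂)
    (a₁ : AcyclicOn d U₁) (a₂ : AcyclicOn d U₂) (a₀ : HomologyLeOne d (U₁ ∩ U₂)) :
    HomologyLeOne d (U₁ ∪ U₂) := by
  obtain ⟨z₀, hz₀, H⟩ := a₀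
  set z : X → k := U₁.piecewise 0 (d z₀)
  have hzU₁ : Set.EqOn z 0 U₁ := Set.piecewise_eqOn _ _ _
  have hzU₂ : Set.EqOn z (d z₀) U₂ := fun x hx => by
    by_cases hx₁ : x ∈ U₁
    · rw [hzU₁ hx₁, hz₀ x ⟨hx₁, hx⟩, Pi.zero_apply]
    · exact Set.piecewise_eq_of_notMem _ _ _ hx₁
  refine ⟨z, ?_, fun c hc => ?_⟩
  · rintro x (hx | hx)
    · rw [h₁.congr hzU₁ hx, map_zero, Pi.zero_apply]
    · rw [h₂.congr hzU₂ hx, hd, Pi.zero_apply]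
  obtain ⟨b₁, hb₁⟩ := a₁ c fun x hx => hc x (Or.inl hx)
  obtain ⟨b₂, hb₂⟩ := a₂ c fun x hx => hc x (Or.inr hx)
  obtain ⟨a, e, he⟩ := H (b₁ - b₂) fun x hx => by
    rw [map_sub, Pi.sub_apply, ← hb₁ x hx.1, ← hb₂ x hx.2, sub_self]
  obtain ⟨b, hbU₁, hbU₂⟩ := h₁.exists_glue h₂ (b₁ := b₁) (b₂ := b₂ + (a • z₀ + d e)) fun x hx =>
    sub_eq_iff_eq_add'.1 (he x hx)
  refine ⟨-a, b, ?_⟩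
  rintro x (hx | hx)
  · rw [hzU₁ hx, hbU₁ hx, hb₁ x hx, Pi.zero_apply, mul_zero, zero_add]
  · rw [hzU₂ hx, hbU₂ hx, map_add, map_add, hd, add_zero, map_smul, Pi.add_apply, Pi.smul_apply,
      smul_eq_mul, hb₂ x hx]
    ring

theorem AcyclicOn.of_acyclic_relative (hd : ∀ c, d (d c) = 0) (hU : U₁ ⊆ U)
    (a : AcyclicOn d U)
    (hrel : ∀ c, Set.EqOn c 0 U₁ → Set.EqOn (d c) 0 U →
      ∃ b : X → k, Set.EqOn b 0 U₁ ∧ Set.EqOn (d b) c U) : AcyclicOn d U₁ := by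
  intro c hc
  obtain ⟨b, hb, hdb⟩ := hrel (d c) hc fun x _ => by rw [hd]
  obtain ⟨e, he⟩ := a (c - b) fun x hx => by rw [map_sub, Pi.sub_apply, hdb hx, sub_self]
  exact ⟨e, fun x hx => by
    rw [← he x (hU hx), Pi.sub_apply, hb hx, Pi.zero_apply, sub_zero]⟩

end CommRing

/-- Attaching a cell `y` to `Q` kills the homology of `Q` if some cycle of `Q` has nonzero
boundary at `y`. -/
theorem AcyclicOn.of_homologyLeOne [CommRing k] [NoZeroDivisors k] [Nontrivial k]
    {d : (X → k) →ₗ[k] (X → k)} (hd : ∀ c, d (d c) = 0) {Q : Set X} {y : X}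
    (hy : ∀ c, (∀ x ∈ Q, c x = 0) → d c y = 0) (hQ : HomologyLeOne d Q)
    {t : X → k} (ht : ∀ x ∈ Q, d t x = 0) (hty : d t y = 1) : AcyclicOn d (insert y Q) := by
  obtain ⟨z, -, H⟩ := hQ
  have hdy {c : X → k} {a : k} {b : X → k} (h : ∀ x ∈ Q, c x = a * z x + d b x) :
      d c y = a * d z y := by
    have hsub := hy (c - (a • z + d b)) fun x hx => sub_eq_zero.2 (h x hx)
    rwa [map_sub, map_add, hd, add_zero, map_smul, Pi.sub_apply, sub_eq_zero] at hsub
  obtain ⟨a', b', h'⟩ := H t ht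
  have hzy : d z y ≠ 0 := right_ne_zero_of_mul (a := a') (by rw [← hdy h', hty]; exact one_ne_zero)
  intro c hc
  obtain ⟨a, b, h⟩ := H c fun x hx => hc x (Set.mem_insert_of_mem _ hx)
  have ha : a = 0 := by
    have h0 := hdy h
    rw [hc y (Set.mem_insert _ _)] at h0
    exact (mul_eq_zero.1 h0.symm).resolve_right hzy
  refine ⟨b + (c y - d b y) • t, ?_⟩
  rintro x (rfl | hx)
  · simp [hty]
  · simp [ht x hx, h x hx, ha]

end Homology

section Hitting

variable {P E : Type*} {T : Set P} {C : P → Set E}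

/-- The indices `p ∈ T` of the sets `C p` that meet `A`, together with `none`. -/
def hitting (T : Set P) (C : P → Set E) (A : Set E) : Set (Option P) :=
  {x | ∀ p ∈ x, p ∈ T ∧ (C p ∩ A).Nonempty}

theorem none_mem_hitting (T : Set P) (C : P → Set E) (A : Set E) : none ∈ hitting T C A := by
  simp [hitting]

theorem some_mem_hitting {A : Set E} {p : P} :
    some p ∈ hitting T C A ↔ p ∈ T ∧ (C p ∩ A).Nonempty := by
  simp [hitting]

theorem hitting_subset_iff {A : Set E} {U : Set (Option P)} :
    hitting T C A ⊆ U ↔ none ∈ U ∧ ∀ p ∈ T, (C p ∩ A).Nonempty → some p ∈ U := by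
  simp only [Set.subset_def, Option.forall, some_mem_hitting, none_mem_hitting, true_imp_iff,
    and_imp]

theorem hitting_mono {A B : Set E} (h : A ⊆ B) : hitting T C A ⊆ hitting T C B :=
  fun _ hx p hp => (hx p hp).imp_right fun hA => hA.mono (Set.inter_subset_inter_right _ h)

/-- `d` is a differential on the chains indexed by `Option P` whose value at a `p ∈ T` involves
only the values at `none` and at the indices of larger sets. -/
structure IsLocal {k : Type*} [CommSemiring k] (d : (Option P → k) →ₗ[k] (Option P → k))
    (T : Set P) (C : P → Set E) : Prop where
  sq : ∀ c, d (d c) = 0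
  at_none : ∀ c, d c none = 0
  at_some : ∀ c, ∀ p ∈ T, c none = 0 → (∀ q ∈ T, C p ⊆ C q → c (some q) = 0) → d c (some p) = 0

theorem IsLocal.closedOn {k : Type*} [CommSemiring k] {d : (Option P → k) →ₗ[k] (Option P → k)}
    (h : IsLocal d T C) (A : Set E) : ClosedOn d (hitting T C A) := by
  rintro c hc (_ | p) hp
  · exact h.at_none c
  · obtain ⟨hpT, hpA⟩ := some_mem_hitting.1 hp
    exact h.at_some c p hpT (hc _ (none_mem_hitting T C A)) fun q hqT hpq =>
      hc _ (some_mem_hitting.2 ⟨hqT, hpA.mono (Set.inter_subset_inter_left _ hpq)⟩)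

theorem nonempty_inter_sInter_of_isChain [TopologicalSpace E] [T2Space E] {B : Set E}
    (hB : IsClosed B) {c : Set (Set E)} (hc : IsChain (· ⊆ ·) c) (hne : c.Nonempty)
    (hcpt : ∀ K ∈ c, IsCompact K) (hBK : ∀ K ∈ c, (B ∩ K).Nonempty) :
    (B ∩ ⋂₀ c).Nonempty := by
  have : Nonempty c := hne.to_subtype
  have hdir : Directed (· ⊇ ·) fun K : c => B ∩ (K : Set E) := fun K L =>
    ((IsChain.directedOn (r := (· ⊇ ·)) hc.symm).directed_val K L).imp fun _ hM =>
      hM.imp (Set.inter_subset_inter_right B) (Set.inter_subset_inter_right B)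
  have h := IsCompact.nonempty_iInter_of_directed_nonempty_isCompact_isClosed _ hdir
    (fun K => hBK K K.2) (fun K => (hcpt K K.2).inter_left hB)
    fun K => hB.inter (hcpt K K.2).isClosed
  rwa [← Set.inter_iInter, ← Set.sInter_eq_iInter] at h

theorem exists_mem_chain_hitting_eq [TopologicalSpace E] [T2Space E] (hT : T.Finite)
    (hcl : ∀ p ∈ T, IsClosed (C p)) {c : Set (Set E)} (hc : IsChain (· ⊆ ·) c)
    (hne : c.Nonempty) (hcpt : ∀ K ∈ c, IsCompact K) :
    ∃ K ∈ c, hitting T C K = hitting T C (⋂₀ c) := by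
  have : Nonempty c := hne.to_subtype
  have : Finite T := hT
  have hmiss (p : T) : ∃ K : c, (C p ∩ K).Nonempty → (C p ∩ ⋂₀ c).Nonempty := by
    by_contra! hcon
    refine Set.nonempty_iff_ne_empty.1 ?_ (hcon (Classical.arbitrary c)).2
    exact nonempty_inter_sInter_of_isChain (hcl p p.2) hc hne hcpt fun K hK => (hcon ⟨K, hK⟩).1
  choose f hf using hmiss
  obtain ⟨K, hK⟩ := (IsChain.directedOn (r := (· ⊇ ·)) hc.symm).directed_val.finite_le f
  refine ⟨K, K.2, (hitting_subset_iff.2 ⟨none_mem_hitting _ _ _, fun p hp hpK => ?_⟩).antisymm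
    (hitting_mono (Set.sInter_subset_of_mem K.2))⟩
  exact some_mem_hitting.2 ⟨hp, hf ⟨p, hp⟩ (hpK.mono (Set.inter_subset_inter_right _ (hK _)))⟩

theorem hitting_union_halfSpaces (K : Set E) (φ : E → ℝ) (r : ℝ) :
    hitting T C (K ∩ {y | φ y ≤ r}) ∪ hitting T C (K ∩ {y | r ≤ φ y}) = hitting T C K := by
  refine (Set.union_subset (hitting_mono Set.inter_subset_left)
    (hitting_mono Set.inter_subset_left)).antisymm
    (hitting_subset_iff.2 ⟨Or.inl (none_mem_hitting _ _ _), ?_⟩)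
  rintro p hp ⟨y, hy, hyK⟩
  exact (le_total (φ y) r).imp (fun h => some_mem_hitting.2 ⟨hp, y, hy, hyK, h⟩)
    fun h => some_mem_hitting.2 ⟨hp, y, hy, hyK, h⟩

theorem exists_minimal_not_acyclicOn_hitting [AddCommGroup E] [Module ℝ E] [TopologicalSpace E]
    [T2Space E] {k : Type*} [CommSemiring k] {d : (Option P → k) →ₗ[k] (Option P → k)}
    (hT : T.Finite)
    (hcl : ∀ p ∈ T, IsClosed (C p)) {K : Set E} (hK : IsCompact K) (hKc : Convex ℝ K)
    (hne : K.Nonempty) (hcon : ¬ AcyclicOn d (hitting T C K)) :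
    ∃ m, Minimal (· ∈ {L | L ⊆ K ∧ IsCompact L ∧ Convex ℝ L ∧ L.Nonempty ∧
      ¬ AcyclicOn d (hitting T C L)}) m := by
  refine zorn_superset _ fun c hc hchain => ?_
  rcases c.eq_empty_or_nonempty with rfl | hcn
  · exact ⟨K, ⟨subset_rfl, hK, hKc, hne, hcon⟩, by simp⟩
  have hcpt : ∀ L ∈ c, IsCompact L := fun L hL => (hc hL).2.1
  obtain ⟨L, hL, hLc⟩ := exists_mem_chain_hitting_eq hT hcl hchain hcn hcpt
  have hcL : ⋂₀ c ⊆ L := Set.sInter_subset_of_mem hL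
  refine ⟨⋂₀ c, ⟨hcL.trans (hc hL).1, ?_, convex_sInter fun A hA => (hc hA).2.2.1, ?_,
    hLc ▸ (hc hL).2.2.2.2⟩, fun A hA => Set.sInter_subset_of_mem hA⟩
  · exact (hcpt L hL).of_isClosed_subset (isClosed_sInter fun A hA => (hcpt A hA).isClosed) hcL
  · rw [← Set.univ_inter (⋂₀ c)]
    exact nonempty_inter_sInter_of_isChain isClosed_univ hchain hcn hcpt fun A hA => by
      rw [Set.univ_inter]
      exact (hc hA).2.2.2.1

section HalfSpace

variable [AddCommGroup E] [Module ℝ E] [TopologicalSpace E] [IsTopologicalAddGroup E]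
  [ContinuousSMul ℝ E]

theorem exists_mem_eq_of_convex {A : Set E} (hA : Convex ℝ A) (φ : StrongDual ℝ E) {x y : E}
    (hx : x ∈ A) (hy : y ∈ A) {r : ℝ} (hxr : φ x ≤ r) (hyr : r ≤ φ y) : ∃ z ∈ A, φ z = r :=
  hA.isPreconnected.intermediate_value hx hy φ.continuous.continuousOn ⟨hxr, hyr⟩

theorem hitting_inter_halfSpaces (hcv : ∀ p ∈ T, Convex ℝ (C p)) {K : Set E} (hK : Convex ℝ K)
    (φ : StrongDual ℝ E) (r : ℝ) :
    hitting T C (K ∩ {y | φ y ≤ r}) ∩ hitting T C (K ∩ {y | r ≤ φ y}) =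
      hitting T C (K ∩ {y | φ y = r}) := by
  refine subset_antisymm ?_ (Set.subset_inter
    (hitting_mono (Set.inter_subset_inter_right _ fun y hy => le_of_eq hy))
    (hitting_mono (Set.inter_subset_inter_right _ fun y hy => ge_of_eq hy)))
  rintro (_ | p) ⟨h₁, h₂⟩
  · exact none_mem_hitting _ _ _
  obtain ⟨hp, u, hu, huK, hur⟩ := some_mem_hitting.1 h₁
  obtain ⟨-, v, hv, hvK, hvr⟩ := some_mem_hitting.1 h₂
  obtain ⟨y, hy, hyr⟩ :=
    exists_mem_eq_of_convex ((hcv p hp).inter hK) φ ⟨hu, huK⟩ ⟨hv, hvK⟩ hur hvr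
  exact some_mem_hitting.2 ⟨hp, y, hy.1, hy.2, hyr⟩

variable {k : Type*} [CommRing k] {d : (Option P → k) →ₗ[k] (Option P → k)}

theorem AcyclicOn.hitting_of_proper_subsets (hd : IsLocal d T C) (hcv : ∀ p ∈ T, Convex ℝ (C p))
    {m : Set E} (hm : IsCompact m) (hmc : Convex ℝ m) {φ : StrongDual ℝ E} {x y : E}
    (hx : x ∈ m) (hy : y ∈ m) (hxy : φ x < φ y)
    (hsub : ∀ L ⊆ m, IsCompact L → Convex ℝ L → L.Nonempty → L ≠ m →
      AcyclicOn d (hitting T C L)) : AcyclicOn d (hitting T C m) := by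
  obtain ⟨r, hxr, hry⟩ := exists_between hxy
  have hproper {I : Set ℝ} (hI : IsClosed I) (hIc : Convex ℝ I) (hne : ∃ z ∈ m, φ z ∈ I)
      (hout : ∃ z ∈ m, φ z ∉ I) : AcyclicOn d (hitting T C (m ∩ φ ⁻¹' I)) := by
    obtain ⟨z, hz, hzI⟩ := hout
    exact hsub _ Set.inter_subset_left (hm.inter_right (hI.preimage φ.continuous))
      (hmc.inter (hIc.is_linear_preimage φ.toLinearMap.isLinear)) hne
      fun h => hzI (Set.inter_eq_left.1 h hz)
  rw [← hitting_union_halfSpaces m φ r]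
  refine AcyclicOn.union hd.sq (hd.closedOn _) (hd.closedOn _)
    (hproper isClosed_Iic (convex_Iic r) ⟨x, hx, hxr.le⟩ ⟨y, hy, hry.not_ge⟩)
    (hproper isClosed_Ici (convex_Ici r) ⟨y, hy, hry.le⟩ ⟨x, hx, hxr.not_ge⟩) ?_
  rw [hitting_inter_halfSpaces hcv hmc]
  exact hproper isClosed_singleton (convex_singleton r)
    (exists_mem_eq_of_convex hmc φ hx hy hxr.le hry.le) ⟨x, hx, hxr.ne⟩

theorem AcyclicOn.hitting_of_convex [SeparatingDual ℝ E] (hT : T.Finite) (hd : IsLocal d T C)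
    (hcl : ∀ p ∈ T, IsClosed (C p)) (hcv : ∀ p ∈ T, Convex ℝ (C p)) {K : Set E}
    (hK : IsCompact K) (hKc : Convex ℝ K) (hne : K.Nonempty)
    (h : ∀ x ∈ K, AcyclicOn d (hitting T C {x})) : AcyclicOn d (hitting T C K) := by
  have := SeparatingDual.t2Space (R := ℝ) (V := E)
  by_contra hcon
  obtain ⟨m, ⟨hmK, hm, hmc, ⟨x, hx⟩, hma⟩, hmin⟩ :=
    exists_minimal_not_acyclicOn_hitting hT hcl hK hKc hne hcon
  have hsub : ∀ L ⊆ m, IsCompact L → Convex ℝ L → L.Nonempty → L ≠ m →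
      AcyclicOn d (hitting T C L) := fun L hLm h₁ h₂ h₃ hL => by_contra fun hLa =>
    hL (hLm.antisymm (hmin ⟨hLm.trans hmK, h₁, h₂, h₃, hLa⟩ hLm))
  obtain ⟨y, hy, hxy⟩ : ∃ y ∈ m, y ≠ x := by
    by_contra! hxy
    exact hma (Set.eq_singleton_iff_unique_mem.2 ⟨hx, hxy⟩ ▸ h x (hmK hx))
  obtain ⟨φ, hφ⟩ := SeparatingDual.exists_separating_of_ne (R := ℝ) hxy
  rcases lt_or_gt_of_ne hφ with hlt | hlt
  · exact hma (hitting_of_proper_subsets hd hcv hm hmc hy hx hlt hsub)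
  · exact hma (hitting_of_proper_subsets hd hcv hm hmc hx hy hlt hsub)

end HalfSpace

end Hitting

section Sphere

variable {E : Type*} [NormedAddCommGroup E] [NormedSpace ℝ E]

open MeasureTheory in
/-- The functionals that are nonnegative on `A` form a convex set, so almost every functional is
not on its boundary. -/
theorem exists_generic_strongDual [FiniteDimensional ℝ E] {𝒜 : Set (Set E)} (h𝒜 : 𝒜.Countable) :
    ∃ φ : StrongDual ℝ E, ∀ A ∈ 𝒜, ∀ y ∈ A, y ≠ 0 → φ y = 0 → ∃ v ∈ A, φ v < 0 := by
  let D (A : Set E) : Set (StrongDual ℝ E) := {φ | ∀ y ∈ A, 0 ≤ φ y}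
  have hD (A : Set E) : Convex ℝ (D A) := fun φ hφ ψ hψ a b ha hb _ y hy =>
    add_nonneg (mul_nonneg ha (hφ y hy)) (mul_nonneg hb (hψ y hy))
  borelize (StrongDual ℝ E)
  have : ProperSpace (StrongDual ℝ E) := FiniteDimensional.proper ℝ _
  have hnull : (Measure.addHaar : Measure (StrongDual ℝ E)) (⋃ A ∈ 𝒜, frontier (D A)) = 0 :=
    (measure_biUnion_null_iff h𝒜).2 fun A _ => (hD A).addHaar_frontier _
  obtain ⟨φ, hφ⟩ := (measure_eq_zero_iff_ae_notMem.1 hnull).exists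
  refine ⟨φ, fun A hA y hy hy0 hφy => ?_⟩
  by_contra! hφA
  obtain ⟨ψ, hψ⟩ := SeparatingDual.exists_eq_one (R := ℝ) hy0
  have hint : φ ∉ interior (D A) := fun h => by
    have htend : Filter.Tendsto (fun ε : ℝ => φ - ε • ψ) (nhdsWithin 0 (Set.Ioi 0)) (nhds φ) := by
      have hcont : Continuous fun ε : ℝ => φ - ε • ψ := by fun_prop
      simpa only [zero_smul, sub_zero] using (hcont.tendsto 0).mono_left nhdsWithin_le_nhds
    obtain ⟨ε, hε, hε0⟩ := ((htend.eventually (mem_interior_iff_mem_nhds.1 h)).and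
      self_mem_nhdsWithin).exists
    have hneg : 0 ≤ (φ - ε • ψ) y := hε y hy
    simp only [sub_apply, smul_apply, hφy, hψ, smul_eq_mul,
      mul_one, zero_sub, Left.nonneg_neg_iff] at hneg
    exact hneg.not_gt hε0
  exact hφ (Set.mem_biUnion hA ⟨subset_closure hφA, hint⟩)

theorem exists_sign_changing_strongDual [FiniteDimensional ℝ E] {𝒜 : Set (Set E)}
    (h𝒜 : 𝒜.Countable) :
    ∃ φ : StrongDual ℝ E, ∀ A ∈ 𝒜, ∀ y ∈ A, y ≠ 0 → φ y = 0 →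
      (∃ v ∈ A, φ v < 0) ∧ ∃ v ∈ A, 0 < φ v := by
  obtain ⟨φ, hφ⟩ := exists_generic_strongDual (h𝒜.union (h𝒜.image (Neg.neg : Set E → Set E)))
  refine ⟨φ, fun A hA y hy hy0 hφy => ⟨hφ A (Or.inl hA) y hy hy0 hφy, ?_⟩⟩
  obtain ⟨v, hv, hφv⟩ := hφ (-A) (Or.inr ⟨A, hA, rfl⟩) (-y) (by simpa using hy)
    (neg_ne_zero.2 hy0) (by rw [map_neg, hφy, neg_zero])
  exact ⟨-v, hv, by rw [map_neg]; exact neg_pos.2 hφv⟩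

variable {P : Type*} {T : Set P}

theorem exists_isCompact_convex_hitting_eq {C : P → Set E} (hT : T.Finite) {A : Set E}
    (hA : Convex ℝ A) (hne : A.Nonempty) :
    ∃ K ⊆ A, IsCompact K ∧ Convex ℝ K ∧ K.Nonempty ∧ hitting T C K = hitting T C A := by
  obtain ⟨y₀, hy₀⟩ := hne
  have hpick (p : P) : ∃ y ∈ A, (C p ∩ A).Nonempty → y ∈ C p := by
    by_cases hp : (C p ∩ A).Nonempty
    · exact hp.imp fun y hy => ⟨hy.2, fun _ => hy.1⟩
    · exact ⟨y₀, hy₀, fun h => absurd h hp⟩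
  choose f hfA hf using hpick
  have hKA : convexHull ℝ (insert y₀ (f '' T)) ⊆ A :=
    convexHull_min (Set.insert_subset hy₀ (Set.image_subset_iff.2 fun p _ => hfA p)) hA
  refine ⟨_, hKA, ((hT.image f).insert y₀).isCompact_convexHull ℝ, convex_convexHull ℝ _,
    ⟨y₀, subset_convexHull ℝ _ (Or.inl rfl)⟩, (hitting_mono hKA).antisymm ?_⟩
  exact hitting_subset_iff.2 ⟨none_mem_hitting _ _ _, fun p hp hpA => some_mem_hitting.2
    ⟨hp, f p, hf p hpA, subset_convexHull ℝ _ (Or.inr ⟨p, hp, rfl⟩)⟩⟩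

variable {C : P → PointedCone ℝ E} {Y : Submodule ℝ E} {φ : StrongDual ℝ E}

theorem hitting_inter_openHalfSpaces (hY : ∀ p ∈ T, Disjoint (C p).lineal Y)
    (hφ : ∀ p ∈ T, ∀ y ∈ (C p ∩ Y : Set E), y ≠ 0 → φ y = 0 →
      (∃ v ∈ (C p ∩ Y : Set E), φ v < 0) ∧ ∃ v ∈ (C p ∩ Y : Set E), 0 < φ v) :
    hitting T (fun p => C p) (Y ∩ {y | 0 < φ y}) ∩ hitting T (fun p => C p) (Y ∩ {y | φ y < 0}) =
      hitting T (fun p => C p) ((Y ⊓ φ.ker : Submodule ℝ E) \ {0} : Set E) := by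
  ext (_ | p)
  · simp only [Set.mem_inter_iff, none_mem_hitting, and_self]
  simp only [Set.mem_inter_iff, some_mem_hitting, ← and_and_left]
  refine and_congr_right fun hp => ⟨?_, ?_⟩
  · rintro ⟨⟨u, hu, huY, hφu⟩, v, hv, hvY, hφv⟩
    have hu' := (C p).smul_mem (neg_pos.2 hφv).le hu
    have hv' := (C p).smul_mem (le_of_lt hφu) hv
    refine ⟨-φ v • u + φ u • v, (C p).add_mem hu' hv',
      ⟨Y.add_mem (Y.smul_mem _ huY) (Y.smul_mem _ hvY), ?_⟩, fun h0 => ?_⟩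
    · change φ (-φ v • u + φ u • v) = 0
      simp only [map_add, map_smul, smul_eq_mul]
      ring
    · have hlin : -φ v • u ∈ (C p).lineal :=
        PointedCone.mem_lineal.2 ⟨hu', by rwa [neg_eq_of_add_eq_zero_right h0]⟩
      have hu0 := Submodule.disjoint_def.1 (hY p hp) _ hlin (Y.smul_mem _ huY)
      rw [smul_eq_zero_iff_right (neg_pos.2 hφv).ne'] at hu0
      simp [hu0] at hφu
  · rintro ⟨y, hy, ⟨hyY, hyφ⟩, hy0⟩
    obtain ⟨⟨v, hv, hφv⟩, u, hu, hφu⟩ := hφ p hp y ⟨hy, hyY⟩ hy0 hyφ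
    exact ⟨⟨u, hu.1, hu.2, hφu⟩, v, hv.1, hv.2, hφv⟩

theorem hitting_union_openHalfSpaces
    (hφ : ∀ p ∈ T, ∀ y ∈ (C p ∩ Y : Set E), y ≠ 0 → φ y = 0 →
      ∃ v ∈ (C p ∩ Y : Set E), 0 < φ v) :
    hitting T (fun p => C p) (Y ∩ {y | 0 < φ y}) ∪ hitting T (fun p => C p) (Y ∩ {y | φ y < 0}) =
      hitting T (fun p => C p) (Y \ {0} : Set E) := by
  refine subset_antisymm (Set.union_subset (hitting_mono ?_) (hitting_mono ?_))
    (hitting_subset_iff.2 ⟨Or.inl (none_mem_hitting _ _ _), ?_⟩)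
  · exact Set.inter_subset_inter_right _ fun y hy h0 => by simp [Set.mem_singleton_iff.1 h0] at hy
  · exact Set.inter_subset_inter_right _ fun y hy h0 => by simp [Set.mem_singleton_iff.1 h0] at hy
  rintro p hp ⟨y, hy, hyY, hy0⟩
  rcases lt_trichotomy (φ y) 0 with h0 | h0 | h0
  · exact Or.inr (some_mem_hitting.2 ⟨hp, y, hy, hyY, h0⟩)
  · obtain ⟨v, hv, hφv⟩ := hφ p hp y ⟨hy, hyY⟩ hy0 h0
    exact Or.inl (some_mem_hitting.2 ⟨hp, v, hv.1, hv.2, hφv⟩)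
  · exact Or.inl (some_mem_hitting.2 ⟨hp, y, hy, hyY, h0⟩)

variable {k : Type*} [CommRing k] {d : (Option P → k) →ₗ[k] (Option P → k)}

theorem HomologyLeOne.hitting_bot (hd : IsLocal d T fun p => (C p : Set E)) :
    HomologyLeOne d (hitting T (fun p => C p) ((⊥ : Submodule ℝ E) \ {0} : Set E)) := by
  have hnone : ∀ x ∈ hitting T (fun p => (C p : Set E)) ((⊥ : Submodule ℝ E) \ {0} : Set E),
      x = none := by
    rintro (_ | p) hp
    · rfl
    · obtain ⟨-, y, -, hy, hy0⟩ := some_mem_hitting.1 hp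
      exact absurd hy hy0
  exact ⟨fun _ => 1, fun x hx => by rw [hnone x hx, hd.at_none],
    fun c _ => ⟨c none, 0, fun x hx => by simp [hnone x hx]⟩⟩

/-- A generic hyperplane `H` cuts `Y \ {0}` into two open half-spaces; the cones that meet both of
them are those that meet `Y ∩ H \ {0}`. -/
theorem HomologyLeOne.hitting_sphere [FiniteDimensional ℝ E] (hT : T.Finite)
    (hd : IsLocal d T fun p => (C p : Set E)) (Y : Submodule ℝ E)
    (hY : ∀ p ∈ T, Disjoint (C p).lineal Y)
    (h : ∀ K ⊆ (Y \ {0} : Set E), IsCompact K → Convex ℝ K → K.Nonempty →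
      AcyclicOn d (hitting T (fun p => C p) K)) :
    HomologyLeOne d (hitting T (fun p => C p) (Y \ {0} : Set E)) := by
  induction Y using WellFoundedLT.induction with
  | ind Y ih =>
  rcases eq_or_ne Y ⊥ with rfl | hYne
  · exact hitting_bot hd
  obtain ⟨y₀, hy₀, hy₀'⟩ := Submodule.exists_mem_ne_zero_of_ne_bot hYne
  obtain ⟨φ, hφ⟩ := exists_sign_changing_strongDual (𝒜 := insert (Y : Set E)
    ((fun p => (C p ∩ Y : Set E)) '' T)) ((hT.image _).insert _).countable
  replace hφ := And.intro (hφ Y (Or.inl rfl)) fun p hp => hφ _ (Or.inr ⟨p, hp, rfl⟩)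
  obtain ⟨y₁, hy₁, hφy₁⟩ : ∃ y₁ ∈ Y, φ y₁ < 0 := by
    rcases lt_trichotomy (φ y₀) 0 with h0 | h0 | h0
    · exact ⟨y₀, hy₀, h0⟩
    · exact (hφ.1 y₀ hy₀ hy₀' h0).1
    · exact ⟨-y₀, Y.neg_mem hy₀, by simpa using h0⟩
  have hhalf {A : Set E} (hA : Convex ℝ A) (hne : A.Nonempty) (hAY : A ⊆ (Y \ {0} : Set E)) :
      AcyclicOn d (hitting T (fun p => C p) A) := by
    obtain ⟨K, hKA, hK, hKc, hKne, hKhit⟩ := exists_isCompact_convex_hitting_eq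
      (C := fun p => (C p : Set E)) hT hA hne
    exact hKhit ▸ h K (hKA.trans hAY) hK hKc hKne
  rw [← hitting_union_openHalfSpaces fun p hp y hy hy0 hφy => (hφ.2 p hp y hy hy0 hφy).2]
  refine HomologyLeOne.union hd.sq (hd.closedOn _) (hd.closedOn _)
    (hhalf (Y.convex.inter (convex_halfSpace_gt φ.toLinearMap.isLinear 0))
      ⟨-y₁, Y.neg_mem hy₁, by simpa using hφy₁⟩ ?_)
    (hhalf (Y.convex.inter (convex_halfSpace_lt φ.toLinearMap.isLinear 0)) ⟨y₁, hy₁, hφy₁⟩ ?_) ?_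
  · exact Set.inter_subset_inter_right _ fun y hy h0 => by simp [Set.mem_singleton_iff.1 h0] at hy
  · exact Set.inter_subset_inter_right _ fun y hy h0 => by simp [Set.mem_singleton_iff.1 h0] at hy
  rw [hitting_inter_openHalfSpaces hY hφ.2]
  have hlt : Y ⊓ φ.ker < Y := inf_le_left.lt_of_ne fun he =>
    hφy₁.ne (Submodule.mem_inf.1 (he.symm ▸ hy₁)).2
  exact ih _ hlt (fun p hp => (hY p hp).mono_right inf_le_left)
    fun K hK => h K (hK.trans (Set.sdiff_subset_sdiff_left inf_le_left))

end Sphere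

/-! ### Cones over faces of a fan -/

section RelativeCone

/-- The coordinate subspace of the vectors that vanish off `W`. -/
def vanishOff {ι : Type*} (W : Finset ι) : Submodule ℝ (ι → ℝ) where
  carrier := {y | ∀ i ∉ W, y i = 0}
  zero_mem' _ _ := rfl
  add_mem' ha hb i hi := by rw [Pi.add_apply, ha i hi, hb i hi, add_zero]
  smul_mem' c x hx i hi := by rw [Pi.smul_apply, hx i hi, smul_zero]

theorem mem_vanishOff {ι : Type*} {W : Finset ι} {y : ι → ℝ} :
    y ∈ vanishOff W ↔ ∀ i ∉ W, y i = 0 := Iff.rfl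

theorem indicator_mem_vanishOff {ι : Type*} {r s : Finset ι} (hrs : r ⊆ s) :
    (r : Set ι).indicator 1 ∈ vanishOff s :=
  fun _ hi => Set.indicator_of_notMem (fun hir => hi (hrs hir)) 1

theorem finrank_vanishOff {ι : Type*} (W : Finset ι) :
    Module.finrank ℝ (vanishOff W) = W.card := by
  have h : vanishOff W = ⨅ i ∈ (W : Set ι)ᶜ, LinearMap.ker (LinearMap.proj i) := by
    ext y
    simp [mem_vanishOff]
  rw [h, (LinearMap.iInfKerProjEquiv ℝ (fun _ => ℝ) disjoint_compl_right
    (Set.union_compl_self _).ge).finrank_eq, Module.finrank_fintype_fun_eq_card]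
  simp

variable {V E : Type*} [Fintype V] [AddCommGroup E] [Module ℝ E] {p : V → E} {r s t : Finset V}
  {x y : E}

/-- The cone of the linear combinations of the vectors `p v`, `v ∈ s`, in which the coefficients of
the `p v` with `v ∉ r` are nonnegative. For `r ⊆ s`, this is the tangent cone of the cone generated
by `s` along the face generated by `r`, and for `r = ∅` it is the cone generated by `s`. -/
def relCone (p : V → E) (s r : Finset V) : PointedCone ℝ E :=
  (PointedCone.ofSubmodule (vanishOff s) ⊓ (PointedCone.positive ℝ ((rᶜ : Finset V) → ℝ)).comap
    (LinearMap.funLeft ℝ ℝ Subtype.val)).map (Fintype.linearCombination ℝ p)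

theorem mem_relCone : x ∈ relCone p s r ↔
    ∃ l ∈ vanishOff s, (∀ v ∉ r, 0 ≤ l v) ∧ Fintype.linearCombination ℝ p l = x := by
  simp [relCone, PointedCone.mem_map, and_assoc, Pi.le_def]

theorem relCone_mono (hst : s ⊆ t) (r : Finset V) : relCone p s r ≤ relCone p t r := by
  intro x hx
  obtain ⟨l, hl, h⟩ := mem_relCone.1 hx
  exact mem_relCone.2 ⟨l, fun v hv => hl v (mt (@hst v) hv), h⟩

theorem linearCombination_eq_sum {l : V → ℝ} (hl : l ∈ vanishOff s) :
    Fintype.linearCombination ℝ p l = ∑ v ∈ s, l v • p v := by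
  rw [Fintype.linearCombination_apply]
  exact (Finset.sum_subset s.subset_univ fun v _ hv => by rw [hl v hv, zero_smul]).symm

theorem mem_span_image_iff : x ∈ Submodule.span ℝ (p '' s) ↔
    ∃ l ∈ vanishOff s, Fintype.linearCombination ℝ p l = x := by
  constructor
  · suffices h : Submodule.span ℝ (p '' s) ≤
        (vanishOff s).map (Fintype.linearCombination ℝ p) from fun hx => h hx
    refine Submodule.span_le.2 ?_
    rintro _ ⟨v, hv, rfl⟩
    exact ⟨Pi.single v 1, fun u hu => Pi.single_eq_of_ne (ne_of_mem_of_not_mem hv hu).symm 1,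
      by rw [Fintype.linearCombination_apply_single, one_smul]⟩
  · rintro ⟨l, hl, rfl⟩
    rw [linearCombination_eq_sum hl]
    exact sum_mem fun v hv => Submodule.smul_mem _ _ (Submodule.subset_span ⟨v, hv, rfl⟩)

theorem coe_relCone_self : (relCone p s s : Set E) = Submodule.span ℝ (p '' s) := by
  ext x
  rw [SetLike.mem_coe, SetLike.mem_coe, mem_relCone, mem_span_image_iff]
  exact ⟨fun ⟨l, hl, _, h⟩ => ⟨l, hl, h⟩, fun ⟨l, hl, h⟩ => ⟨l, hl, fun v hv => (hl v hv).ge, h⟩⟩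

theorem eq_of_linearCombination_eq (hs : LinearIndepOn ℝ p s) {l m : V → ℝ} (hl : l ∈ vanishOff s)
    (hm : m ∈ vanishOff s)
    (h : Fintype.linearCombination ℝ p l = Fintype.linearCombination ℝ p m) : l = m := by
  have hlm := sub_mem hl hm
  refine sub_eq_zero.1 (funext fun v => ?_)
  by_cases hv : v ∈ s
  · exact linearIndepOn_finset_iff.1 hs (l - m)
      (by rw [← linearCombination_eq_sum hlm, map_sub, h, sub_self]) v hv
  · exact hlm v hv

theorem lineal_relCone_le (hs : LinearIndepOn ℝ p s) :
    (relCone p s r).lineal ≤ Submodule.span ℝ (p '' r) := by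
  intro x hx
  obtain ⟨l, hl, hlr, rfl⟩ := mem_relCone.1 hx.1
  obtain ⟨m, hm, hmr, h⟩ := mem_relCone.1 hx.2
  obtain rfl := eq_of_linearCombination_eq hs hm (neg_mem hl) (h.trans (map_neg _ l).symm)
  exact mem_span_image_iff.2
    ⟨l, fun v hv => le_antisymm (neg_nonneg.1 (hmr v hv)) (hlr v hv), rfl⟩

theorem isClosed_relCone [TopologicalSpace E] [IsTopologicalAddGroup E] [ContinuousSMul ℝ E]
    [T2Space E] (hs : LinearIndepOn ℝ p s) (r : Finset V) : IsClosed (relCone p s r : Set E) := by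
  have hinj : LinearMap.ker ((Fintype.linearCombination ℝ p).domRestrict (vanishOff s)) = ⊥ :=
    LinearMap.ker_eq_bot.2 fun l m h =>
      Subtype.ext (eq_of_linearCombination_eq hs l.2 m.2 h)
  have hcl : IsClosed {l : vanishOff s | ∀ v ∉ r, 0 ≤ l.1 v} := by
    simp only [Set.ofPred_forall]
    exact isClosed_iInter fun v => isClosed_iInter fun _ =>
      isClosed_le continuous_const ((continuous_apply v).comp continuous_subtype_val)
  convert (LinearMap.isClosedEmbedding_of_injective hinj).isClosedMap _ hcl
  ext x
  simp [mem_relCone, LinearMap.domRestrict_apply, and_left_comm]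

theorem mem_or_neg_mem_relCone (hrs : r ⋖ s) (hx : x ∈ Submodule.span ℝ (p '' s)) :
    x ∈ relCone p s r ∨ -x ∈ relCone p s r := by
  obtain ⟨w, -, rfl⟩ := Finset.covBy_iff_exists_insert.1 hrs
  obtain ⟨l, hl, rfl⟩ := mem_span_image_iff.1 hx
  have hnonneg {l : V → ℝ} (hl : l ∈ vanishOff (insert w r)) (hw : 0 ≤ l w) (v : V) (hv : v ∉ r) :
      0 ≤ l v := by
    rcases eq_or_ne v w with rfl | hvw
    · exact hw
    · exact (hl v (by simp [hvw, hv])).ge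
  rcases le_total 0 (l w) with hw | hw
  · exact .inl (mem_relCone.2 ⟨l, hl, hnonneg hl hw, rfl⟩)
  · exact .inr (mem_relCone.2
      ⟨-l, neg_mem hl, hnonneg (neg_mem hl) (neg_nonneg.2 hw), map_neg _ l⟩)

variable (p r) in
/-- The sum of the vectors spanning a face, a point in the relative interior of its cone. -/
def faceSum : E := ∑ v ∈ r, p v

theorem linearCombination_indicator (r : Finset V) :
    Fintype.linearCombination ℝ p ((r : Set V).indicator 1) = faceSum p r := by
  rw [linearCombination_eq_sum (s := r) fun v hv => Set.indicator_of_notMem hv 1]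
  exact Finset.sum_congr rfl fun v hv => by
    rw [Set.indicator_of_mem (Finset.mem_coe.2 hv), Pi.one_apply, one_smul]

theorem faceSum_mem_relCone (r : Finset V) : faceSum p r ∈ relCone p r ∅ :=
  mem_relCone.2 ⟨_, indicator_mem_vanishOff subset_rfl,
    fun v _ => Set.indicator_nonneg (fun _ _ => zero_le_one) v, linearCombination_indicator r⟩

theorem mem_relCone_of_faceSum_add_smul_mem (hrs : r ⊆ s) {ε : ℝ} (hε : 0 < ε)
    (h : faceSum p r + ε • y ∈ relCone p s ∅) : y ∈ relCone p s r := by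
  obtain ⟨l, hl, hl0, he⟩ := mem_relCone.1 h
  refine mem_relCone.2 ⟨ε⁻¹ • (l - (r : Set V).indicator 1), Submodule.smul_mem _ _
    (sub_mem hl (indicator_mem_vanishOff hrs)), fun v hv => ?_, ?_⟩
  · rw [Pi.smul_apply, Pi.sub_apply, Set.indicator_of_notMem (by exact hv), sub_zero]
    exact smul_nonneg (inv_nonneg.2 hε.le) (hl0 v (Finset.notMem_empty v))
  · rw [map_smul, map_sub, he, linearCombination_indicator, add_sub_cancel_left,
      inv_smul_smul₀ hε.ne']

theorem eventually_faceSum_add_smul_mem (hrs : r ⊆ s) (hy : y ∈ relCone p s r) :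
    ∀ᶠ ε in nhdsWithin (0 : ℝ) (Set.Ioi 0), faceSum p r + ε • y ∈ relCone p s ∅ := by
  obtain ⟨l, hl, hlr, rfl⟩ := mem_relCone.1 hy
  have hpos : ∀ᶠ ε in nhdsWithin (0 : ℝ) (Set.Ioi 0), ∀ v, 0 < 1 + ε * l v := by
    refine Filter.eventually_all.2 fun v => nhdsWithin_le_nhds ?_
    have hcont : Continuous fun ε : ℝ => 1 + ε * l v := by fun_prop
    exact (hcont.tendsto 0).eventually_const_lt (by simp)
  filter_upwards [hpos, self_mem_nhdsWithin] with ε hε hε0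
  refine mem_relCone.2 ⟨(r : Set V).indicator 1 + ε • l, add_mem (indicator_mem_vanishOff hrs)
    (Submodule.smul_mem _ _ hl), fun v _ => ?_, ?_⟩
  · by_cases hv : v ∈ r
    · simpa [hv] using (hε v).le
    · simpa [hv] using mul_nonneg (le_of_lt hε0) (hlr v hv)
  · rw [map_add, map_smul, linearCombination_indicator]

end RelativeCone

/-- A simplicial fan supported on the nonnegative orthant, with its vertices indexed by `V`; the
label of a vertex is its set of nonzero coordinates. -/
structure GeomFan (V ι : Type*) [Fintype V] extends LabelledComplex V ι where
  pos : V → ι → ℝ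
  pos_nonneg : ∀ v, 0 ≤ pos v
  mem_label : ∀ {v i}, i ∈ label v ↔ pos v i ≠ 0
  linearIndepOn : ∀ {s}, Face s → LinearIndepOn ℝ pos s
  exists_mem_relCone : ∀ x, 0 ≤ x → ∃ s, Face s ∧ x ∈ relCone pos s ∅
  relCone_inf_le : ∀ {s t}, Face s → Face t →
    relCone pos s ∅ ⊓ relCone pos t ∅ ≤ relCone pos (s ∩ t) ∅

/-- The relatively open face of the nonnegative orthant with support `W`. -/
def openOrthant {ι : Type*} (W : Finset ι) : Set (ι → ℝ) := {x | 0 ≤ x ∧ ∀ i, i ∈ W ↔ x i ≠ 0}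

theorem openOrthant_subset {ι : Type*} (W : Finset ι) : openOrthant W ⊆ vanishOff W :=
  fun _ hx i hi => not_not.1 (mt (hx.2 i).2 hi)

theorem convex_openOrthant {ι : Type*} (W : Finset ι) : Convex ℝ (openOrthant W) := by
  have h : openOrthant W = Set.pi Set.univ fun i => if i ∈ W then Set.Ioi (0 : ℝ) else {0} := by
    ext x
    simp only [openOrthant, Set.mem_ofPred_eq, Set.mem_univ_pi, Pi.le_def, Pi.zero_apply,
      ← forall_and]
    refine forall_congr' fun i => ?_
    by_cases hi : i ∈ W
    · simp [hi, lt_iff_le_and_ne, eq_comm]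
    · simp +contextual [hi]
  rw [h]
  refine convex_pi fun i _ => ?_
  split_ifs
  exacts [convex_Ioi 0, convex_singleton 0]

theorem indicator_mem_openOrthant {ι : Type*} (W : Finset ι) :
    (W : Set ι).indicator 1 ∈ openOrthant W :=
  ⟨Set.indicator_nonneg fun _ _ => zero_le_one, fun i => by simp [Set.indicator_apply]⟩

theorem add_smul_mem_openOrthant {ι : Type*} {W : Finset ι} {x y : ι → ℝ} {ε : ℝ} (hx : 0 ≤ x)
    (hxW : x ∈ vanishOff W) (hy : y ∈ openOrthant W) (hε : 0 < ε) : x + ε • y ∈ openOrthant W := by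
  refine ⟨add_nonneg hx (smul_nonneg hε.le hy.1), fun i => ⟨fun hi => ?_, fun h => ?_⟩⟩
  · have hyi : 0 < y i := (hy.1 i).lt_of_ne ((hy.2 i).1 hi).symm
    exact (add_pos_of_nonneg_of_pos (hx i) (mul_pos hε hyi)).ne'
  · by_contra hi
    exact h (by simp [hxW i hi, openOrthant_subset W hy i hi])

theorem eventually_add_smul_mem_openOrthant {ι : Type*} [Finite ι] {W : Finset ι} {x y : ι → ℝ}
    (hx : x ∈ openOrthant W) (hy : y ∈ vanishOff W) :
    ∀ᶠ ε in nhdsWithin (0 : ℝ) (Set.Ioi 0), x + ε • y ∈ openOrthant W := by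
  have hpos : ∀ᶠ ε in nhdsWithin (0 : ℝ) (Set.Ioi 0), ∀ i, i ∈ W → 0 < x i + ε * y i := by
    refine Filter.eventually_all.2 fun i => nhdsWithin_le_nhds ?_
    by_cases hi : i ∈ W
    · have hcont : Continuous fun ε : ℝ => x i + ε * y i := by fun_prop
      have hxi : 0 < x i := (hx.1 i).lt_of_ne ((hx.2 i).1 hi).symm
      filter_upwards [(hcont.tendsto 0).eventually_const_lt (by simpa using hxi)] with ε hε _
        using hε
    · exact Filter.Eventually.of_forall fun _ h => absurd h hi
  filter_upwards [hpos] with ε hε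
  refine ⟨fun i => ?_, fun i => ?_⟩ <;> by_cases hi : i ∈ W
  · exact (hε i hi).le
  · simp [openOrthant_subset W hx i hi, hy i hi]
  · exact iff_of_true hi (hε i hi).ne'
  · simp [openOrthant_subset W hx i hi, hy i hi, hi]

namespace GeomFan

open Filter Topology

variable {V ι : Type*} [Fintype V] {M : GeomFan V ι} {W : Finset ι} {r s t : Finset V}
  {x y : ι → ℝ}

theorem label_subset_iff {v : V} : M.label v ⊆ W ↔ M.pos v ∈ vanishOff W := by
  simp only [Finset.subset_iff, M.mem_label, mem_vanishOff]
  exact forall_congr' fun i => not_imp_comm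

theorem labels_subset_iff :
    M.labels s ⊆ W ↔ Submodule.span ℝ (M.pos '' s) ≤ vanishOff W := by
  rw [Submodule.span_le, Set.image_subset_iff, LabelledComplex.labels, Finset.biUnion_subset]
  exact forall₂_congr fun v _ => label_subset_iff

theorem finrank_span (hs : M.Face s) :
    Module.finrank ℝ (Submodule.span ℝ (M.pos '' s)) = s.card := by
  rw [Set.image_eq_range]
  exact (finrank_span_eq_card (M.linearIndepOn hs)).trans (Fintype.card_coe s)

theorem card_le [Finite ι] (hs : M.Face s) (h : M.labels s ⊆ W) : s.card ≤ W.card := by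
  rw [← finrank_span hs, ← finrank_vanishOff]
  exact Submodule.finrank_mono (labels_subset_iff.1 h)

theorem span_eq_vanishOff [Finite ι] (hs : M.Face s) (h : M.labels s ⊆ W)
    (hc : s.card = W.card) : Submodule.span ℝ (M.pos '' s) = vanishOff W :=
  Submodule.eq_of_le_of_finrank_le (labels_subset_iff.1 h)
    (by rw [finrank_span hs, finrank_vanishOff, hc])

theorem exists_notMem_span (hs : M.Face s) (h : M.labels s ⊆ W) (hc : s.card < W.card) :
    ∃ y ∈ vanishOff W, y ∉ Submodule.span ℝ (M.pos '' s) := by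
  refine SetLike.exists_of_lt ((labels_subset_iff.1 h).lt_of_ne fun he => hc.ne ?_)
  rw [← finrank_span hs, he, finrank_vanishOff]

variable (M) in
/-- `x` lies in the relative interior of the cone over the face `r`. -/
def IsCarrier (r : Finset V) (x : ι → ℝ) : Prop :=
  M.Face r ∧ ∃ l ∈ vanishOff r, (∀ v ∈ r, 0 < l v) ∧ Fintype.linearCombination ℝ M.pos l = x

theorem exists_isCarrier (hx : 0 ≤ x) : ∃ r, M.IsCarrier r x := by
  obtain ⟨s, hs, hxs⟩ := M.exists_mem_relCone x hx
  obtain ⟨l, hl, hl0, rfl⟩ := mem_relCone.1 hxs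
  have hsub : ({v | 0 < l v} : Finset V) ⊆ s := fun v hv =>
    by_contra fun hvs => (Finset.mem_filter.1 hv).2.ne' (hl v hvs)
  exact ⟨_, M.face_of_subset hsub hs, l,
    fun v hv => le_antisymm (not_lt.1 fun h => hv (by simpa using h)) (hl0 v (by simp)),
    fun v hv => (Finset.mem_filter.1 hv).2, rfl⟩

theorem isCarrier_faceSum (hr : M.Face r) : M.IsCarrier r (faceSum M.pos r) :=
  ⟨hr, _, indicator_mem_vanishOff subset_rfl, fun v hv => by simp [hv],
    linearCombination_indicator r⟩

theorem IsCarrier.mem_relCone_iff (h : M.IsCarrier r x) (ht : M.Face t) :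
    x ∈ relCone M.pos t ∅ ↔ r ⊆ t := by
  obtain ⟨hr, l, hl, hpos, rfl⟩ := h
  have hself : Fintype.linearCombination ℝ M.pos l ∈ relCone M.pos r ∅ :=
    mem_relCone.2 ⟨l, hl, fun v _ => ?_, rfl⟩
  · refine ⟨fun hx v hv => ?_, fun hrt => relCone_mono hrt _ hself⟩
    obtain ⟨m, hm, -, hml⟩ := mem_relCone.1 (M.relCone_inf_le hr ht ⟨hself, hx⟩)
    obtain rfl := eq_of_linearCombination_eq (M.linearIndepOn hr) hl
      (fun u hu => hm u fun h => hu (Finset.mem_of_mem_inter_left h)) hml.symm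
    by_contra hvt
    exact (hpos v hv).ne' (hm v fun h => hvt (Finset.mem_of_mem_inter_right h))
  · by_cases hv : v ∈ r
    exacts [(hpos v hv).le, (hl v hv).ge]

theorem IsCarrier.mem_openOrthant (h : M.IsCarrier r x) : x ∈ openOrthant (M.labels r) := by
  obtain ⟨-, l, hl, hpos, rfl⟩ := h
  have hterm (i : ι) (v : V) (hv : v ∈ r) : 0 ≤ l v * M.pos v i :=
    mul_nonneg (hpos v hv).le (M.pos_nonneg v i)
  rw [linearCombination_eq_sum hl]
  refine ⟨fun i => ?_, fun i => ?_⟩ <;> rw [Finset.sum_apply]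
  · exact Finset.sum_nonneg (hterm i)
  · simp only [LabelledComplex.labels, Finset.mem_biUnion, M.mem_label, Pi.smul_apply, smul_eq_mul]
    rw [Ne, Finset.sum_eq_zero_iff_of_nonneg (hterm i)]
    push Not
    exact exists_congr fun v => and_congr_right fun hv => by simp [(hpos v hv).ne']

theorem IsCarrier.labels_eq (h : M.IsCarrier r x) (hx : x ∈ openOrthant W) : M.labels r = W :=
  Finset.ext fun i => (h.mem_openOrthant.2 i).trans (hx.2 i).symm

theorem eventually_subset (hr : M.Face r) :
    ∀ᶠ x in 𝓝 (faceSum M.pos r), ∀ τ, M.Face τ → x ∈ relCone M.pos τ ∅ → r ⊆ τ := by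
  refine eventually_all.2 fun τ => ?_
  by_cases h : M.Face τ ∧ ¬r ⊆ τ
  · filter_upwards [(isClosed_relCone (M.linearIndepOn h.1) ∅).isOpen_compl.mem_nhds
      (mt ((isCarrier_faceSum hr).mem_relCone_iff h.1).1 h.2)] with x hx _ hx'
    exact absurd hx' hx
  · exact .of_forall fun _ hτ _ => by_contra fun hrτ => h ⟨hτ, hrτ⟩

theorem tendsto_add_smul (x y : ι → ℝ) :
    Tendsto (fun ε : ℝ => x + ε • y) (𝓝[>] 0) (𝓝 x) := by
  have hcont : Continuous fun ε : ℝ => x + ε • y := by fun_prop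
  simpa using (hcont.tendsto 0).mono_left nhdsWithin_le_nhds

variable (M W) in
/-- The faces with set of labels `W`. -/
def cells : Finset (Finset V) := {τ | M.Face τ ∧ M.labels τ = W}

theorem mem_cells : s ∈ M.cells W ↔ M.Face s ∧ M.labels s = W := by
  simp [cells]

theorem ordConnected_cells : (M.cells W : Set (Finset V)).OrdConnected := by
  refine ⟨fun r hr t ht s hs => ?_⟩
  rw [Finset.mem_coe, mem_cells] at hr ht ⊢
  exact ⟨M.face_of_subset hs.2 ht.1, ((M.monotone_labels hs.2).trans ht.2.subset).antisymm
    (hr.2.symm.subset.trans (M.monotone_labels hs.1))⟩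

theorem exists_isCarrier_mem_cells (hx : x ∈ openOrthant W) :
    ∃ r ∈ M.cells W, M.IsCarrier r x := by
  obtain ⟨r, hr⟩ := exists_isCarrier (M := M) hx.1
  exact ⟨r, mem_cells.2 ⟨hr.1, hr.labels_eq hx⟩, hr⟩

theorem faceSum_mem_openOrthant (hr : r ∈ M.cells W) : faceSum M.pos r ∈ openOrthant W := by
  obtain ⟨hrF, rfl⟩ := mem_cells.1 hr
  exact (isCarrier_faceSum hrF).mem_openOrthant

theorem exists_cell_mem_relCone_iff [Finite ι] (hr : r ∈ M.cells W) (hy : y ∈ vanishOff W) :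
    ∃ r' ∈ M.cells W, r ⊆ r' ∧
      ∀ τ, M.Face τ → r ⊆ τ → (y ∈ relCone M.pos τ r ↔ r' ⊆ τ) := by
  have hrF := (mem_cells.1 hr).1
  have hcone : ∀ᶠ ε in 𝓝[>] (0 : ℝ), ∀ τ, r ⊆ τ ∧ y ∈ relCone M.pos τ r →
      faceSum M.pos r + ε • y ∈ relCone M.pos τ ∅ := by
    refine eventually_all.2 fun τ => ?_
    by_cases hτ : r ⊆ τ ∧ y ∈ relCone M.pos τ r
    · filter_upwards [eventually_faceSum_add_smul_mem hτ.1 hτ.2] with ε hε _ using hε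
    · exact .of_forall fun _ h => absurd h hτ
  obtain ⟨ε, ⟨⟨hsub, horth⟩, hcone⟩, hε⟩ := (((((tendsto_add_smul _ y).eventually
    (eventually_subset hrF)).and (eventually_add_smul_mem_openOrthant (faceSum_mem_openOrthant hr)
      hy)).and hcone).and self_mem_nhdsWithin).exists
  obtain ⟨r', hr', hc⟩ := exists_isCarrier_mem_cells (M := M) horth
  refine ⟨r', hr', hsub r' hc.1 ((hc.mem_relCone_iff hc.1).2 subset_rfl), fun τ hτ hrτ => ?_⟩
  rw [← hc.mem_relCone_iff hτ]
  exact ⟨fun h => hcone τ ⟨hrτ, h⟩, mem_relCone_of_faceSum_add_smul_mem hrτ hε⟩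

theorem exists_ssuperset_cell_mem_relCone_iff [Finite ι] (hr : r ∈ M.cells W)
    (hy : y ∈ vanishOff W) (hyr : y ∉ Submodule.span ℝ (M.pos '' r)) :
    ∃ r' ∈ M.cells W, r ⊂ r' ∧
      ∀ τ, M.Face τ → r ⊆ τ → (y ∈ relCone M.pos τ r ↔ r' ⊆ τ) := by
  obtain ⟨r', hr', hrr', h⟩ := exists_cell_mem_relCone_iff hr hy
  refine ⟨r', hr', hrr'.ssubset_of_ne fun he => hyr ?_, h⟩
  rw [← SetLike.mem_coe, ← coe_relCone_self]
  exact (h r (mem_cells.1 hr).1 subset_rfl).2 he.symm.subset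

theorem exists_unique_covBy_mem_relCone [Finite ι] (hr : r ∈ M.cells W)
    (hc : r.card + 1 = W.card) (hy : y ∈ vanishOff W)
    (hyr : y ∉ Submodule.span ℝ (M.pos '' r)) :
    ∃ r' ∈ M.cells W, r ⋖ r' ∧ ∀ τ ∈ M.cells W, r ⋖ τ → (y ∈ relCone M.pos τ r ↔ τ = r') := by
  obtain ⟨r', hr', hlt, h⟩ := exists_ssuperset_cell_mem_relCone_iff hr hy hyr
  have hcov : r ⋖ r' := by
    refine Finset.covBy_iff_card_sdiff_eq_one.2 ⟨hlt.subset, ?_⟩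
    have hle := card_le (mem_cells.1 hr').1 (mem_cells.1 hr').2.subset
    have hlt' := Finset.card_lt_card hlt
    rw [Finset.card_sdiff_of_subset hlt.subset]
    omega
  refine ⟨r', hr', hcov, fun τ hτ hrτ => ?_⟩
  rw [h τ (mem_cells.1 hτ).1 hrτ.le]
  exact ⟨fun h => ((hrτ.eq_or_eq hlt.subset h).resolve_left hlt.ne').symm, fun h => h.symm.subset⟩

/-- A vector `y` transverse to a cell `r` of codimension one lies on one side of it, `-y` on the
other, and each side contains exactly one cell of maximal dimension. -/
theorem even_card_covers [Finite ι] (hr : r ∈ M.cells W) (hc : r.card + 1 = W.card) :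
    Even (Finset.card {τ ∈ M.cells W | r ⋖ τ}) := by
  obtain ⟨hrF, hrW⟩ := mem_cells.1 hr
  obtain ⟨y, hyW, hy⟩ := exists_notMem_span hrF hrW.subset (by omega)
  obtain ⟨r₁, hr₁, hcov₁, h₁⟩ := exists_unique_covBy_mem_relCone hr hc hyW hy
  obtain ⟨r₂, hr₂, hcov₂, h₂⟩ := exists_unique_covBy_mem_relCone hr hc (neg_mem hyW)
    (mt neg_mem_iff.1 hy)
  have hne : r₁ ≠ r₂ := fun he => hy (lineal_relCone_le (M.linearIndepOn (mem_cells.1 hr₁).1)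
    ⟨(h₁ _ hr₁ hcov₁).2 rfl, (h₂ _ hr₁ hcov₁).2 he⟩)
  have hpair : ({τ ∈ M.cells W | r ⋖ τ} : Finset (Finset V)) = {r₁, r₂} := by
    ext τ
    rw [Finset.mem_filter, Finset.mem_insert, Finset.mem_singleton]
    refine ⟨fun ⟨hτ, hrτ⟩ => ?_, ?_⟩
    · obtain ⟨hτF, hτW⟩ := mem_cells.1 hτ
      have hspan := span_eq_vanishOff hτF hτW.subset
        ((Nat.covBy_iff_add_one_eq.1 hrτ.card_finset).symm.trans hc)
      rw [← h₁ τ hτ hrτ, ← h₂ τ hτ hrτ]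
      exact mem_or_neg_mem_relCone hrτ (hspan ▸ hyW)
    · rintro (rfl | rfl)
      exacts [⟨hr₁, hcov₁⟩, ⟨hr₂, hcov₂⟩]
  rw [hpair, Finset.card_pair hne]
  exact even_two

end GeomFan

section Cells

variable {V E k : Type*} {T : Finset (Finset V)} {C : Finset V → Set E} {r s : Finset V}

/-- The cells strictly containing `r`, together with the cell of dimension zero. -/
def linkCells (T : Finset (Finset V)) (r : Finset V) : Set (Option (Finset V)) :=
  {x | ∀ τ, x = some τ → τ ∈ T ∧ r ⊂ τ}

theorem some_mem_linkCells {τ : Finset V} : some τ ∈ linkCells T r ↔ τ ∈ T ∧ r ⊂ τ := by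
  simp [linkCells]

theorem none_mem_linkCells : none ∈ linkCells T r := by simp [linkCells]

theorem insert_linkCells (hr : r ∈ T) : insert (some r) (linkCells T r) = starCells T r := by
  ext (_ | τ)
  · simp [none_mem_linkCells, none_mem_starCells]
  · rw [Set.mem_insert_iff, some_mem_linkCells, some_mem_starCells, Option.some.injEq]
    by_cases h : τ = r
    · simp [h, hr]
    · simp [h, Finset.ssubset_iff_subset_ne, Ne.symm h]

theorem hitting_eq_starCells {A : Set E} (hrs : r ⊆ s)
    (h : ∀ τ ∈ T, r ⊆ τ → ((C τ ∩ A).Nonempty ↔ s ⊆ τ)) :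
    hitting {p | p ∈ T ∧ r ⊆ p} C A = starCells T s := by
  ext (_ | τ)
  · simp [none_mem_hitting, none_mem_starCells]
  · rw [some_mem_hitting, some_mem_starCells]
    exact ⟨fun ⟨hτ, hA⟩ => ⟨hτ.1, (h τ hτ.1 hτ.2).1 hA⟩,
      fun ⟨hτ, hs⟩ => ⟨⟨hτ, hrs.trans hs⟩, (h τ hτ (hrs.trans hs)).2 hs⟩⟩

theorem isLocal_cellBd [Fintype V] [CommRing k] {N : ℕ}
    (hT : cellBd (k := k) T N * cellBd T N = 0) (hC : Monotone C) (r : Finset V) :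
    IsLocal (cellBd (k := k) T N).mulVecLin {p | p ∈ T ∧ r ⊆ p} C where
  sq c := by simp [Matrix.mulVec_mulVec, hT]
  at_none := cellBd_mulVec_none
  at_some c p hp hc h := by
    rw [Matrix.mulVecLin_apply, cellBd_mulVec_some c hp.1, hc, ite_self, add_zero]
    refine Finset.sum_eq_zero fun q hq => ?_
    obtain ⟨hq, hpq⟩ := Finset.mem_filter.1 hq
    exact h q ⟨hq, hp.2.trans hpq.le⟩ (hC hpq.le)

theorem acyclicOn_starCells_of_homologyLeOne [Fintype V] [CommRing k] [NoZeroDivisors k]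
    [Nontrivial k] {N : ℕ} (hT : cellBd (k := k) T N * cellBd T N = 0) (hr : r ∈ T)
    (hcov : r.card = N ∨ ∃ τ ∈ T, r ⋖ τ)
    (hlink : HomologyLeOne (cellBd (k := k) T N).mulVecLin (linkCells T r)) :
    AcyclicOn (cellBd (k := k) T N).mulVecLin (starCells T r) := by
  have hlow (c : Option (Finset V) → k) (hc : ∀ x ∈ linkCells T r, c x = 0) :
      (cellBd T N).mulVecLin c (some r) = 0 := by
    rw [Matrix.mulVecLin_apply, cellBd_mulVec_some c hr, hc none none_mem_linkCells, ite_self,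
      add_zero]
    refine Finset.sum_eq_zero fun τ hτ => hc _ (some_mem_linkCells.2 ?_)
    exact ⟨(Finset.mem_filter.1 hτ).1, (Finset.mem_filter.1 hτ).2.lt⟩
  obtain ⟨y, hy, hyr⟩ : ∃ y : Option (Finset V),
      (∀ τ, some τ ∈ linkCells T r → cellBd (k := k) T N (some τ) y = 0) ∧
        cellBd (k := k) T N (some r) y = 1 := by
    rcases hcov with hc | ⟨υ, hυ, hrυ⟩
    · refine ⟨none, fun τ hτ => if_neg fun h => ?_, if_pos ⟨hr, hc⟩⟩
      exact (Finset.card_lt_card (some_mem_linkCells.1 hτ).2).ne (hc.trans h.2.symm)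
    · refine ⟨some υ, fun τ hτ => if_neg fun h => ?_, if_pos ⟨⟨hr, hυ⟩, hrυ⟩⟩
      exact hrυ.2 (some_mem_linkCells.1 hτ).2 h.2.lt
  rw [← insert_linkCells hr]
  refine AcyclicOn.of_homologyLeOne (fun c => by simp [Matrix.mulVec_mulVec, hT]) hlow hlink
    (t := Pi.single y 1) ?_ ?_
  · rintro (_ | τ) hτ
    · exact cellBd_mulVec_none _
    · simpa using hy τ hτ
  · simpa using hyr

end Cells

theorem exists_mem_relCone_of_codisjoint {V E : Type*} [Fintype V] [AddCommGroup E] [Module ℝ E]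
    {p : V → E} {r s : Finset V} {Q : Submodule ℝ E} (hs : LinearIndepOn ℝ p s) (hrs : r ⊂ s)
    (hQ : Codisjoint (Submodule.span ℝ (p '' r)) Q) : ∃ y ∈ relCone p s r, y ∈ Q ∧ y ≠ 0 := by
  obtain ⟨v, hv, hvr⟩ := Finset.exists_of_ssubset hrs
  obtain ⟨z, hz, y, hy, hzy⟩ := Submodule.mem_sup.1 (hQ.eq_top ▸ Submodule.mem_top : p v ∈ _)
  refine ⟨y, ?_, hy, ?_⟩
  · rw [eq_sub_of_add_eq' hzy, sub_eq_add_neg]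
    refine add_mem (mem_relCone.2 ⟨Pi.single v 1, ?_, ?_, by simp⟩) ?_
    · exact fun u hu => Pi.single_eq_of_ne (ne_of_mem_of_not_mem hv hu).symm _
    · exact fun u _ => (Pi.single_nonneg (α := fun _ => ℝ)).2 zero_le_one u
    · refine relCone_mono hrs.subset r ?_
      rw [← SetLike.mem_coe, coe_relCone_self]
      exact neg_mem hz
  · rintro rfl
    rw [add_zero] at hzy
    subst hzy
    have hr : LinearIndepOn ℝ p r := hs.mono (Finset.coe_subset.2 hrs.subset)
    have hvr' : LinearIndepOn ℝ p (insert v (r : Set V)) :=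
      hs.mono (Set.insert_subset hv (Finset.coe_subset.2 hrs.subset))
    exact hr.notMem_span_iff.2 ⟨hvr', hvr⟩ hz

namespace GeomFan

open Filter Topology

variable {V ι k : Type*} [Fintype V] {M : GeomFan V ι} {W : Finset ι} {r : Finset V}

theorem linkCells_eq_hitting {Q : Submodule ℝ (ι → ℝ)}
    (hQ : IsCompl (Submodule.span ℝ (M.pos '' r)) Q) :
    linkCells (M.cells W) r = hitting {p | p ∈ M.cells W ∧ r ⊆ p}
      (fun p => relCone M.pos p r)
      ((Q ⊓ vanishOff W : Submodule ℝ (ι → ℝ)) \ {0} : Set (ι → ℝ)) := by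
  ext (_ | p)
  · simp [none_mem_hitting, none_mem_linkCells]
  rw [some_mem_hitting, some_mem_linkCells]
  constructor
  · rintro ⟨hp, hrp⟩
    obtain ⟨hpF, hpW⟩ := mem_cells.1 hp
    obtain ⟨y, hy, hyQ, hy0⟩ :=
      exists_mem_relCone_of_codisjoint (M.linearIndepOn hpF) hrp hQ.codisjoint
    obtain ⟨l, hl, -, hly⟩ := mem_relCone.1 hy
    exact ⟨⟨hp, hrp.subset⟩, y, hy,
      ⟨hyQ, labels_subset_iff.1 hpW.subset (mem_span_image_iff.2 ⟨l, hl, hly⟩)⟩, hy0⟩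
  · rintro ⟨⟨hp, hrp⟩, y, hy, ⟨hyQ, -⟩, hy0⟩
    refine ⟨hp, hrp.ssubset_of_ne ?_⟩
    rintro rfl
    rw [coe_relCone_self] at hy
    exact hy0 (Submodule.disjoint_def.1 hQ.disjoint y hy hyQ)

theorem exists_covBy_mem_cells [Finite ι] (hr : r ∈ M.cells W) (hc : r.card ≠ W.card) :
    ∃ τ ∈ M.cells W, r ⋖ τ := by
  obtain ⟨hrF, hrW⟩ := mem_cells.1 hr
  obtain ⟨y, hyW, hy⟩ := exists_notMem_span hrF hrW.subset
    ((card_le hrF hrW.subset).lt_of_ne hc)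
  obtain ⟨r', hr', hrr', -⟩ := exists_ssuperset_cell_mem_relCone_iff hr hyW hy
  obtain ⟨w, hwr', hw⟩ := Finset.exists_of_ssubset hrr'
  exact ⟨insert w r, ordConnected_cells.out hr hr' ⟨Finset.subset_insert w r,
    Finset.insert_subset hwr' hrr'.subset⟩, Finset.covBy_insert hw⟩

variable [Finite ι] [Field k] [CharP k 2]

theorem cellBd_cells_mul_self :
    cellBd (k := k) (M.cells W) W.card * cellBd (M.cells W) W.card = 0 :=
  cellBd_mul_self ordConnected_cells fun _ => even_card_covers

theorem homologyLeOne_linkCells (hr : r ∈ M.cells W)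
    (ih : ∀ r' ∈ M.cells W, r ⊂ r' →
      AcyclicOn (cellBd (k := k) (M.cells W) W.card).mulVecLin (starCells (M.cells W) r')) :
    HomologyLeOne (cellBd (k := k) (M.cells W) W.card).mulVecLin (linkCells (M.cells W) r) := by
  cases nonempty_fintype ι
  obtain ⟨Q, hQ⟩ := Submodule.exists_isCompl (Submodule.span ℝ (M.pos '' r))
  have hindep {p : Finset V} (hp : p ∈ M.cells W) := M.linearIndepOn (mem_cells.1 hp).1
  have hlocal : IsLocal (cellBd (k := k) (M.cells W) W.card).mulVecLin
      {p | p ∈ M.cells W ∧ r ⊆ p} fun p => (relCone M.pos p r : Set (ι → ℝ)) :=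
    isLocal_cellBd cellBd_cells_mul_self (fun _ _ h => relCone_mono h r) r
  rw [linkCells_eq_hitting hQ]
  refine HomologyLeOne.hitting_sphere (Set.toFinite _) hlocal _
    (fun p hp => hQ.disjoint.mono (lineal_relCone_le (hindep hp.1)) inf_le_left)
    fun K hK hKc hKv hKn => ?_
  refine AcyclicOn.hitting_of_convex (Set.toFinite _) hlocal
    (fun p hp => isClosed_relCone (hindep hp.1) r) (fun p _ => (relCone M.pos p r).convex)
    hKc hKv hKn fun x hx => ?_
  obtain ⟨⟨hxQ, hxW⟩, hx0⟩ := hK hx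
  obtain ⟨r', hr', hrr', h⟩ := exists_ssuperset_cell_mem_relCone_iff hr hxW
    fun hxr => hx0 (Submodule.disjoint_def.1 hQ.disjoint x hxr hxQ)
  rw [hitting_eq_starCells hrr'.subset fun τ hτ hrτ => ?_]
  · exact ih r' hr' hrr'
  · rw [Set.inter_singleton_nonempty]
    exact h τ (mem_cells.1 hτ).1 hrτ

theorem acyclicOn_starCells_of_mem (hr : r ∈ M.cells W) :
    AcyclicOn (cellBd (k := k) (M.cells W) W.card).mulVecLin (starCells (M.cells W) r) := by
  induction r using WellFoundedGT.induction with
  | ind r ih =>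
  refine acyclicOn_starCells_of_homologyLeOne cellBd_cells_mul_self hr
    (or_iff_not_imp_left.2 (exists_covBy_mem_cells hr))
    (homologyLeOne_linkCells hr fun r' hr' hlt => ih r' hlt hr')

/-- Close to `faceSum M.pos r`, the open orthant meets the cells containing `r` and no others. -/
theorem exists_convex_hitting_eq (hr : M.Face r) (hrW : M.labels r ⊆ W) :
    ∃ A ⊆ openOrthant W, Convex ℝ A ∧ A.Nonempty ∧
      (∀ x ∈ A, ∀ τ, M.Face τ → x ∈ relCone M.pos τ ∅ → r ⊆ τ) ∧
      ∀ τ ∈ M.cells W, r ⊆ τ → (relCone M.pos τ ∅ ∩ A : Set (ι → ℝ)).Nonempty := by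
  cases nonempty_fintype ι
  obtain ⟨δ, hδ, hball⟩ := Metric.eventually_nhds_iff_ball.1 (eventually_subset hr)
  have hsum := (isCarrier_faceSum hr).mem_openOrthant
  have hsumW : faceSum M.pos r ∈ vanishOff W := fun i hi =>
    openOrthant_subset _ hsum i fun h => hi (hrW h)
  have hmeet (y : ι → ℝ) (hy : y ∈ openOrthant W) :
      ∃ ε : ℝ, 0 < ε ∧
        faceSum M.pos r + ε • y ∈ Metric.ball (faceSum M.pos r) δ ∩ openOrthant W := by
    obtain ⟨ε, hball, hε⟩ := (((tendsto_add_smul _ y).eventually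
      (Metric.ball_mem_nhds (faceSum M.pos r) hδ)).and self_mem_nhdsWithin).exists
    exact ⟨ε, hε, hball, add_smul_mem_openOrthant hsum.1 hsumW hy hε⟩
  refine ⟨_, Set.inter_subset_right, (convex_ball _ _).inter (convex_openOrthant W), ?_,
    fun x hx => hball x hx.1, fun τ hτ hrτ => ?_⟩
  · obtain ⟨ε, -, h⟩ := hmeet _ (indicator_mem_openOrthant W)
    exact ⟨_, h⟩
  · obtain ⟨ε, hε, h⟩ := hmeet _ (faceSum_mem_openOrthant hτ)
    refine ⟨_, add_mem (relCone_mono hrτ ∅ (faceSum_mem_relCone r)) ?_, h⟩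
    exact PointedCone.smul_mem _ hε.le (faceSum_mem_relCone τ)

theorem acyclicOn_starCells (hr : M.Face r) (hrW : M.labels r ⊆ W) :
    AcyclicOn (cellBd (k := k) (M.cells W) W.card).mulVecLin (starCells (M.cells W) r) := by
  cases nonempty_fintype ι
  obtain ⟨A, hAW, hA, hne, hsub, hmeet⟩ := exists_convex_hitting_eq hr hrW
  obtain ⟨K, hKA, hK, hKc, hKne, hKhit⟩ := exists_isCompact_convex_hitting_eq
    (T := {p | p ∈ M.cells W ∧ r ⊆ p}) (C := fun p => relCone M.pos p ∅) (Set.toFinite _) hA hne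
  rw [← hitting_eq_starCells subset_rfl fun τ hτ hrτ => iff_of_true (hmeet τ hτ hrτ) hrτ, ← hKhit]
  refine AcyclicOn.hitting_of_convex (Set.toFinite _)
    (isLocal_cellBd cellBd_cells_mul_self (fun _ _ h => relCone_mono h ∅) r)
    (fun p hp => isClosed_relCone (M.linearIndepOn (mem_cells.1 hp.1).1) ∅)
    (fun p _ => (relCone M.pos p ∅).convex) hK hKc hKne fun x hx => ?_
  obtain ⟨r', hr', hc⟩ := exists_isCarrier_mem_cells (M := M) (hAW (hKA hx))
  have hrr' : r ⊆ r' := hsub x (hKA hx) r' hc.1 ((hc.mem_relCone_iff hc.1).2 subset_rfl)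
  rw [hitting_eq_starCells hrr' fun τ hτ _ => ?_]
  · exact acyclicOn_starCells_of_mem hr'
  · rw [Set.inter_singleton_nonempty]
    exact hc.mem_relCone_iff (mem_cells.1 hτ).1

end GeomFan

section ConeChain

variable {V k : Type*} [CommRing k] {T : Finset (Finset V)} {N : ℕ} {v : V} {τ : Finset V}
  {c : Option (Finset V) → k}

/-- The chain `c` joined with the vertex `v`. -/
def coneChain (v : V) (c : Option (Finset V) → k) : Option (Finset V) → k
  | none => 0
  | some τ => if v ∈ τ then c (some (τ.erase v)) else 0

theorem coneChain_some_of_notMem (hv : v ∉ τ) : coneChain v c (some τ) = 0 := if_neg hv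

theorem coneChain_insert_of_notMem (hv : v ∉ τ) :
    coneChain v c (some (insert v τ)) = c (some τ) := by
  rw [coneChain, if_pos (Finset.mem_insert_self v τ), Finset.erase_insert hv]

variable [Fintype V]

theorem sum_covBy_eq (T : Finset (Finset V)) (τ : Finset V) (f : Finset V → k) :
    ∑ υ ∈ T with τ ⋖ υ, f υ = ∑ w with w ∉ τ ∧ insert w τ ∈ T, f (insert w τ) := by
  refine (Finset.sum_bij (fun w _ => insert w τ) (fun w hw => ?_) (fun w hw _ _ h => ?_)
    (fun υ hυ => ?_) fun _ _ => rfl).symm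
  · obtain ⟨hw, hT⟩ := (Finset.mem_filter.1 hw).2
    exact Finset.mem_filter.2 ⟨hT, Finset.covBy_insert hw⟩
  · exact (Finset.insert_inj (Finset.mem_filter.1 hw).2.1).1 h
  · obtain ⟨hυ, hτυ⟩ := Finset.mem_filter.1 hυ
    obtain ⟨w, hw, rfl⟩ := Finset.covBy_iff_exists_insert.1 hτυ
    exact ⟨w, Finset.mem_filter.2 ⟨Finset.mem_univ w, hw, hυ⟩, rfl⟩

theorem cellBd_mulVec_coneChain_of_notMem (hτ : τ ∈ T) (hv : v ∉ τ)
    (hc : insert v τ ∉ T → c (some τ) = 0) :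
    (cellBd T N *ᵥ coneChain v c) (some τ) = c (some τ) := by
  rw [cellBd_mulVec_some _ hτ, sum_covBy_eq, coneChain, ite_self, add_zero]
  refine (Finset.sum_eq_single v (fun w _ hw => ?_) fun h => ?_).trans
    (coneChain_insert_of_notMem hv)
  · exact coneChain_some_of_notMem (by simp [hv, hw.symm])
  · rw [coneChain_insert_of_notMem hv]
    exact hc fun hT => h (by simp [hv, hT])

theorem cellBd_mulVec_coneChain_of_mem [CharP k 2] (hτ : τ ∈ T) (hv : v ∈ τ)
    (hτv : τ.erase v ∈ T) (h0 : c none = 0) (hcycle : (cellBd T N *ᵥ c) (some (τ.erase v)) = 0)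
    (herase : ∀ w ∉ τ, insert w τ ∈ T → insert w (τ.erase v) ∈ T)
    (hc : ∀ w ∉ τ, insert w (τ.erase v) ∈ T → insert w τ ∉ T →
      c (some (insert w (τ.erase v))) = 0) :
    (cellBd T N *ᵥ coneChain v c) (some τ) = c (some τ) := by
  rw [cellBd_mulVec_some _ hτv, sum_covBy_eq, h0, ite_self, add_zero] at hcycle
  rw [cellBd_mulVec_some _ hτ, sum_covBy_eq, coneChain, ite_self, add_zero]
  have hsplit : ({w | w ∉ τ.erase v ∧ insert w (τ.erase v) ∈ T} : Finset V) =
      insert v ({w | w ∉ τ ∧ insert w (τ.erase v) ∈ T} : Finset V) := by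
    ext w
    by_cases hw : w = v
    · simp [hw, Finset.insert_erase hv, hτ]
    · simp [hw]
  rw [hsplit, Finset.sum_insert (by simp [hv]), Finset.insert_erase hv,
    CharTwo.add_eq_zero] at hcycle
  rw [hcycle]
  refine (Finset.sum_congr rfl fun w hw => ?_).trans (Finset.sum_subset (fun w hw => ?_)
    fun w hw hw' => ?_)
  · obtain ⟨hw, -⟩ := (Finset.mem_filter.1 hw).2
    rw [coneChain, if_pos (Finset.mem_insert_of_mem hv),
      Finset.erase_insert_of_ne (ne_of_mem_of_not_mem hv hw).symm]
  · simp only [Finset.mem_filter_univ] at hw ⊢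
    exact ⟨hw.1, herase w hw.1 hw.2⟩
  · simp only [Finset.mem_filter_univ] at hw hw'
    exact hc w hw.1 hw.2 fun h => hw' ⟨hw.1, h⟩

end ConeChain

section UpClosed

variable {V k : Type*} [CommRing k] {S T : Finset (Finset V)} {N : ℕ} {τ : Finset V}

theorem filter_covBy_eq (hTS : T ⊆ S) (hup : ∀ τ ∈ T, ∀ υ ∈ S, τ ⊆ υ → υ ∈ T) (hτ : τ ∈ T) :
    ({υ ∈ T | τ ⋖ υ} : Finset (Finset V)) = {υ ∈ S | τ ⋖ υ} :=
  (Finset.filter_subset_filter _ hTS).antisymm fun υ hυ => by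
    obtain ⟨hυ, hτυ⟩ := Finset.mem_filter.1 hυ
    exact Finset.mem_filter.2 ⟨hup τ hτ υ hυ hτυ.le, hτυ⟩

variable [Fintype V]

theorem AcyclicOn.of_upClosed (hTS : T ⊆ S) (hup : ∀ τ ∈ T, ∀ υ ∈ S, τ ⊆ υ → υ ∈ T)
    {U : Set (Option (Finset V))} (hU : ∀ τ, some τ ∈ U → τ ∈ T)
    (h : AcyclicOn (cellBd (k := k) S N).mulVecLin U) :
    AcyclicOn (cellBd (k := k) T N).mulVecLin U := by
  have heq (c : Option (Finset V) → k) :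
      ∀ x ∈ U, (cellBd T N).mulVecLin c x = (cellBd S N).mulVecLin c x := by
    rintro (_ | τ) hx
    · exact (cellBd_mulVec_none c).trans (cellBd_mulVec_none c).symm
    · rw [Matrix.mulVecLin_apply, Matrix.mulVecLin_apply, cellBd_mulVec_some c (hU τ hx),
        cellBd_mulVec_some c (hTS (hU τ hx)), filter_covBy_eq hTS hup (hU τ hx)]
  intro c hc
  obtain ⟨b, hb⟩ := h c fun x hx => (heq c x hx).symm.trans (hc x hx)
  exact ⟨b, fun x hx => (hb x hx).trans (heq b x hx).symm⟩

end UpClosed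

theorem LabelledComplex.labels_insert_of_subset {V ι : Type*} {K : LabelledComplex V ι} {v : V}
    {s : Finset V} (hv : K.label v ⊆ K.labels s) : K.labels (insert v s) = K.labels s := by
  rw [labels, Finset.biUnion_insert]
  exact Finset.union_eq_right.2 hv

namespace GeomFan

section

variable {V ι k : Type*} [Fintype V] {M : GeomFan V ι} {W : Finset ι} {v : V} {H s : Finset V}

theorem insert_mem_cells_iff (hv : M.label v ⊆ M.labels s) (hs : s ∈ M.cells W) :
    insert v s ∈ M.cells W ↔ M.Face (insert v s) := by
  rw [mem_cells, M.labels_insert_of_subset hv, (mem_cells.1 hs).2, and_iff_left rfl]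

theorem erase_mem_cells (hv : M.label v ⊆ M.labels H) (hvH : v ∉ H) (hHs : H ⊆ s)
    (hs : s ∈ M.cells W) : s.erase v ∈ M.cells W := by
  obtain ⟨hsF, rfl⟩ := mem_cells.1 hs
  have hsub : M.label v ⊆ M.labels (s.erase v) :=
    hv.trans (M.monotone_labels (Finset.subset_erase.2 ⟨hHs, hvH⟩))
  refine mem_cells.2 ⟨M.face_of_subset (Finset.erase_subset v s) hsF,
    (M.monotone_labels (Finset.erase_subset v s)).antisymm ?_⟩
  rw [← M.labels_insert_of_subset hsub]
  exact M.monotone_labels (Finset.insert_erase_subset v s)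

theorem cellBd_mulVec_coneChain [CommRing k] [CharP k 2] (hvH : v ∉ H)
    (hv : M.label v ⊆ M.labels H) {c : Option (Finset V) → k} (hc0 : c none = 0)
    (hc1 : ∀ τ ∈ M.cells W, H ⊆ τ → ¬M.Face (insert v τ) → c (some τ) = 0)
    (hc : ∀ τ ∈ M.cells W, H ⊆ τ → (cellBd (M.cells W) W.card *ᵥ c) (some τ) = 0)
    {τ : Finset V} (hτ : τ ∈ M.cells W) (hH : H ⊆ τ) :
    (cellBd (M.cells W) W.card *ᵥ coneChain v c) (some τ) = c (some τ) := by
  have hc1' (σ : Finset V) (hHσ : H ⊆ σ) (hσ : σ ∈ M.cells W) (h : insert v σ ∉ M.cells W) :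
      c (some σ) = 0 :=
    hc1 σ hσ hHσ (mt (insert_mem_cells_iff (hv.trans (M.monotone_labels hHσ)) hσ).2 h)
  by_cases hvτ : v ∈ τ
  · have hHe : H ⊆ τ.erase v := Finset.subset_erase.2 ⟨hH, hvH⟩
    have hτe := erase_mem_cells hv hvH hH hτ
    refine cellBd_mulVec_coneChain_of_mem hτ hvτ hτe hc0 (hc _ hτe hHe) (fun w hw hT => ?_)
      fun w _ hT hT' => ?_
    · rw [← Finset.erase_insert_of_ne (ne_of_mem_of_not_mem hvτ hw).symm]
      exact erase_mem_cells hv hvH (hH.trans (Finset.subset_insert w τ)) hT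
    · refine hc1' _ (hHe.trans (Finset.subset_insert _ _)) hT ?_
      rwa [Finset.insert_comm, Finset.insert_erase hvτ]
  · exact cellBd_mulVec_coneChain_of_notMem hτ hvτ (hc1' τ hH hτ)

end

section

variable {V ι k : Type u} [Fintype V] [Finite ι] [Field k] [CharP k 2] {M : GeomFan V ι}
  {W : Finset ι} {a : Matrix V ι k}

theorem regOn_of_upClosed (ha : ∀ v i, a v i ≠ 0 → i ∈ M.label v)
    (hind : ∀ τ, M.Face τ → LinearIndependent k fun v : τ => a v) {T : Finset (Finset V)}
    (hTS : T ⊆ M.cells W) (hup : ∀ τ ∈ T, ∀ υ ∈ M.cells W, τ ⊆ υ → υ ∈ T)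
    {Γ : Finset V → Prop} (hΓ : Monotone fun G => ¬Γ G) (hΓT : ∀ τ ∈ T, ∀ G ⊆ τ, Γ G)
    (hac : ∀ G, Γ G →
      AcyclicOn (cellBd (k := k) (M.cells W) W.card).mulVecLin (starCells T G)) :
    RegOn (linForm a) ⊤ (supportIdeal k _ hΓ) W := by
  refine regOn_top_of_acyclicOn_starCells hΓ hΓT (cellBd_mul_self ?_ fun r hr hc => ?_)
    (fun G hG => (hac G hG).of_upClosed hTS hup fun τ h => (some_mem_starCells.1 h).1)
    (fun τ hτ => hind τ (mem_cells.1 (hTS hτ)).1) fun τ hτ v hv i hi => ?_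
  · exact ⟨fun r hr t ht s hs =>
      hup r hr s (ordConnected_cells.out (hTS hr) (hTS ht) hs) hs.1⟩
  · rw [filter_covBy_eq hTS hup hr]
    exact even_card_covers (hTS hr) hc
  · by_contra h
    exact hi ((mem_cells.1 (hTS hτ)).2 ▸ Finset.mem_biUnion.2 ⟨v, hv, ha v i h⟩)

theorem regOn_star (ha : ∀ v i, a v i ≠ 0 → i ∈ M.label v)
    (hind : ∀ τ, M.Face τ → LinearIndependent k fun v : τ => a v) (E : Finset V)
    (W : Finset ι) : RegOn (linForm a) ⊤ ((M.star E).nonfaceIdeal k W) W := by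
  refine regOn_of_upClosed ha hind (T := {τ ∈ M.cells W | E ⊆ τ}) (Finset.filter_subset _ _)
    (fun τ hτ υ hυ h => Finset.mem_filter.2 ⟨hυ, (Finset.mem_filter.1 hτ).2.trans h⟩)
    _ (fun τ hτ G hG => ?_) (fun G hG => ?_)
  · obtain ⟨hτ, hE⟩ := Finset.mem_filter.1 hτ
    obtain ⟨hτF, hτW⟩ := mem_cells.1 hτ
    have hsub := Finset.union_subset hG hE
    exact ⟨M.face_of_subset hsub hτF, (M.monotone_labels hsub).trans hτW.subset⟩
  · convert acyclicOn_starCells (k := k) hG.1 hG.2 using 1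
    ext (_ | τ)
    · simp [none_mem_starCells]
    · simp only [some_mem_starCells, Finset.mem_filter, Finset.union_subset_iff]
      tauto

/-- A cycle of the star of `G ∪ E` relative to the cells whose union with `v` is not a face
bounds its join with `v`. -/
theorem acyclicOn_starCells_filter_not_face {E G : Finset V} {v : V} (hvE : v ∉ E)
    (hv : M.label v ⊆ M.labels E) (hGF : M.Face (G ∪ E)) (hGW : M.labels (G ∪ E) ⊆ W)
    (hvG : v ∉ G) : AcyclicOn (cellBd (k := k) (M.cells W) W.card).mulVecLin
      (starCells {τ ∈ M.cells W | E ⊆ τ ∧ ¬M.Face (insert v τ)} G) := by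
  refine AcyclicOn.of_acyclic_relative
    (fun c => by simp [Matrix.mulVec_mulVec, cellBd_cells_mul_self]) ?_
    (acyclicOn_starCells hGF hGW) fun c hc1 hc => ⟨coneChain v c, ?_, ?_⟩
  · rintro (_ | τ) h
    · exact none_mem_starCells
    · obtain ⟨hτ, hG⟩ := some_mem_starCells.1 h
      obtain ⟨hτ, hE, -⟩ := Finset.mem_filter.1 hτ
      exact some_mem_starCells.2 ⟨hτ, Finset.union_subset hG hE⟩
  · rintro (_ | τ) h
    · rfl
    · obtain ⟨hτ, -, hF⟩ := Finset.mem_filter.1 (some_mem_starCells.1 h).1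
      refine coneChain_some_of_notMem fun hvτ => hF ?_
      rw [Finset.insert_eq_of_mem hvτ]
      exact (mem_cells.1 hτ).1
  · rintro (_ | τ) h
    · exact (cellBd_mulVec_none _).trans (hc1 none_mem_starCells).symm
    · obtain ⟨hτ, hH⟩ := some_mem_starCells.1 h
      refine cellBd_mulVec_coneChain (H := G ∪ E) (by simp [hvG, hvE])
        (hv.trans (M.monotone_labels Finset.subset_union_right)) (hc1 none_mem_starCells)
        (fun σ hσ hHσ hF => hc1 (some_mem_starCells.2 ?_))
        (fun σ hσ hHσ => hc (some_mem_starCells.2 ⟨hσ, hHσ⟩)) hτ hH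
      obtain ⟨hG, hE⟩ := Finset.union_subset_iff.1 hHσ
      exact ⟨Finset.mem_filter.2 ⟨hσ, hE, hF⟩, hG⟩

theorem regOn_starDeletion (ha : ∀ v i, a v i ≠ 0 → i ∈ M.label v)
    (hind : ∀ τ, M.Face τ → LinearIndependent k fun v : τ => a v) {E : Finset V} {v : V}
    (hvE : v ∉ E) (hv : M.label v ⊆ M.labels E) (W : Finset ι) :
    RegOn (linForm a) ⊤ ((M.starDeletion E v).nonfaceIdeal k W) W := by
  refine regOn_of_upClosed ha hind (T := {τ ∈ M.cells W | E ⊆ τ ∧ ¬M.Face (insert v τ)})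
    (Finset.filter_subset _ _) (fun τ hτ υ hυ h => ?_) _ (fun τ hτ G hG => ?_)
    fun G ⟨⟨hGF, hvG⟩, hGW⟩ => acyclicOn_starCells_filter_not_face hvE hv hGF hGW hvG
  all_goals obtain ⟨hτ, hE, hF⟩ := Finset.mem_filter.1 hτ
  · exact Finset.mem_filter.2 ⟨hυ, hE.trans h, fun hF' =>
      hF (M.face_of_subset (Finset.insert_subset_insert v h) hF')⟩
  · obtain ⟨hτF, hτW⟩ := mem_cells.1 hτ
    have h := Finset.union_subset hG hE
    refine ⟨⟨M.face_of_subset h hτF, fun hvG => hF ?_⟩, (M.monotone_labels h).trans hτW.subset⟩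
    rwa [Finset.insert_eq_of_mem (hG hvG)]

end

end GeomFan

/-! ### Generic coefficients -/

theorem exists_injective_mem_of_linearIndependent {κ ι K : Type*} [Field K] [Finite κ]
    {w : κ → ι → K} (hw : LinearIndependent K w) {L : κ → Finset ι}
    (hL : ∀ v i, w v i ≠ 0 → i ∈ L v) : ∃ f : κ → ι, Function.Injective f ∧ ∀ v, f v ∈ L v := by
  refine (Finset.all_card_le_biUnion_card_iff_exists_injective L).1 fun s => ?_
  have hs : LinearIndependent K fun v : s => w v := hw.comp _ Subtype.val_injective
  have hrestrict : LinearIndependent K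
      fun v : s => LinearMap.funLeft K K ((↑) : s.biUnion L → ι) (w v) := by
    rw [Fintype.linearIndependent_iff] at hs ⊢
    refine fun g hg => hs g (funext fun i => ?_)
    by_cases hi : i ∈ s.biUnion L
    · simpa [LinearMap.funLeft_apply] using congrFun hg ⟨i, hi⟩
    · rw [Finset.sum_apply]
      refine Finset.sum_eq_zero fun v _ => ?_
      have hvi : w v i = 0 :=
        not_not.1 fun h => hi (Finset.mem_biUnion.2 ⟨v, v.2, hL v i h⟩)
      simp [hvi]
  simpa using hrestrict.fintype_card_le_finrank

section GenericCoefficients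

variable {V ι : Type*}

/-- The matrix with an independent variable at each position allowed by `L`, and zeros elsewhere.
Coefficients in `ZMod 2` keep orientation signs out of the chain complexes. -/
def genericMatrix (L : V → Finset ι) : Matrix V ι (MvPolynomial (V × ι) (ZMod 2)) :=
  fun v i => if i ∈ L v then MvPolynomial.X (v, i) else 0

variable (V ι) in
/-- The field of rational functions over `𝔽₂` in variables indexed by `V × ι`. -/
abbrev GenField := FractionRing (MvPolynomial (V × ι) (ZMod 2))

/-- The generic coefficients with support prescribed by `L`. -/
def genCoeff (L : V → Finset ι) : Matrix V ι (GenField V ι) :=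
  (genericMatrix L).map (algebraMap _ _)

theorem mem_of_genCoeff_ne_zero {L : V → Finset ι} {v : V} {i : ι} (h : genCoeff L v i ≠ 0) :
    i ∈ L v := by
  by_contra hi
  exact h (by simp [genCoeff, genericMatrix, hi])

instance charP_genField : CharP (GenField V ι) 2 :=
  charP_of_injective_algebraMap (IsFractionRing.injective (MvPolynomial (V × ι) (ZMod 2)) _) 2

/-- Setting the variables along the graph of `f` to one and all others to zero turns the matrix
into the identity. -/
theorem det_submatrix_genericMatrix_ne_zero {L : V → Finset ι} {τ : Finset V} {f : τ → ι}
    (hf : Function.Injective f) (hfL : ∀ v : τ, f v ∈ L v) :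
    ((genericMatrix L).submatrix ((↑) : τ → V) f).det ≠ 0 := by
  let e : V × ι → ZMod 2 := fun x => if ∃ v : τ, (v : V) = x.1 ∧ f v = x.2 then 1 else 0
  have he (v v' : τ) : e (v, f v') = if v = v' then 1 else 0 := by
    refine if_congr ⟨?_, ?_⟩ rfl rfl
    · rintro ⟨u, hu, hu'⟩
      exact (Subtype.ext hu).symm.trans (hf hu')
    · rintro rfl
      exact ⟨v, rfl, rfl⟩
  have hone :
      (MvPolynomial.eval e).mapMatrix ((genericMatrix L).submatrix ((↑) : τ → V) f) = 1 := by
    ext v v'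
    rw [Matrix.one_apply, ← he]
    by_cases h : f v' ∈ L v
    · simp [genericMatrix, h]
    · have hv : v ≠ v' := by
        rintro rfl
        exact h (hfL v)
      simp [genericMatrix, h, he, hv]
  intro h
  have hdet := RingHom.map_det (MvPolynomial.eval e) ((genericMatrix L).submatrix ((↑) : τ → V) f)
  simp [hone, h] at hdet

theorem linearIndependent_genCoeff {L : V → Finset ι} {τ : Finset V} {f : τ → ι}
    (hf : Function.Injective f) (hfL : ∀ v : τ, f v ∈ L v) :
    LinearIndependent (GenField V ι) fun v : τ => genCoeff L v := by
  refine LinearIndependent.of_comp (LinearMap.funLeft (GenField V ι) (GenField V ι) f) ?_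
  change LinearIndependent _ ((algebraMap _ (GenField V ι)).mapMatrix
    ((genericMatrix L).submatrix ((↑) : τ → V) f)).row
  rw [Matrix.linearIndependent_rows_iff_isUnit, Matrix.isUnit_iff_isUnit_det, ← RingHom.map_det,
    isUnit_iff_ne_zero, map_ne_zero_iff _ (IsFractionRing.injective _ _)]
  exact det_submatrix_genericMatrix_ne_zero hf hfL

end GenericCoefficients

theorem card_sdiff_union_of_subset {V : Type*} {E τ r : Finset V} (hr : r ⊆ E) :
    (τ \ E ∪ r).card = (τ \ E).card + r.card :=
  Finset.card_union_of_disjoint (Finset.sdiff_disjoint.mono_right hr)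

theorem sum_union_eq_pow_card {V : Type*} [Fintype V] {R : Type*} [CommSemiring R] {E τ : Finset V}
    (hEτ : E ⊆ τ) (x : R) :
    ∑ s : Finset V with s ∪ E = τ, x ^ s.card = x ^ (τ.card - E.card) * (x + 1) ^ E.card := by
  trans ∑ r ∈ E.powerset, x ^ ((τ \ E).card + r.card)
  · refine Finset.sum_nbij' (fun s => s ∩ E) (fun r => τ \ E ∪ r)
      (fun s _ => Finset.mem_powerset.2 Finset.inter_subset_right) ?_ ?_ ?_ ?_
    all_goals simp only [Finset.mem_filter_univ, Finset.mem_powerset]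
    · grind
    · grind
    · grind
    · intro s hs
      rw [← card_sdiff_union_of_subset Finset.inter_subset_right]
      congr 2
      grind
  · simp only [pow_add, ← Finset.mul_sum, ← Finset.card_sdiff_of_subset hEτ]
    congr 1
    simpa using Finset.sum_pow_mul_eq_add_pow x 1 E

namespace GeomFan

section LocalHSeries

variable {V ι : Type*} [Fintype V] [Fintype ι] (M : GeomFan V ι)

/-- The local `h`-polynomial at `E` as a power series, in the form
`∑ t^(|τ| - |E|) (-t)^(n - |σ(τ)|) (1 - t)^(e(τ))`, summed over the faces `τ` containing `E`. -/
def localHSeries (E : Finset V) : PowerSeries ℤ :=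
  ∑ τ with M.Face τ ∧ E ⊆ τ, PowerSeries.X ^ (τ.card - E.card) *
    ((-PowerSeries.X) ^ (Fintype.card ι - (M.labels τ).card) *
      (1 - PowerSeries.X) ^ ((M.labels τ).card - τ.card))

theorem sum_star_eq_localHSeries (E : Finset V) :
    (∑ s with M.Face (s ∪ E), ((PowerSeries.X : PowerSeries ℤ) * PowerSeries.mk 1) ^ s.card *
      ((-PowerSeries.X) ^ (Fintype.card ι - (M.labels (s ∪ E)).card) *
        (1 - PowerSeries.X) ^ (M.labels (s ∪ E)).card)) = M.localHSeries E := by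
  have hmk : (PowerSeries.mk 1 : PowerSeries ℤ) * (1 - PowerSeries.X) = 1 :=
    PowerSeries.mk_one_mul_one_sub_eq_one ℤ
  have hmk' : (PowerSeries.X : PowerSeries ℤ) * PowerSeries.mk 1 + 1 = PowerSeries.mk 1 := by
    linear_combination (-1 : PowerSeries ℤ) * hmk
  rw [← Finset.sum_fiberwise_of_maps_to (g := fun s => s ∪ E)
    (t := {τ | M.Face τ ∧ E ⊆ τ}) (fun s hs => by simpa using hs)]
  refine Finset.sum_congr rfl fun τ hτ => ?_
  obtain ⟨hτF, hEτ⟩ := (Finset.mem_filter.1 hτ).2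
  have hsum : ∑ s with M.Face (s ∪ E) ∧ s ∪ E = τ,
      ((PowerSeries.X : PowerSeries ℤ) * PowerSeries.mk 1) ^ s.card =
      PowerSeries.X ^ (τ.card - E.card) * PowerSeries.mk 1 ^ τ.card := by
    rw [Finset.filter_congr fun s _ => and_iff_right_of_imp fun h : s ∪ E = τ => h ▸ hτF,
      sum_union_eq_pow_card hEτ, hmk', mul_pow, mul_assoc, ← pow_add,
      Nat.sub_add_cancel (Finset.card_le_card hEτ)]
  rw [Finset.filter_filter, Finset.sum_congr rfl (g := fun s =>
    ((PowerSeries.X : PowerSeries ℤ) * PowerSeries.mk 1) ^ s.card *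
      ((-PowerSeries.X) ^ (Fintype.card ι - (M.labels τ).card) *
        (1 - PowerSeries.X) ^ (M.labels τ).card)) fun s hs => by
      rw [(Finset.mem_filter.1 hs).2.2], ← Finset.sum_mul, hsum]
  have hpow : (PowerSeries.mk 1 : PowerSeries ℤ) ^ τ.card * (1 - PowerSeries.X) ^ τ.card = 1 := by
    rw [← mul_pow, hmk, one_pow]
  obtain ⟨e, he⟩ := Nat.exists_eq_add_of_le (M.card_le hτF subset_rfl)
  rw [he, Nat.add_sub_cancel_left, pow_add]
  linear_combination (PowerSeries.X : PowerSeries ℤ) ^ (τ.card - E.card) *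
    (-PowerSeries.X) ^ (Fintype.card ι - (τ.card + e)) * (1 - PowerSeries.X) ^ e * hpow

end LocalHSeries

section Generic

variable {V ι : Type u} [Fintype V] {M : GeomFan V ι}

theorem linearIndependent_genCoeff_label {τ : Finset V} (hτ : M.Face τ) :
    LinearIndependent (GenField V ι) fun v : τ => genCoeff M.label v := by
  obtain ⟨f, hf, hfL⟩ := exists_injective_mem_of_linearIndependent
    (M.linearIndepOn hτ).linearIndependent fun _ _ h => M.mem_label.2 h
  exact linearIndependent_genCoeff hf hfL

theorem coeff_localHSeries_ne_zero [Fintype ι] {E F₁ F₂ B : Finset V}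
    (hface : M.Face (F₁ ∪ F₂ ∪ B ∪ E)) (hF₁ : Disjoint F₁ (F₂ ∪ E)) (hF₁B : Disjoint F₁ B)
    (hint : M.labels (F₁ ∪ B ∪ E) = Finset.univ)
    (hl : ∀ v ∈ F₁, M.label v ⊆ M.labels (F₂ ∪ E))
    (hapex : ∀ v ∈ B, ∀ p, ∃ q, q ≠ p ∧ q ∉ M.labels (B.erase v ∪ (F₁ ∪ (F₂ ∪ E)))) :
    PowerSeries.coeff (F₁.card + B.card) (M.localHSeries E) ≠ 0 := by
  have ha : ∀ v i, genCoeff M.label v i ≠ 0 → i ∈ M.label v := fun _ _ => mem_of_genCoeff_ne_zero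
  have hind := fun τ (hτ : M.Face τ) => linearIndependent_genCoeff_label hτ
  have hseries : (M.star E).localSeries (genCoeff M.label) Finset.univ Finset.univ =
      M.localHSeries E :=
    (CarrierComplex.localSeries_univ (LabelledComplex.compatible_star ha E)
      (regOn_star ha hind E)).trans (M.sum_star_eq_localHSeries E)
  exact hseries ▸ LabelledComplex.coeff_localSeries_star_ne_zero ha
    (fun E v hvE hv W => regOn_starDeletion ha hind hvE hv W) hface hF₁ hF₁B hint hl hapex

end Generic

end GeomFan

/-! ### Fans in coordinate space -/

section FullPartition

variable {n : ℕ} {E F F₁ F₂ : Finset (Fin n → ℝ)} {v : Fin n → ℝ}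

theorem mem_suppSet {i : Fin n} : i ∈ suppSet F ↔ ∃ v ∈ F, v i ≠ 0 :=
  Finset.mem_filter_univ i

theorem monotone_suppSet : Monotone (suppSet (n := n)) := fun _ _ h _ hi =>
  let ⟨v, hv, hvi⟩ := mem_suppSet.1 hi
  mem_suppSet.2 ⟨v, h hv, hvi⟩

theorem one_lt_card_baseDirs (hU : ¬IsUPyramid E F) (hv : v ∈ apices E F) :
    1 < (baseDirs E F v).card := by
  have hne : (baseDirs E F v).Nonempty := by
    rw [baseDirs, Finset.sdiff_nonempty]
    exact fun h => (Finset.mem_filter.1 hv).2.2.2 (Finset.univ_subset_iff.1 h)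
  exact lt_of_le_of_ne hne.card_pos fun h => hU ⟨v, hv, h.symm⟩

theorem exists_ne_notMem_suppSet_erase (hU : ¬IsUPyramid E F) (hv : v ∈ apices E F) (p : Fin n) :
    ∃ q, q ≠ p ∧ q ∉ suppSet ((F ∪ E).erase v) := by
  obtain ⟨q, hq, hqp⟩ := Finset.exists_mem_ne (one_lt_card_baseDirs hU hv) p
  exact ⟨q, hqp, (Finset.mem_sdiff.1 hq).2⟩

theorem IsFullPartition.suppSet_singleton_subset (h : IsFullPartition E F F₁ F₂) (hv : v ∈ F₁) :
    suppSet {v} ⊆ suppSet (F₂ ∪ E) := by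
  obtain ⟨hF, -, hF₁A, -, -, hsupp⟩ := h
  have hvF : v ∈ F := by
    rw [hF]
    simp [hv]
  rw [hsupp, Finset.subset_sdiff, Finset.disjoint_biUnion_right]
  refine ⟨Finset.subset_univ _, fun A hA => Finset.disjoint_sdiff.mono_left (monotone_suppSet ?_)⟩
  rw [Finset.singleton_subset_iff, Finset.mem_erase, Finset.mem_union]
  exact ⟨fun hvA => Finset.disjoint_left.1 hF₁A hv (hvA ▸ hA), .inl hvF⟩

theorem IsFullPartition.erase_union_eq (h : IsFullPartition E F F₁ F₂) (hFE : Disjoint F E)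
    (hv : v ∈ apices E F) :
    (apices E F).erase v ∪ (F₁ ∪ (F₂ ∪ E)) = (F ∪ E).erase v := by
  obtain ⟨hF, -, hF₁A, hF₂A, -, -⟩ := h
  have hv₁ : v ∉ F₁ := Finset.disjoint_right.1 hF₁A hv
  have hv₂ : v ∉ F₂ := Finset.disjoint_right.1 hF₂A hv
  have hvE : v ∉ E := Finset.disjoint_left.1 hFE (Finset.mem_of_mem_filter v hv)
  have hFE' : F ∪ E = apices E F ∪ (F₁ ∪ (F₂ ∪ E)) := by
    conv_lhs => rw [hF]
    rw [Finset.union_comm _ (apices E F), Finset.union_assoc, Finset.union_assoc]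
  rw [hFE', Finset.erase_union_distrib,
    Finset.erase_eq_of_notMem (s := F₁ ∪ (F₂ ∪ E)) (by simp [hv₁, hv₂, hvE])]

end FullPartition

namespace SimplicialFan

variable {n : ℕ} {S : SimplicialFan n} {E F F₁ F₂ B : Finset (Fin n → ℝ)}

variable (S) in
/-- The type of the vertices of a fan. It is not reducible to a subtype, so that its decidable
equality is the classical one used throughout. -/
def Vert : Type := S.verts

instance fintypeVert : Fintype S.Vert := inferInstanceAs (Fintype S.verts)

/-- The inclusion of the vertices. -/
def vec : S.Vert ↪ (Fin n → ℝ) := Function.Embedding.subtype (· ∈ S.verts)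

variable (S F) in
/-- The vertices of the fan belonging to a set of vectors. -/
def vertsOf : Finset S.Vert := F.subtype (· ∈ S.verts)

theorem mem_vertsOf {v : S.Vert} : v ∈ S.vertsOf F ↔ vec v ∈ F := Finset.mem_subtype

theorem map_vertsOf (hF : F ⊆ S.verts) :
    (S.vertsOf F).map (vec) = F :=
  Finset.subtype_map_of_mem hF

theorem vertsOf_map (s : Finset S.Vert) :
    S.vertsOf (s.map (vec)) = s := by
  ext v
  exact mem_vertsOf.trans (Finset.mem_map' _)

theorem card_vertsOf (hF : F ⊆ S.verts) : (S.vertsOf F).card = F.card := by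
  rw [← Finset.card_map vec, map_vertsOf hF]

theorem vertsOf_union : S.vertsOf (E ∪ F) = S.vertsOf E ∪ S.vertsOf F := by
  ext v
  simp only [mem_vertsOf, Finset.mem_union]

theorem vertsOf_erase (v : S.Vert) : S.vertsOf (F.erase (vec v)) = (S.vertsOf F).erase v := by
  ext w
  simp only [mem_vertsOf, Finset.mem_erase, ne_eq, vec.injective.eq_iff]

theorem disjoint_vertsOf (h : Disjoint E F) : Disjoint (S.vertsOf E) (S.vertsOf F) :=
  Finset.disjoint_left.2 fun _ hE hF =>
    Finset.disjoint_left.1 h (mem_vertsOf.1 hE) (mem_vertsOf.1 hF)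

theorem coe_relCone_eq_coneOf (s : Finset S.Vert) :
    (relCone (vec (S := S)) s ∅ : Set (Fin n → ℝ)) =
      coneOf (s.map (vec)) := by
  ext x
  rw [SetLike.mem_coe, mem_relCone]
  constructor
  · rintro ⟨l, hl, hl0, rfl⟩
    refine ⟨Function.extend vec l 0, fun x hx => ?_, ?_⟩
    · obtain ⟨v, -, rfl⟩ := Finset.mem_map.1 hx
      exact (hl0 v (Finset.notMem_empty v)).trans_eq
        (vec.injective.extend_apply l 0 v).symm
    · rw [linearCombination_eq_sum hl, Finset.sum_map]
      exact Finset.sum_congr rfl fun v _ =>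
        congrArg (· • vec v) (vec.injective.extend_apply l 0 v).symm
  · rintro ⟨l, hl0, rfl⟩
    have hl : (s : Set S.Vert).indicator (fun v => l (vec v)) ∈ vanishOff s :=
      fun v hv => Set.indicator_of_notMem hv _
    refine ⟨_, hl, fun v _ => Set.indicator_apply_nonneg fun hv => ?_, ?_⟩
    · exact hl0 _ (Finset.mem_map_of_mem _ hv)
    · rw [linearCombination_eq_sum hl, Finset.sum_map]
      exact Finset.sum_congr rfl fun v hv =>
        congrArg (· • vec v) (Set.indicator_of_mem (Finset.mem_coe.2 hv) _)

variable (S) in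
/-- The fan with its vertices indexed by a type. -/
def toGeomFan : GeomFan S.Vert (Fin n) where
  Face s := s.map (vec) ∈ S.faces
  label v := suppSet {vec v}
  face_of_subset h ht := S.down_closed _ ht _ (Finset.map_subset_map.2 h)
  pos := vec
  pos_nonneg v := S.verts_nonneg _ v.2
  mem_label := by simp [mem_suppSet]
  linearIndepOn {s} hs := (S.indep _ hs).comp
    (fun v : (s : Set S.Vert) => ⟨vec v.1, Finset.mem_map_of_mem _ v.2⟩)
    fun _ _ h => Subtype.ext (vec.injective (Subtype.mk.inj h))
  exists_mem_relCone x hx := by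
    have hcover : x ∈ ⋃ F ∈ S.faces, coneOf F := S.covers ▸ hx
    obtain ⟨F, hF, hxF⟩ := Set.mem_iUnion₂.1 hcover
    rw [← map_vertsOf (S.faces_subset_verts F hF), ← coe_relCone_eq_coneOf] at hxF
    exact ⟨_, (map_vertsOf (S.faces_subset_verts F hF)).symm ▸ hF, hxF⟩
  relCone_inf_le hs ht := by
    rw [← SetLike.coe_subset_coe, Submodule.coe_inf]
    simp only [coe_relCone_eq_coneOf]
    rw [S.inter_cone _ hs _ ht, Finset.map_inter]

theorem face_vertsOf (hF : F ∈ S.faces) : S.toGeomFan.Face (S.vertsOf F) := by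
  change (S.vertsOf F).map _ ∈ S.faces
  rwa [map_vertsOf (S.faces_subset_verts F hF)]

theorem labels_vertsOf (hF : F ⊆ S.verts) : S.toGeomFan.labels (S.vertsOf F) = suppSet F := by
  ext i
  simp only [LabelledComplex.labels, toGeomFan, Finset.mem_biUnion, mem_vertsOf, mem_suppSet,
    Finset.mem_singleton, exists_eq_left]
  exact ⟨fun ⟨v, h⟩ => ⟨vec v, h⟩, fun ⟨v, hv, h⟩ => ⟨⟨v, hF hv⟩, hv, h⟩⟩

theorem card_le_card_suppSet (hF : F ∈ S.faces) : F.card ≤ (suppSet F).card := by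
  have hFv := S.faces_subset_verts F hF
  rw [← card_vertsOf hFv, ← labels_vertsOf hFv]
  exact GeomFan.card_le (face_vertsOf hF) subset_rfl

theorem localH_summand_eq {R : Type*} [CommRing R] (x : R) (hF : F ∈ S.faces) (hEF : E ⊆ F) :
    (-1) ^ (n - F.card) * x ^ (n - E.card - excess F) * (x - 1) ^ excess F =
      x ^ (F.card - E.card) * ((-x) ^ (n - (suppSet F).card) *
        (1 - x) ^ ((suppSet F).card - F.card)) := by
  have hn : (suppSet F).card ≤ n := by simpa using Finset.card_le_univ (suppSet F)
  obtain ⟨g, hg⟩ := Nat.exists_eq_add_of_le (Finset.card_le_card hEF)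
  obtain ⟨e, he⟩ := Nat.exists_eq_add_of_le (card_le_card_suppSet hF)
  obtain ⟨d, hd⟩ := Nat.exists_eq_add_of_le hn
  have hexcess : excess F = e := by rw [excess]; omega
  rw [hexcess, show n - F.card = e + d by omega, show n - E.card - e = g + d by omega,
    show F.card - E.card = g by omega, show n - (suppSet F).card = d by omega,
    show (suppSet F).card - F.card = e by omega, ← neg_sub x 1, neg_pow x, neg_pow (x - 1)]
  ring

theorem coe_localH (hE : E ⊆ S.verts) :
    (localH S E : PowerSeries ℤ) = S.toGeomFan.localHSeries (S.vertsOf E) := by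
  rw [localH, ← Polynomial.coeToPowerSeries.ringHom_apply, map_sum]
  refine Finset.sum_bij' (fun F _ => S.vertsOf F)
    (fun τ _ => τ.map vec) ?_ ?_ ?_ (fun τ _ => vertsOf_map τ) ?_
  · intro F hF
    obtain ⟨hF, hEF⟩ := Finset.mem_filter.1 hF
    exact Finset.mem_filter.2 ⟨Finset.mem_univ _, face_vertsOf hF, Finset.subtype_mono hEF⟩
  · intro τ hτ
    obtain ⟨hτ, hEτ⟩ := (Finset.mem_filter.1 hτ).2
    refine Finset.mem_filter.2 ⟨hτ, ?_⟩
    rw [← map_vertsOf hE]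
    exact Finset.map_subset_map.2 hEτ
  · intro F hF
    exact map_vertsOf (S.faces_subset_verts F (Finset.mem_filter.1 hF).1)
  · intro F hF
    obtain ⟨hF, hEF⟩ := Finset.mem_filter.1 hF
    have hFv := S.faces_subset_verts F hF
    rw [labels_vertsOf hFv, card_vertsOf hFv, card_vertsOf hE, Fintype.card_fin]
    simpa using localH_summand_eq (PowerSeries.X : PowerSeries ℤ) hF hEF

theorem coeff_localH_ne_zero (hface : F₁ ∪ F₂ ∪ B ∪ E ∈ S.faces) (hF₁ : Disjoint F₁ (F₂ ∪ E))
    (hF₁B : Disjoint F₁ B) (hint : IsInteriorFace (F₁ ∪ B ∪ E))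
    (hl : ∀ v ∈ F₁, suppSet {v} ⊆ suppSet (F₂ ∪ E))
    (hapex : ∀ v ∈ B, ∀ p, ∃ q, q ≠ p ∧ q ∉ suppSet (B.erase v ∪ (F₁ ∪ (F₂ ∪ E)))) :
    (localH S E).coeff (F₁.card + B.card) ≠ 0 := by
  have hverts := S.faces_subset_verts _ hface
  simp only [Finset.union_subset_iff] at hverts
  obtain ⟨⟨⟨hF₁v, hF₂v⟩, hBv⟩, hEv⟩ := hverts
  rw [← Polynomial.coeff_coe, coe_localH hEv, ← card_vertsOf hF₁v, ← card_vertsOf hBv]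
  refine GeomFan.coeff_localHSeries_ne_zero (F₂ := S.vertsOf F₂) ?_ ?_ (disjoint_vertsOf hF₁B)
    ?_ (fun v hv => ?_) fun v hv => ?_
  all_goals simp only [← vertsOf_union, ← vertsOf_erase]
  · exact face_vertsOf hface
  · exact disjoint_vertsOf hF₁
  · rwa [labels_vertsOf (Finset.union_subset (Finset.union_subset hF₁v hBv) hEv)]
  · rw [labels_vertsOf (Finset.union_subset hF₂v hEv)]
    exact hl _ (mem_vertsOf.1 hv)
  · rw [labels_vertsOf (Finset.union_subset ((Finset.erase_subset _ _).trans hBv)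
      (Finset.union_subset hF₁v (Finset.union_subset hF₂v hEv)))]
    exact hapex _ (mem_vertsOf.1 hv)

end SimplicialFan

/-- **Theorem 4.1.** Let `(V, 𝒮)` be a simplicial fan supported on `ℝⁿ_{≥0}`, let
`E ∈ 𝒮`, and let `F ∈ lk(E)` admit a full partition `F = F₁ ⊔ F₂ ⊔ 𝒜_F`. If the
coefficient of `t^{|F₁| + |𝒜_F|}` in `ℓ(𝒮, E; t)` is zero, then `F` is a
U-pyramid. -/
theorem coeff_localH_eq_zero_imp_isUPyramid {n : ℕ} (S : SimplicialFan n)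
    (E : Finset (Fin n → ℝ)) (hE : E ∈ S.faces)
    (F : Finset (Fin n → ℝ)) (hF : F ∈ link S E)
    (F₁ F₂ : Finset (Fin n → ℝ)) (hfull : IsFullPartition E F F₁ F₂)
    (hzero : (localH S E).coeff (F₁.card + (apices E F).card) = 0) :
    IsUPyramid E F := by
  obtain ⟨hFeq, hF₁F₂, hF₁A, -, hint, -⟩ := id hfull
  obtain ⟨-, hFE, hface⟩ := Finset.mem_filter.1 hF
  have hdisj : Disjoint F E := Finset.disjoint_iff_inter_eq_empty.2 hFE
  have hF₁F : F₁ ⊆ F := by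
    rw [hFeq, Finset.union_assoc]
    exact Finset.subset_union_left
  by_contra hU
  refine SimplicialFan.coeff_localH_ne_zero (F₂ := F₂) (hFeq ▸ hface)
    (Finset.disjoint_union_right.2 ⟨hF₁F₂, hdisj.mono_left hF₁F⟩) hF₁A hint
    (fun v hv => hfull.suppSet_singleton_subset hv) (fun v hv => ?_) hzero
  rw [hfull.erase_union_eq hdisj hv]
  exact exists_ne_notMem_suppSet_erase hU hv

end
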